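/- (Sliver Fourier estimate.) Let $f_1,\dots,f_n$ be real-valued functions that are real analytic and not identically zero near the origin of $\mathbb R^2$, let $\gamma_1,\dots,\gamma_n\in\mathbb R$, and let $E\subseteq\mathbb R^2$ be a set whose boundary near the origin lies in the zero set of a real analytic function that is not identically zero near the origin; assume that $\chi_E\prod_{i}|f_i|^{\gamma_i}$ is integrable on a neighborhood of the origin. Let $a>0$ and let $D=\{(x,y): 0<x<a,\ g_0(x)<y<G_0(x)\}$, where, for some positive integer $N$, $g_0(x^N)$ and $G_0(x^N)$ are real analytic on a neighborhood of $[0,a^{1/N}]$, $G_0(x)=Hx^M+$ higher order terms as $x\to0^+$ ($H>0$, $M\ge1$), and $g_0$ is either identically zero on $(0,a)$ or $g_0(x)=hx^m+$ higher order terms ($h>0$, $m>M$). Let $k(x)=cx+l(x)$ with $k(x^N)$ real analytic on a neighborhood of $[0,a^{1/N}]$ and with $l$ vanishing to order greater than $1$ at $0$, let $\eta(x,y)=(x,y+k(x))$, and let $S=\eta(D)$ be contained in $\{(x,y):|y|<b|x|\}$ for some $b>0$. Suppose that there is $\eta'<1$ such that for each $i$ there are $d_i\ne0$, a real $\alpha_i\ge0$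 and an integer $\beta_i\ge0$ with, on $D$, $$|f_i\circ\eta-d_ix^{\alpha_i}y^{\beta_i}|\le\eta'|d_i|x^{\alpha_i}y^{\beta_i},$$ $$|\partial_x(f_i\circ\eta)-d_i\alpha_ix^{\alpha_i-1}y^{\beta_i}|\le\eta'|d_i|x^{\alpha_i-1}y^{\beta_i},\qquad |\partial_y(f_i\circ\eta)-d_i\beta_ix^{\alpha_i}y^{\beta_i-1}|\le\eta'|d_i|x^{\alpha_i}y^{\beta_i-1},$$ and that $\chi_E\circ\eta$ is constant on $D$. Let $v$ be the unit vector in the direction $(1,c)$ and $v^\perp$ a unit vector orthogonal to it. Then there is $r_1>0$ such that for every $A$ there is a constant $C>0$ (so $r_1$ depends only on the $f_i$, $\gamma_i$, $E$ and the sliver data, and $C$ on these and $A$) with the following property. Let $\alpha:\mathbb R^2\to\mathbb R$ be $C^1$ away from the origin and supported in $\{x^2+y^2<r_1^2\}$, with $|\alpha|\le A$ everywhere and $|\nabla\alpha(x,y)|\le A(x^2+y^2)^{-1/2}$ for $(x,y)\neq(0,0)$. Then for all $(t,u)\in\mathbb R^2$ the integrand on the left below is integrable over $S$, and $$\Big|\int_S\alpha(x,y)\chi_E(x,y)\prod_{i=1}^n|f_i(x,y)|^{\gamma_i}e^{i(tx+uy)}\,dx\,dy\Big|\le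 C\int_S\big(1+|(t,u)\cdot v|\,|(x,y)|+|u|\,|(x,y)\cdot v^\perp|\big)^{-1/2}\chi_E(x,y)\prod_{i=1}^n|f_i(x,y)|^{\gamma_i}\,dx\,dy,$$ where the integral on the right, of a nonnegative function, is understood in $[0,\infty]$ (it is finite if $S$ lies in a neighborhood of the origin on which $\chi_E\prod_i|f_i|^{\gamma_i}$ is integrable). -/

import Mathlib

open MeasureTheory Set Filter
open scoped Topology ENNReal

noncomputable section

/-- The Euclidean magnitude `|(x,y)| = √(x²+y²)` of a point of `ℝ²`
(the norm of the type `ℝ × ℝ` is the sup norm). -/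
def nrm2 (p : ℝ × ℝ) : ℝ := Real.sqrt (p.1 ^ 2 + p.2 ^ 2)

/-- The open Euclidean disk `{(x,y) : x²+y² < r²}` centered at the origin. -/
def disk2 (r : ℝ) : Set (ℝ × ℝ) := {p : ℝ × ℝ | p.1 ^ 2 + p.2 ^ 2 < r ^ 2}

/-- Dot product on `ℝ²`. -/
def dot2 (p q : ℝ × ℝ) : ℝ := p.1 * q.1 + p.2 * q.2

/-- The perpendicular vector `v^⊥ = (v₂, −v₁)`. -/
def perp2 (v : ℝ × ℝ) : ℝ × ℝ := (v.2, -v.1)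

/-- The unit vector in the direction `(1, c)`. -/
def unitDir (c : ℝ) : ℝ × ℝ := (Real.sqrt (1 + c ^ 2))⁻¹ • ((1 : ℝ), c)

/-- The function `χ_E · ∏ᵢ |fᵢ|^(γᵢ)`. -/
def stdFun (n : ℕ) (f : Fin n → ℝ × ℝ → ℝ) (γ : Fin n → ℝ) (E : Set (ℝ × ℝ)) :
    ℝ × ℝ → ℝ :=
  E.indicator fun p => ∏ i, |f i p| ^ (γ i)

/-- Conditions on the factor `α`: it is `C¹` away from the origin, bounded by `A`, and the
Euclidean norm of its gradient is at most `A (x²+y²)^{-1/2}` away from the origin. -/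
def AlphaBound (α : ℝ × ℝ → ℝ) (A : ℝ) : Prop :=
  ContDiffOn ℝ 1 α {(0 : ℝ × ℝ)}ᶜ ∧ (∀ p, |α p| ≤ A) ∧
  ∀ p : ℝ × ℝ, p ≠ 0 →
    nrm2 (fderiv ℝ α p (1, 0), fderiv ℝ α p (0, 1)) ≤ A * (nrm2 p)⁻¹

/-- The integrand `h(x,y) e^{i(tx+uy)}`. -/
def oscIntegrand (h : ℝ × ℝ → ℝ) (t u : ℝ) (p : ℝ × ℝ) : ℂ :=
  (h p : ℂ) * Complex.exp (Complex.I * ((t : ℂ) * (p.1 : ℂ) + (u : ℂ) * (p.2 : ℂ)))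

/-- `x ↦ k(x^N)` is real analytic: on `[0,a]`, `k(x) = k'(x^{1/N})` for a function `k'` that is
real analytic on an open set containing `[0, a^{1/N}]`. -/
def PuiseuxOn (N : ℕ) (a : ℝ) (k : ℝ → ℝ) : Prop :=
  ∃ (k' : ℝ → ℝ) (I : Set ℝ), IsOpen I ∧ Icc (0 : ℝ) (a ^ ((N : ℝ)⁻¹)) ⊆ I ∧
    AnalyticOnNhd ℝ k' I ∧ ∀ x ∈ Icc (0 : ℝ) a, k x = k' (x ^ ((N : ℝ)⁻¹))

/-- `k(x) = l·x^s + higher order terms` as `x → 0⁺`. -/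
def LeadingTerm (k : ℝ → ℝ) (l s : ℝ) : Prop :=
  Tendsto (fun x => k x / x ^ s) (𝓝[>] (0 : ℝ)) (𝓝 l)

/-- The sliver `{(x,y) : 0 < x < a, g(x) < y < G(x)}`. -/
def sliverSet (a : ℝ) (g G : ℝ → ℝ) : Set (ℝ × ℝ) :=
  {q : ℝ × ℝ | 0 < q.1 ∧ q.1 < a ∧ g q.1 < q.2 ∧ q.2 < G q.1}

/-- The coordinate change `η(x,y) = (x, y + k(x))`. -/
def shear (k : ℝ → ℝ) (q : ℝ × ℝ) : ℝ × ℝ := (q.1, q.2 + k q.1)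

/-- On `D`, the function `F` is comparable to the monomial `d x^α y^β` with relative error
`ε`, including its first `x`- and `y`-derivatives. -/
def MonomialLike (F : ℝ × ℝ → ℝ) (D : Set (ℝ × ℝ)) (ε d α : ℝ) (β : ℕ) : Prop :=
  ∀ q ∈ D,
    |F q - d * q.1 ^ α * q.2 ^ (β : ℝ)| ≤ ε * |d| * q.1 ^ α * q.2 ^ (β : ℝ) ∧
    |deriv (fun x => F (x, q.2)) q.1 - d * α * q.1 ^ (α - 1) * q.2 ^ (β : ℝ)| ≤
      ε * |d| * q.1 ^ (α - 1) * q.2 ^ (β : ℝ) ∧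
    |deriv (fun y => F (q.1, y)) q.2 - d * (β : ℝ) * q.1 ^ α * q.2 ^ ((β : ℝ) - 1)| ≤
      ε * |d| * q.1 ^ α * q.2 ^ ((β : ℝ) - 1)

/-- The weight `(1 + |(t,u)·v| |(x,y)| + |u| |(x,y)·v^⊥|)^{-1/2}`. -/
def decayWeight (v : ℝ × ℝ) (t u : ℝ) (p : ℝ × ℝ) : ℝ :=
  (1 + |dot2 (t, u) v| * nrm2 p + |u| * |dot2 p (perp2 v)|) ^ (-(1 / 2 : ℝ))

end

/-!
In the coordinates of the shear, the phase is `(t + c u) x + u l(x) + u y` with `l = k - c x` of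
order `> 1`, and the amplitude and its first derivatives are controlled by a monomial
`x ^ e₁ y ^ e₂`. Cut the sliver into dyadic strips `X < x < 2 X`; on each of them `X |l'|` is at
most, and `X² |l''|` at least, a constant multiple of the same size `lam X`, so that on horizontal
segments the phase oscillates at the scale `ρ = 1 + |t + c u| X + |u| lam X`. Split a strip at
`|u| y ≈ ρ`: below the cut, van der Corput's lemma in `x` gains `ρ ^ (-1 / 2)`, and above it
integration by parts in `y` gains at least `(|u| y) ^ (-1 / 2)`. Both gains are bounded by the decay
weight, and the monomial amplitude is positive, so the estimates of the strips add up to the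
weighted integral.
-/

section VanDerCorput

variable {a b μ : ℝ} {J J₁ J₂ : ℝ → ℝ}

theorem integral_abs_eq_abs_integral_of_constant_sign {f : ℝ → ℝ} (hab : a ≤ b)
    (hf : (∀ x ∈ Icc a b, 0 ≤ f x) ∨ ∀ x ∈ Icc a b, f x ≤ 0) :
    ∫ x in a..b, |f x| = |∫ x in a..b, f x| := by
  rw [← uIcc_of_le hab] at hf
  rcases hf with hf | hf
  · rw [intervalIntegral.integral_congr fun x hx ↦ abs_of_nonneg (hf x hx),
      abs_of_nonneg (intervalIntegral.integral_nonneg hab (uIcc_of_le hab ▸ hf))]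
  · rw [intervalIntegral.integral_congr fun x hx ↦ abs_of_nonpos (hf x hx),
      intervalIntegral.integral_neg, abs_of_nonpos]
    rw [← neg_nonneg, ← intervalIntegral.integral_neg]
    exact intervalIntegral.integral_nonneg hab fun x hx ↦
      neg_nonneg.2 (hf x (uIcc_of_le hab ▸ hx))

theorem continuousOn_exp_ofReal_mul_I {s : Set ℝ} (hJ : ContinuousOn J s) :
    ContinuousOn (fun x ↦ Complex.exp (J x * Complex.I)) s :=
  ((Complex.continuous_ofReal.comp_continuousOn hJ).mul continuousOn_const).cexp

theorem intervalIntegrable_exp_ofReal_mul_I {x y : ℝ} (hJ : ContinuousOn J (Icc a b))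
    (hx : x ∈ Icc a b) (hy : y ∈ Icc a b) :
    IntervalIntegrable (fun z ↦ Complex.exp (J z * Complex.I)) volume x y :=
  ((continuousOn_exp_ofReal_mul_I hJ).mono (uIcc_subset_Icc hx hy)).intervalIntegrable

theorem norm_integral_exp_le_sub (hab : a ≤ b) (J : ℝ → ℝ) :
    ‖∫ x in a..b, Complex.exp (J x * Complex.I)‖ ≤ b - a := by
  simpa [abs_of_nonneg (sub_nonneg.2 hab)] using
    intervalIntegral.norm_integral_le_of_norm_le_const (C := 1) (a := a) (b := b)
      fun x _ ↦ (Complex.norm_exp_ofReal_mul_I (J x)).le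

theorem norm_integral_exp_neg (J : ℝ → ℝ) :
    ‖∫ x in a..b, Complex.exp ((-J x : ℝ) * Complex.I)‖ =
      ‖∫ x in a..b, Complex.exp (J x * Complex.I)‖ := by
  rw [← Complex.norm_conj (∫ x in a..b, Complex.exp (J x * Complex.I)),
    ← intervalIntegral.intervalIntegral_conj]
  simp [← Complex.exp_conj]

/-- Integrate `exp (iJ) = (iJ')⁻¹ (exp (iJ))'` by parts. -/
theorem norm_integral_exp_le_add_integral_abs (hab : a ≤ b)
    (hJ : ∀ x ∈ Icc a b, HasDerivAt J (J₁ x) x) (hJ₁ : ∀ x ∈ Icc a b, HasDerivAt J₁ (J₂ x) x)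
    (hJ₂ : ContinuousOn J₂ (Icc a b)) (hne : ∀ x ∈ Icc a b, J₁ x ≠ 0) :
    ‖∫ x in a..b, Complex.exp (J x * Complex.I)‖ ≤
      |J₁ b|⁻¹ + |J₁ a|⁻¹ + ∫ x in a..b, |-J₂ x / J₁ x ^ 2| := by
  have hJ₁c : ContinuousOn J₁ (Icc a b) := fun x hx ↦ (hJ₁ x hx).continuousAt.continuousWithinAt
  have hexpc := continuousOn_exp_ofReal_mul_I fun x hx ↦
    (hJ x hx).continuousAt.continuousWithinAt
  have hquot : ContinuousOn (fun x ↦ -J₂ x / J₁ x ^ 2) (Icc a b) :=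
    hJ₂.neg.div (hJ₁c.pow 2) fun x hx ↦ pow_ne_zero 2 (hne x hx)
  rw [← uIcc_of_le hab] at *
  have hparts := intervalIntegral.integral_mul_deriv_eq_deriv_mul
    (u := fun x ↦ (((J₁ x)⁻¹ : ℝ) : ℂ) * -Complex.I)
    (u' := fun x ↦ ((-J₂ x / J₁ x ^ 2 : ℝ) : ℂ) * -Complex.I)
    (fun x hx ↦ (((hJ₁ x hx).inv (hne x hx)).ofReal_comp).mul_const _)
    (fun x hx ↦ (((hJ x hx).ofReal_comp).mul_const Complex.I).cexp)
    ((Complex.continuous_ofReal.comp_continuousOn hquot).mul continuousOn_const).intervalIntegrable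
    (hexpc.mul ((Complex.continuous_ofReal.comp_continuousOn hJ₁c).mul
      continuousOn_const)).intervalIntegrable
  have hcancel : ∫ x in a..b, (((J₁ x)⁻¹ : ℝ) : ℂ) * -Complex.I *
      (Complex.exp (J x * Complex.I) * ((J₁ x : ℂ) * Complex.I)) =
      ∫ x in a..b, Complex.exp (J x * Complex.I) := by
    refine intervalIntegral.integral_congr fun x hx ↦ ?_
    have hmul : ((J₁ x : ℂ))⁻¹ * (J₁ x : ℂ) = 1 :=
      inv_mul_cancel₀ (Complex.ofReal_ne_zero.2 (hne x hx))
    push_cast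
    linear_combination (-(Complex.I ^ 2) * Complex.exp (J x * Complex.I)) * hmul -
      Complex.exp (J x * Complex.I) * Complex.I_sq
  have hnorm : ∀ r x : ℝ, ‖(r : ℂ) * -Complex.I * Complex.exp (J x * Complex.I)‖ = |r| := by
    simp [Complex.norm_exp_ofReal_mul_I]
  rw [← hcancel, hparts]
  refine (norm_sub_le _ _).trans (add_le_add ((norm_sub_le _ _).trans_eq ?_) ?_)
  · rw [hnorm, hnorm, abs_inv, abs_inv]
  · exact intervalIntegral.norm_integral_le_of_norm_le hab
      (Eventually.of_forall fun x _ ↦ (hnorm _ x).le) hquot.intervalIntegrable.abs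

theorem norm_integral_exp_le_of_le_abs_deriv (hab : a ≤ b)
    (hJ : ∀ x ∈ Icc a b, HasDerivAt J (J₁ x) x) (hJ₁ : ∀ x ∈ Icc a b, HasDerivAt J₁ (J₂ x) x)
    (hJ₂ : ContinuousOn J₂ (Icc a b)) (hμ : 0 < μ) (hle : ∀ x ∈ Icc a b, μ ≤ |J₁ x|)
    (hsign : (∀ x ∈ Icc a b, 0 ≤ J₂ x) ∨ ∀ x ∈ Icc a b, J₂ x ≤ 0) :
    ‖∫ x in a..b, Complex.exp (J x * Complex.I)‖ ≤ 4 / μ := by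
  have hne : ∀ x ∈ Icc a b, J₁ x ≠ 0 := fun x hx ↦ abs_pos.1 (hμ.trans_le (hle x hx))
  have hinv : ∀ x ∈ Icc a b, |J₁ x|⁻¹ ≤ μ⁻¹ := fun x hx ↦ inv_anti₀ hμ (hle x hx)
  have hquot : ContinuousOn (fun x ↦ -J₂ x / J₁ x ^ 2) (Icc a b) :=
    hJ₂.neg.div (ContinuousOn.pow
      (fun x hx ↦ (hJ₁ x hx).continuousAt.continuousWithinAt) 2) fun x hx ↦
        pow_ne_zero 2 (hne x hx)
  have hvar : ∫ x in a..b, |-J₂ x / J₁ x ^ 2| ≤ |J₁ b|⁻¹ + |J₁ a|⁻¹ := by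
    rw [integral_abs_eq_abs_integral_of_constant_sign hab, ← abs_inv, ← abs_inv,
      intervalIntegral.integral_eq_sub_of_hasDerivAt_of_le hab
        (fun x hx ↦ ((hJ₁ x hx).inv (hne x hx)).continuousAt.continuousWithinAt)
        (fun x hx ↦ (hJ₁ x (Ioo_subset_Icc_self hx)).inv (hne x (Ioo_subset_Icc_self hx)))
        (hquot.mono (uIcc_of_le hab).le).intervalIntegrable]
    · exact abs_sub _ _
    · exact hsign.symm.imp
        (fun h x hx ↦ div_nonneg (neg_nonneg.2 (h x hx)) (sq_nonneg _))
        (fun h x hx ↦ div_nonpos_of_nonpos_of_nonneg (neg_nonpos.2 (h x hx)) (sq_nonneg _))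
  have hparts := norm_integral_exp_le_add_integral_abs hab hJ hJ₁ hJ₂ hne
  have hinva := hinv a (left_mem_Icc.2 hab)
  have hinvb := hinv b (right_mem_Icc.2 hab)
  rw [div_eq_mul_inv]
  linarith

theorem exists_mul_abs_sub_le_abs_of_le_deriv (hab : a ≤ b)
    (hJ₁ : ∀ x ∈ Icc a b, HasDerivAt J₁ (J₂ x) x) (hle : ∀ x ∈ Icc a b, μ ≤ J₂ x) :
    ∃ c ∈ Icc a b, ∀ x ∈ Icc a b, μ * |x - c| ≤ |J₁ x| := by
  have hcont : ContinuousOn J₁ (Icc a b) := fun x hx ↦ (hJ₁ x hx).continuousAt.continuousWithinAt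
  have hgrow : ∀ x ∈ Icc a b, ∀ y ∈ Icc a b, x ≤ y → μ * (y - x) ≤ J₁ y - J₁ x :=
    (convex_Icc a b).mul_sub_le_image_sub_of_le_deriv hcont
      (fun x hx ↦ (hJ₁ x (interior_subset hx)).differentiableAt.differentiableWithinAt)
      fun x hx ↦ (hJ₁ x (interior_subset hx)).deriv ▸ hle x (interior_subset hx)
  have ha := left_mem_Icc.2 hab
  have hb := right_mem_Icc.2 hab
  rcases le_total 0 (J₁ a) with hpos | hneg
  · refine ⟨a, ha, fun x hx ↦ ?_⟩
    rw [abs_of_nonneg (sub_nonneg.2 hx.1)]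
    exact (by linarith [hgrow a ha x hx hx.1] : _ ≤ J₁ x).trans (le_abs_self _)
  rcases le_total (J₁ b) 0 with hneg' | hpos'
  · refine ⟨b, hb, fun x hx ↦ ?_⟩
    rw [abs_of_nonpos (sub_nonpos.2 hx.2)]
    exact (by linarith [hgrow x hx b hb hx.2] : _ ≤ -J₁ x).trans (neg_le_abs _)
  obtain ⟨c, hc, hzero⟩ := intermediate_value_Icc hab hcont ⟨hneg, hpos'⟩
  refine ⟨c, hc, fun x hx ↦ ?_⟩
  rcases le_total x c with hxc | hcx
  · rw [abs_of_nonpos (sub_nonpos.2 hxc)]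
    exact (by linarith [hgrow x hx c hc hxc] : _ ≤ -J₁ x).trans (neg_le_abs _)
  · rw [abs_of_nonneg (sub_nonneg.2 hcx)]
    exact (by linarith [hgrow c hc x hx hcx] : _ ≤ J₁ x).trans (le_abs_self _)

/-- With `c` the point where `|J'|` is least, the first derivative test applies at distance at least
`μ ^ (-1/2)` from `c`, where `|J'| ≥ μ ^ (1/2)`; the rest has length at most `2 μ ^ (-1/2)`. -/
theorem norm_integral_exp_le_of_le_second_deriv (hab : a ≤ b)
    (hJ : ∀ x ∈ Icc a b, HasDerivAt J (J₁ x) x) (hJ₁ : ∀ x ∈ Icc a b, HasDerivAt J₁ (J₂ x) x)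
    (hJ₂ : ContinuousOn J₂ (Icc a b)) (hμ : 0 < μ) (hle : ∀ x ∈ Icc a b, μ ≤ J₂ x) :
    ‖∫ x in a..b, Complex.exp (J x * Complex.I)‖ ≤ 10 / √μ := by
  obtain ⟨c, hc, hgrow⟩ := exists_mul_abs_sub_le_abs_of_le_deriv hab hJ₁ hle
  have hsqrt : 0 < √μ := Real.sqrt_pos.2 hμ
  have hδ : μ * (√μ)⁻¹ = √μ := by
    rw [← div_eq_mul_inv, div_eq_iff hsqrt.ne', Real.mul_self_sqrt hμ.le]
  set δ := (√μ)⁻¹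
  have hδ₀ : 0 < δ := inv_pos.2 hsqrt
  have hint := fun x hx y hy ↦ intervalIntegrable_exp_ofReal_mul_I
    (fun z hz ↦ (hJ z hz).continuousAt.continuousWithinAt) (x := x) (y := y) hx hy
  have hfar : ∀ x y, a ≤ x → x ≤ y → y ≤ b → (∀ z ∈ Icc x y, x < y → δ ≤ |z - c|) →
      ‖∫ x in x..y, Complex.exp (J x * Complex.I)‖ ≤ 4 * δ := by
    intro x y hax hxy hyb hdist
    have hsub : Icc x y ⊆ Icc a b := Icc_subset_Icc hax hyb
    rcases hxy.eq_or_lt with rfl | hlt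
    · simpa using hδ₀.le
    refine norm_integral_exp_le_of_le_abs_deriv hxy (fun z hz ↦ hJ z (hsub hz))
      (fun z hz ↦ hJ₁ z (hsub hz)) (hJ₂.mono hsub) hsqrt (fun z hz ↦ ?_)
      (Or.inl fun z hz ↦ hμ.le.trans (hle z (hsub hz)))
    exact hδ.ge.trans ((mul_le_mul_of_nonneg_left (hdist z hz hlt) hμ.le).trans (hgrow z (hsub hz)))
  have hp : max a (c - δ) ∈ Icc a b := ⟨le_max_left _ _, max_le hab (by linarith [hc.2])⟩
  have hq : min b (c + δ) ∈ Icc a b := ⟨le_min hab (by linarith [hc.1]), min_le_left _ _⟩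
  have hpq : max a (c - δ) ≤ min b (c + δ) :=
    max_le hq.1 (le_min (by linarith [hc.2]) (by linarith))
  have hleft := hfar a _ le_rfl hp.1 hp.2 fun z hz hlt ↦ by
    rw [max_eq_right ((lt_max_iff.1 hlt).resolve_left (lt_irrefl a)).le] at hz
    exact (by linarith [hz.2] : δ ≤ -(z - c)).trans (neg_le_abs _)
  have hright := hfar _ b hq.1 hq.2 le_rfl fun z hz hlt ↦ by
    rw [min_eq_right ((min_lt_iff.1 hlt).resolve_left (lt_irrefl b)).le] at hz
    exact (by linarith [hz.1] : δ ≤ z - c).trans (le_abs_self _)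
  have hnear := norm_integral_exp_le_sub hpq J
  have hlen : min b (c + δ) - max a (c - δ) ≤ 2 * δ := by
    linarith [le_max_right a (c - δ), min_le_right b (c + δ)]
  rw [← intervalIntegral.integral_add_adjacent_intervals
    (hint a ⟨le_rfl, hab⟩ _ hp) (hint _ hp b ⟨hab, le_rfl⟩),
    ← intervalIntegral.integral_add_adjacent_intervals (hint _ hp _ hq)
      (hint _ hq b ⟨hab, le_rfl⟩)]
  refine (norm_add_le _ _).trans ((add_le_add le_rfl (norm_add_le _ _)).trans ?_)
  rw [div_eq_mul_inv]
  linarith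

theorem norm_integral_exp_le_of_le_abs_second_deriv (hab : a ≤ b)
    (hJ : ∀ x ∈ Icc a b, HasDerivAt J (J₁ x) x) (hJ₁ : ∀ x ∈ Icc a b, HasDerivAt J₁ (J₂ x) x)
    (hJ₂ : ContinuousOn J₂ (Icc a b)) (hμ : 0 < μ)
    (hle : (∀ x ∈ Icc a b, μ ≤ J₂ x) ∨ ∀ x ∈ Icc a b, μ ≤ -J₂ x) :
    ‖∫ x in a..b, Complex.exp (J x * Complex.I)‖ ≤ 10 / √μ := by
  rcases hle with hle | hle
  · exact norm_integral_exp_le_of_le_second_deriv hab hJ hJ₁ hJ₂ hμ hle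
  · rw [← norm_integral_exp_neg]
    exact norm_integral_exp_le_of_le_second_deriv hab (fun x hx ↦ (hJ x hx).neg)
      (fun x hx ↦ (hJ₁ x hx).neg) hJ₂.neg hμ hle

theorem norm_integral_exp_linear_add_mul_le {T : ℝ} (hab : a ≤ b)
    (hJ : ∀ x ∈ Icc a b, HasDerivAt J (J₁ x) x) (hJ₁ : ∀ x ∈ Icc a b, HasDerivAt J₁ (J₂ x) x)
    (hJ₂ : ContinuousOn J₂ (Icc a b)) (hle : ∀ x ∈ Icc a b, |J₁ x| ≤ |T| / 2)
    (hsign : (∀ x ∈ Icc a b, 0 ≤ J₂ x) ∨ ∀ x ∈ Icc a b, J₂ x ≤ 0) :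
    ‖∫ x in a..b, Complex.exp ((T * x + J x : ℝ) * Complex.I)‖ * |T| ≤ 8 := by
  rcases eq_or_ne T 0 with rfl | hT
  · simp
  have hbound := norm_integral_exp_le_of_le_abs_deriv hab
    (fun x hx ↦ (hasDerivAt_const_mul T).add (hJ x hx)) (fun x hx ↦ (hJ₁ x hx).const_add T)
    hJ₂ (half_pos (abs_pos.2 hT))
    (fun x hx ↦ by
      have := abs_sub_abs_le_abs_sub T (-J₁ x)
      rw [abs_neg, sub_neg_eq_add] at this
      linarith [hle x hx]) hsign
  rw [← le_div_iff₀ (abs_pos.2 hT)]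
  exact hbound.trans_eq (by field_simp; norm_num)

theorem sq_norm_integral_exp_mul_le (hab : a ≤ b)
    (hJ : ∀ x ∈ Icc a b, HasDerivAt J (J₁ x) x) (hJ₁ : ∀ x ∈ Icc a b, HasDerivAt J₁ (J₂ x) x)
    (hJ₂ : ContinuousOn J₂ (Icc a b)) (hμ : 0 ≤ μ)
    (hle : (∀ x ∈ Icc a b, μ ≤ J₂ x) ∨ ∀ x ∈ Icc a b, μ ≤ -J₂ x) :
    ‖∫ x in a..b, Complex.exp (J x * Complex.I)‖ ^ 2 * μ ≤ 100 := by
  rcases hμ.eq_or_lt with rfl | hμ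
  · norm_num
  have hsecond := pow_le_pow_left₀ (norm_nonneg _)
    (norm_integral_exp_le_of_le_abs_second_deriv hab hJ hJ₁ hJ₂ hμ hle) 2
  rw [div_pow, Real.sq_sqrt hμ.le, le_div_iff₀ hμ] at hsecond
  exact hsecond.trans_eq (by norm_num)

/-- When `2 C₁ Λ ≤ |T| X` the derivative of the phase is at least `|T| / 2` and the first derivative
test applies; otherwise `Λ` dominates `|T| X` and the second derivative test applies. -/
theorem exists_norm_integral_exp_linear_add_le {C₁ c₂ : ℝ} (hC₁ : 0 < C₁) (hc₂ : 0 < c₂) :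
    ∃ C > 0, ∀ (a b X Λ T : ℝ) (J J₁ J₂ : ℝ → ℝ), a ≤ b → b - a ≤ X → 0 < X → 0 ≤ Λ →
      (∀ x ∈ Icc a b, HasDerivAt J (J₁ x) x) → (∀ x ∈ Icc a b, HasDerivAt J₁ (J₂ x) x) →
      ContinuousOn J₂ (Icc a b) → (∀ x ∈ Icc a b, |J₁ x| * X ≤ C₁ * Λ) →
      ((∀ x ∈ Icc a b, c₂ * Λ ≤ J₂ x * X ^ 2) ∨ ∀ x ∈ Icc a b, c₂ * Λ ≤ -J₂ x * X ^ 2) →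
      ‖∫ x in a..b, Complex.exp ((T * x + J x : ℝ) * Complex.I)‖ ≤
        C * X / √(1 + |T| * X + Λ) := by
  refine ⟨√(1 + 8 * (1 + 1 / (2 * C₁)) + 100 / c₂ * (2 * C₁ + 1)), by positivity, ?_⟩
  intro a b X Λ T J J₁ J₂ hab hlen hX hΛ hJ hJ₁ hJ₂ hupper hlower
  set I := ‖∫ x in a..b, Complex.exp ((T * x + J x : ℝ) * Complex.I)‖
  have hI₀ : 0 ≤ I := norm_nonneg _
  have hIX : I ≤ X := (norm_integral_exp_le_sub hab _).trans hlen
  have hI₂ : I ^ 2 ≤ X ^ 2 := by gcongr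
  have hX₂ : 0 < X ^ 2 := by positivity
  suffices h : I ^ 2 * (|T| * X + Λ) ≤
      (8 * (1 + 1 / (2 * C₁)) + 100 / c₂ * (2 * C₁ + 1)) * X ^ 2 by
    rw [le_div_iff₀ (by positivity), ← Real.sqrt_sq hI₀, ← Real.sqrt_mul (sq_nonneg I),
      ← Real.sqrt_sq hX.le, ← Real.sqrt_mul (by positivity), Real.sqrt_sq hX.le]
    exact Real.sqrt_le_sqrt (by linarith)
  have hcurv₀ : 0 ≤ c₂ * Λ / X ^ 2 := by positivity
  have hcurv : (∀ x ∈ Icc a b, c₂ * Λ / X ^ 2 ≤ J₂ x) ∨ ∀ x ∈ Icc a b, c₂ * Λ / X ^ 2 ≤ -J₂ x :=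
    hlower.imp (fun h x hx ↦ (div_le_iff₀ hX₂).2 (h x hx))
      fun h x hx ↦ (div_le_iff₀ hX₂).2 (h x hx)
  rcases le_or_gt (2 * C₁ * Λ) (|T| * X) with hlin | hcur
  · have hIT : I * |T| ≤ 8 := norm_integral_exp_linear_add_mul_le hab hJ hJ₁ hJ₂
      (fun x hx ↦ le_of_mul_le_mul_right (by linarith [hupper x hx]) hX)
      (hcurv.imp (fun h x hx ↦ hcurv₀.trans (h x hx)) fun h x hx ↦ by linarith [h x hx])
    have hΛT : Λ ≤ 1 / (2 * C₁) * (|T| * X) := by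
      rwa [div_mul_eq_mul_div, one_mul, le_div_iff₀ (by positivity), mul_comm]
    calc I ^ 2 * (|T| * X + Λ) ≤ I ^ 2 * (|T| * X + 1 / (2 * C₁) * (|T| * X)) := by gcongr
      _ = (1 + 1 / (2 * C₁)) * (I * (I * |T|) * X) := by ring
      _ ≤ (1 + 1 / (2 * C₁)) * (X * 8 * X) := by gcongr
      _ ≤ _ := by linarith [show 0 ≤ 100 / c₂ * (2 * C₁ + 1) * X ^ 2 by positivity]
  · have hIΛ : I ^ 2 * (c₂ * Λ / X ^ 2) ≤ 100 := sq_norm_integral_exp_mul_le hab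
      (fun x hx ↦ (hasDerivAt_const_mul T).add (hJ x hx)) (fun x hx ↦ (hJ₁ x hx).const_add T)
      hJ₂ hcurv₀ hcurv
    calc I ^ 2 * (|T| * X + Λ) ≤ I ^ 2 * (2 * C₁ * Λ + Λ) := by gcongr
      _ = (2 * C₁ + 1) / c₂ * X ^ 2 * (I ^ 2 * (c₂ * Λ / X ^ 2)) := by field_simp
      _ ≤ (2 * C₁ + 1) / c₂ * X ^ 2 * 100 := by gcongr
      _ = 100 / c₂ * (2 * C₁ + 1) * X ^ 2 := by ring
      _ ≤ _ := by linarith [show 0 ≤ 8 * (1 + 1 / (2 * C₁)) * X ^ 2 by positivity]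

end VanDerCorput

section IntegrationByParts

variable {p q Θ B : ℝ} {ψ ψ' β : ℝ → ℝ} {θ : ℝ → ℂ}

theorem hasDerivAt_integral_of_continuousOn_Ioo {x₁ x : ℝ} (hθ : ContinuousOn θ (Ioo p q))
    (h₁ : x₁ ∈ Ioo p q) (hx : x ∈ Ioo p q) :
    HasDerivAt (fun y ↦ ∫ z in x₁..y, θ z) (θ x) x :=
  intervalIntegral.integral_hasDerivAt_right
    (hθ.mono (ordConnected_Ioo.uIcc_subset h₁ hx)).intervalIntegrable
    (hθ.stronglyMeasurableAtFilter isOpen_Ioo x hx) (hθ.continuousAt (isOpen_Ioo.mem_nhds hx))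

theorem norm_intervalIntegral_mul_le_of_primitive
    (hψ : ∀ x ∈ Ioo p q, HasDerivAt ψ (ψ' x) x) (hψ' : ContinuousOn ψ' (Ioo p q))
    (hθ : ContinuousOn θ (Ioo p q))
    (hΘ : ∀ x₁ x₂, p < x₁ → x₁ ≤ x₂ → x₂ < q → ‖∫ x in x₁..x₂, θ x‖ ≤ Θ)
    (hB : ∀ x ∈ Ioo p q, |ψ x| ≤ B) (hβ : ∀ x ∈ Ioo p q, |ψ' x| ≤ β x)
    (hβi : IntegrableOn β (Ioo p q)) {x₁ x₂ : ℝ} (h₁ : p < x₁) (h₁₂ : x₁ ≤ x₂) (h₂ : x₂ < q) :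
    ‖∫ x in x₁..x₂, (ψ x : ℂ) * θ x‖ ≤ Θ * (B + ∫ x in Ioo p q, β x) := by
  have hsub : Icc x₁ x₂ ⊆ Ioo p q := Icc_subset_Ioo h₁ h₂
  have huIcc : uIcc x₁ x₂ ⊆ Ioo p q := (uIcc_of_le h₁₂).trans_subset hsub
  have hΘ₀ : 0 ≤ Θ := (norm_nonneg _).trans (hΘ x₁ x₂ h₁ h₁₂ h₂)
  rw [intervalIntegral.integral_mul_deriv_eq_deriv_mul
    (fun x hx ↦ (hψ x (huIcc hx)).ofReal_comp)
    (fun x hx ↦ hasDerivAt_integral_of_continuousOn_Ioo hθ (hsub ⟨le_rfl, h₁₂⟩) (huIcc hx))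
    ((Complex.continuous_ofReal.comp_continuousOn hψ').mono huIcc).intervalIntegrable
    (hθ.mono huIcc).intervalIntegrable, intervalIntegral.integral_same, mul_zero, sub_zero]
  have boundary : ‖(ψ x₂ : ℂ) * ∫ z in x₁..x₂, θ z‖ ≤ Θ * B := by
    rw [norm_mul, Complex.norm_real, Real.norm_eq_abs, mul_comm]
    exact mul_le_mul (hΘ x₁ x₂ h₁ h₁₂ h₂) (hB _ (hsub ⟨h₁₂, le_rfl⟩)) (abs_nonneg _) hΘ₀
  have interior : ‖∫ x in x₁..x₂, (ψ' x : ℂ) * ∫ z in x₁..x, θ z‖ ≤ ∫ x in x₁..x₂, Θ * β x := by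
    refine intervalIntegral.norm_integral_le_of_norm_le h₁₂ (.of_forall fun x hx ↦ ?_)
      (((intervalIntegrable_iff_integrableOn_Icc_of_le h₁₂).2 (hβi.mono_set hsub)).const_mul Θ)
    have hx' : x ∈ Icc x₁ x₂ := Ioc_subset_Icc_self hx
    rw [norm_mul, Complex.norm_real, Real.norm_eq_abs, mul_comm]
    exact mul_le_mul (hΘ x₁ x h₁ hx'.1 (hsub hx').2) (hβ x (hsub hx')) (abs_nonneg _) hΘ₀
  have enlarge : ∫ x in x₁..x₂, β x ≤ ∫ x in Ioo p q, β x := by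
    rw [intervalIntegral.integral_of_le h₁₂]
    exact setIntegral_mono_set hβi
      (ae_restrict_of_forall_mem measurableSet_Ioo fun x hx ↦ (abs_nonneg _).trans (hβ x hx))
      (Ioc_subset_Icc_self.trans hsub).eventuallyLE
  rw [intervalIntegral.integral_const_mul] at interior
  rw [mul_add]
  exact (norm_sub_le _ _).trans
    (add_le_add boundary (interior.trans (mul_le_mul_of_nonneg_left enlarge hΘ₀)))

theorem norm_setIntegral_Ioo_le_of_forall_intervalIntegral {F : ℝ → ℂ} {C : ℝ} (hC : 0 ≤ C)
    (hF : ∀ x₁ x₂, p < x₁ → x₁ ≤ x₂ → x₂ < q → ‖∫ x in x₁..x₂, F x‖ ≤ C) :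
    ‖∫ x in Ioo p q, F x‖ ≤ C := by
  rcases le_or_gt q p with hpq | hpq
  · simpa [Ioo_eq_empty (not_lt.2 hpq)] using hC
  by_cases hi : IntegrableOn F (Ioo p q)
  swap
  · rwa [integral_undef hi, norm_zero]
  obtain ⟨a, a_anti, a_mem, a_lim⟩ := exists_seq_strictAnti_tendsto' hpq
  obtain ⟨b, -, b_mem, b_lim⟩ := exists_seq_strictMono_tendsto' (a_mem 0).2
  have hab (n : ℕ) : a n ≤ b n := (a_anti.antitone n.zero_le).trans (b_mem n).1.le
  refine le_of_tendsto ((aecover_Ioo_of_Icc (μ := volume) a_lim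
    b_lim).integral_tendsto_of_countably_generated hi).norm (.of_forall fun n ↦ ?_)
  have hsub : Icc (a n) (b n) ⊆ Ioo p q :=
    Icc_subset_Ioo (a_mem n).1 (b_mem n).2
  rw [Measure.restrict_restrict measurableSet_Icc, inter_eq_left.2 hsub,
    integral_Icc_eq_integral_Ioc, ← intervalIntegral.integral_of_le (hab n)]
  exact hF _ _ (a_mem n).1 (hab n) (b_mem n).2

theorem norm_setIntegral_mul_le_of_primitive
    (hψ : ∀ x ∈ Ioo p q, HasDerivAt ψ (ψ' x) x) (hψ' : ContinuousOn ψ' (Ioo p q))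
    (hθ : ContinuousOn θ (Ioo p q)) (hΘ₀ : 0 ≤ Θ) (hB₀ : 0 ≤ B)
    (hΘ : ∀ x₁ x₂, p < x₁ → x₁ ≤ x₂ → x₂ < q → ‖∫ x in x₁..x₂, θ x‖ ≤ Θ)
    (hB : ∀ x ∈ Ioo p q, |ψ x| ≤ B) (hβ : ∀ x ∈ Ioo p q, |ψ' x| ≤ β x)
    (hβi : IntegrableOn β (Ioo p q)) :
    ‖∫ x in Ioo p q, (ψ x : ℂ) * θ x‖ ≤ Θ * (B + ∫ x in Ioo p q, β x) := by
  have hβ₀ : 0 ≤ ∫ x in Ioo p q, β x :=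
    setIntegral_nonneg measurableSet_Ioo fun x hx ↦ (abs_nonneg _).trans (hβ x hx)
  exact norm_setIntegral_Ioo_le_of_forall_intervalIntegral (by positivity) fun _ _ ↦
    norm_intervalIntegral_mul_le_of_primitive hψ hψ' hθ hΘ hB hβ hβi

theorem norm_integral_exp_const_mul_le {u : ℝ} (hu : u ≠ 0) (a b : ℝ) :
    ‖∫ y in a..b, Complex.exp ((u * y : ℝ) * Complex.I)‖ ≤ 2 / |u| := by
  have h (y : ℝ) : Complex.exp ((u * y : ℝ) * Complex.I) = Complex.exp ((u * Complex.I) * y) := by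
    congr 1; push_cast; ring
  have hc : (u * Complex.I : ℂ) ≠ 0 := mul_ne_zero (mod_cast hu) Complex.I_ne_zero
  simp_rw [h]
  rw [integral_exp_mul_complex hc, norm_div, norm_mul, Complex.norm_I, mul_one, Complex.norm_real,
    Real.norm_eq_abs, ← h, ← h]
  gcongr
  refine (norm_sub_le _ _).trans ?_
  rw [Complex.norm_exp_ofReal_mul_I, Complex.norm_exp_ofReal_mul_I]
  norm_num

end IntegrationByParts

section PowerIntegrals

theorem rpow_le_rpow_abs_mul {κ y z : ℝ} (b : ℝ) (hκ : 1 ≤ κ) (hz : 0 < z) (h₁ : z / κ ≤ y)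
    (h₂ : y ≤ κ * z) : y ^ b ≤ κ ^ |b| * z ^ b := by
  have hκ₀ : 0 < κ := by linarith
  have hy : 0 < y := lt_of_lt_of_le (by positivity) h₁
  have hyz : y ^ b = (y / z) ^ b * z ^ b := by
    rw [← Real.mul_rpow (by positivity) hz.le, div_mul_cancel₀ _ hz.ne']
  rw [hyz]
  gcongr
  have le_κ : y / z ≤ κ := (div_le_iff₀ hz).2 h₂
  have inv_κ_le : κ⁻¹ ≤ y / z := by rwa [le_div_iff₀ hz, inv_mul_eq_div]
  rcases le_total 0 b with hb | hb
  · rw [abs_of_nonneg hb]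
    exact Real.rpow_le_rpow (by positivity) le_κ hb
  · rw [abs_of_nonpos hb, Real.rpow_neg hκ₀.le, ← Real.inv_rpow hκ₀.le]
    exact Real.rpow_le_rpow_of_nonpos (by positivity) inv_κ_le hb

theorem rpow_le_rpow_add_rpow {p q y : ℝ} (b : ℝ) (hp : 0 < p) (hpy : p ≤ y) (hyq : y ≤ q) :
    y ^ b ≤ p ^ b + q ^ b := by
  have hy : 0 < y := hp.trans_le hpy
  rcases le_total 0 b with hb | hb
  · linarith [Real.rpow_le_rpow hy.le hyq hb, Real.rpow_nonneg hp.le b]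
  · linarith [Real.rpow_le_rpow_of_nonpos hp hpy hb, Real.rpow_nonneg (hy.le.trans hyq) b]

theorem setLIntegral_rpow_le_of_comparable {κ z : ℝ} (b : ℝ) (hκ : 1 ≤ κ) (hz : 0 < z)
    {s s' : Set ℝ} (hs : MeasurableSet s) (hs' : MeasurableSet s')
    (hsz : s ⊆ Icc (z / κ) (κ * z)) (hsz' : s' ⊆ Icc (z / κ) (κ * z))
    (hvol : volume s ≤ ENNReal.ofReal κ * volume s') :
    ∫⁻ y in s, ENNReal.ofReal (y ^ b) ≤
      ENNReal.ofReal (κ ^ |b| * κ ^ |b| * κ) * ∫⁻ y in s', ENNReal.ofReal (y ^ b) := by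
  have hκ₀ : 0 < κ := by linarith
  have upper : ∫⁻ y in s, ENNReal.ofReal (y ^ b) ≤
      ENNReal.ofReal (κ ^ |b| * z ^ b) * volume s := by
    rw [← setLIntegral_const]
    exact setLIntegral_mono' hs fun y hy ↦ ENNReal.ofReal_le_ofReal
      (rpow_le_rpow_abs_mul b hκ hz (hsz hy).1 (hsz hy).2)
  have lower : ENNReal.ofReal (z ^ b) * volume s' ≤
      ENNReal.ofReal (κ ^ |b|) * ∫⁻ y in s', ENNReal.ofReal (y ^ b) := by
    rw [← setLIntegral_const, ← lintegral_const_mul' _ _ ENNReal.ofReal_ne_top]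
    refine setLIntegral_mono' hs' fun y hy ↦ ?_
    obtain ⟨hzy, hyz⟩ := hsz' hy
    rw [← ENNReal.ofReal_mul (by positivity)]
    refine ENNReal.ofReal_le_ofReal (rpow_le_rpow_abs_mul b hκ (lt_of_lt_of_le (by positivity) hzy)
      ((div_le_iff₀ hκ₀).2 ?_) ?_)
    · linarith
    · linarith [(div_le_iff₀ hκ₀).1 hzy]
  calc ∫⁻ y in s, ENNReal.ofReal (y ^ b)
      ≤ ENNReal.ofReal (κ ^ |b| * z ^ b) * (ENNReal.ofReal κ * volume s') :=
        upper.trans (mul_le_mul_right hvol _)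
    _ = ENNReal.ofReal (κ ^ |b| * κ) * (ENNReal.ofReal (z ^ b) * volume s') := by
        rw [ENNReal.ofReal_mul (by positivity), ENNReal.ofReal_mul (by positivity)]
        ring
    _ ≤ ENNReal.ofReal (κ ^ |b| * κ) *
        (ENNReal.ofReal (κ ^ |b|) * ∫⁻ y in s', ENNReal.ofReal (y ^ b)) :=
        mul_le_mul_right lower _
    _ = _ := by
        rw [← mul_assoc, ← ENNReal.ofReal_mul (by positivity)]
        congr 2
        ring

variable {κ : ℝ}

theorem setLIntegral_rpow_Ioc_div_le (b : ℝ) (hκ : 1 ≤ κ) {q : ℝ} (hq : 0 ≤ q) :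
    ∫⁻ y in Ioc (q / κ) q, ENNReal.ofReal (y ^ b) ≤
      ENNReal.ofReal (κ ^ |b| * κ ^ |b| * κ) * ∫⁻ y in Ioo q (κ * q), ENNReal.ofReal (y ^ b) := by
  rcases hq.eq_or_lt with rfl | hq₀
  · simp
  refine setLIntegral_rpow_le_of_comparable b hκ hq₀ measurableSet_Ioc measurableSet_Ioo
    (fun y hy ↦ ⟨hy.1.le, hy.2.trans (le_mul_of_one_le_left hq hκ)⟩)
    (fun y hy ↦ ⟨(div_le_self hq hκ).trans hy.1.le, hy.2.le⟩) ?_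
  rw [Real.volume_Ioc, Real.volume_Ioo, ← ENNReal.ofReal_mul (by linarith)]
  refine ENNReal.ofReal_le_ofReal ?_
  have h₀ : 0 ≤ κ * q - q := by nlinarith
  calc q - q / κ = (κ * q - q) / κ := by field_simp
    _ ≤ κ * q - q := div_le_self h₀ hκ
    _ ≤ κ * (κ * q - q) := le_mul_of_one_le_left h₀ hκ

theorem setLIntegral_rpow_Ico_mul_le (b : ℝ) (hκ : 1 ≤ κ) {q : ℝ} (hq : 0 < q) :
    ∫⁻ y in Ico q (κ * q), ENNReal.ofReal (y ^ b) ≤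
      ENNReal.ofReal (κ ^ |b| * κ ^ |b| * κ) * ∫⁻ y in Ioo (q / κ) q, ENNReal.ofReal (y ^ b) := by
  refine setLIntegral_rpow_le_of_comparable b hκ hq measurableSet_Ico measurableSet_Ioo
    (fun y hy ↦ ⟨(div_le_self hq.le hκ).trans hy.1, hy.2.le⟩)
    (fun y hy ↦ ⟨hy.1.le, hy.2.le.trans (le_mul_of_one_le_left hq.le hκ)⟩) ?_
  rw [Real.volume_Ico, Real.volume_Ioo, ← ENNReal.ofReal_mul (by linarith)]
  refine ENNReal.ofReal_le_ofReal (le_of_eq ?_)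
  field_simp

theorem exists_setLIntegral_rpow_Ioo_le (b : ℝ) (hκ : 1 ≤ κ) :
    ∃ K > 0, ∀ q Q q' Q' : ℝ, 0 ≤ q' → κ * q' < Q' → q' / κ ≤ q → Q ≤ κ * Q' →
      ∫⁻ y in Ioo q Q, ENNReal.ofReal (y ^ b) ≤
        ENNReal.ofReal K * ∫⁻ y in Ioo q' Q', ENNReal.ofReal (y ^ b) := by
  have hκ₀ : 0 < κ := by linarith
  refine ⟨κ ^ |b| * κ ^ |b| * κ + 1 + κ ^ |b| * κ ^ |b| * κ, by positivity, ?_⟩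
  intro q Q q' Q' hq' hqQ hq hQ
  have hQ' : 0 < Q' := lt_of_le_of_lt (by positivity) hqQ
  have cover : Ioo q Q ⊆ (Ioc (q' / κ) q' ∪ Ioo q' Q') ∪ Ico Q' (κ * Q') := by
    intro y hy
    rcases le_or_gt y q' with hyq | hyq
    · exact Or.inl (Or.inl ⟨hq.trans_lt hy.1, hyq⟩)
    · exact (lt_or_ge y Q').imp (fun hyQ ↦ Or.inr ⟨hyq, hyQ⟩) fun hyQ ↦ ⟨hyQ, hy.2.trans_le hQ⟩
  refine (lintegral_mono_set cover).trans ((lintegral_union_le _ _ _).trans ?_)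
  refine (add_le_add_left (lintegral_union_le _ _ _) _).trans ?_
  rw [ENNReal.ofReal_add (by positivity) (by positivity),
    ENNReal.ofReal_add (by positivity) (by positivity), add_mul, add_mul, ENNReal.ofReal_one,
    one_mul]
  refine add_le_add_three ?_ le_rfl ?_
  · exact (setLIntegral_rpow_Ioc_div_le b hκ hq').trans
      (mul_le_mul_right (lintegral_mono_set (Ioo_subset_Ioo_right hqQ.le)) _)
  · have : q' ≤ Q' / κ := by rw [le_div_iff₀ hκ₀]; linarith
    exact (setLIntegral_rpow_Ico_mul_le b hκ hQ').trans
      (mul_le_mul_right (lintegral_mono_set (Ioo_subset_Ioo_left this)) _)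

theorem integrableOn_rpow_Ioo (b : ℝ) {p : ℝ} (hp : 0 < p) (q : ℝ) :
    IntegrableOn (fun y : ℝ ↦ y ^ b) (Ioo p q) :=
  (continuousOn_id.rpow_const fun _ hy ↦
    Or.inl (hp.trans_le hy.1).ne').integrableOn_Icc.mono_set Ioo_subset_Icc_self

theorem sub_mul_rpow_le_integral (b : ℝ) {p q : ℝ} (hp : 0 < p) (hq : q ≤ 2 * p) (hpq : p ≤ q)
    {z : ℝ} (hz : z ∈ Icc p q) :
    (q - p) * z ^ b ≤ 2 ^ |b| * ∫ y in Ioo p q, y ^ b := by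
  calc (q - p) * z ^ b = ∫ _ in Ioo p q, z ^ b := by
        rw [setIntegral_const, Real.volume_real_Ioo_of_le hpq, smul_eq_mul]
    _ ≤ ∫ y in Ioo p q, 2 ^ |b| * y ^ b := by
        refine setIntegral_mono_on (integrableOn_const (by simp))
          ((integrableOn_rpow_Ioo b hp q).const_mul _) measurableSet_Ioo fun y hy ↦ ?_
        refine rpow_le_rpow_abs_mul _ one_le_two (hp.trans hy.1) ?_ ?_ <;>
          linarith [hy.1, hy.2, hz.1, hz.2]
    _ = _ := integral_const_mul _ _

theorem rpow_add_rpow_le_integral (b : ℝ) {p q : ℝ} (hp : 0 < p) (hpq : 2 * p ≤ q) :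
    p ^ b + q ^ b ≤ 3 * 2 ^ |b - 1| * ∫ y in Ioo p q, y ^ (b - 1) := by
  have hq : 0 < q := by linarith
  have mono {p' q' : ℝ} (h : Ioo p' q' ⊆ Ioo p q) :
      ∫ y in Ioo p' q', y ^ (b - 1) ≤ ∫ y in Ioo p q, y ^ (b - 1) :=
    setIntegral_mono_set (integrableOn_rpow_Ioo _ hp q) (ae_restrict_of_forall_mem
      measurableSet_Ioo fun y hy ↦ Real.rpow_nonneg (hp.trans hy.1).le _) h.eventuallyLE
  have left : p ^ b ≤ 2 ^ |b - 1| * ∫ y in Ioo p q, y ^ (b - 1) := by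
    calc p ^ b = (2 * p - p) * p ^ (b - 1) := by
          rw [Real.rpow_sub_one hp.ne']; field_simp; ring
      _ ≤ 2 ^ |b - 1| * ∫ y in Ioo p (2 * p), y ^ (b - 1) :=
          sub_mul_rpow_le_integral _ hp le_rfl (by linarith) ⟨le_rfl, by linarith⟩
      _ ≤ _ := mul_le_mul_of_nonneg_left (mono (Ioo_subset_Ioo_right hpq)) (by positivity)
  have right : q ^ b ≤ 2 * (2 ^ |b - 1| * ∫ y in Ioo p q, y ^ (b - 1)) := by
    calc q ^ b = 2 * ((q - q / 2) * q ^ (b - 1)) := by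
          rw [Real.rpow_sub_one hq.ne']; field_simp; ring
      _ ≤ 2 * (2 ^ |b - 1| * ∫ y in Ioo (q / 2) q, y ^ (b - 1)) :=
          mul_le_mul_of_nonneg_left (sub_mul_rpow_le_integral _ (half_pos hq) (by linarith)
            (half_le_self hq.le) ⟨half_le_self hq.le, le_rfl⟩) zero_le_two
      _ ≤ _ := by
          have := mono (Ioo_subset_Ioo_left (by linarith : p ≤ q / 2) (b := q))
          gcongr
  linarith

theorem exists_enorm_setIntegral_mul_exp_le (b : ℝ) :
    ∃ C > 0, ∀ (u p q B : ℝ) (ψ ψ' : ℝ → ℝ), u ≠ 0 → 0 < p → 2 * p ≤ q → 0 ≤ B →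
      (∀ y ∈ Ioo p q, HasDerivAt ψ (ψ' y) y) → ContinuousOn ψ' (Ioo p q) →
      (∀ y ∈ Ioo p q, |ψ y| ≤ B * y ^ b) → (∀ y ∈ Ioo p q, |ψ' y| ≤ B * y ^ (b - 1)) →
      ‖∫ y in Ioo p q, (ψ y : ℂ) * Complex.exp ((u * y : ℝ) * Complex.I)‖ₑ ≤
        ENNReal.ofReal (C * B / |u|) * ∫⁻ y in Ioo p q, ENNReal.ofReal (y ^ (b - 1)) := by
  refine ⟨2 * (3 * 2 ^ |b - 1| + 1), by positivity, ?_⟩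
  intro u p q B ψ ψ' hu hp hpq hB hψ hψ' hψ_le hψ'_le
  have hint := integrableOn_rpow_Ioo (b - 1) hp q
  have hq : 0 < q := by linarith
  rw [← ofReal_integral_eq_lintegral_ofReal hint (ae_restrict_of_forall_mem measurableSet_Ioo
    fun y hy ↦ Real.rpow_nonneg (hp.trans hy.1).le _), ← ENNReal.ofReal_mul (by positivity),
    ← ofReal_norm]
  refine ENNReal.ofReal_le_ofReal ?_
  calc ‖∫ y in Ioo p q, (ψ y : ℂ) * Complex.exp ((u * y : ℝ) * Complex.I)‖
      ≤ 2 / |u| * (B * (p ^ b + q ^ b) + ∫ y in Ioo p q, B * y ^ (b - 1)) :=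
        norm_setIntegral_mul_le_of_primitive hψ hψ' (by fun_prop) (by positivity) (by positivity)
          (fun x₁ x₂ _ _ _ ↦ norm_integral_exp_const_mul_le hu x₁ x₂)
          (fun y hy ↦ (hψ_le y hy).trans (mul_le_mul_of_nonneg_left
            (rpow_le_rpow_add_rpow b hp hy.1.le hy.2.le) hB)) hψ'_le (hint.const_mul B)
    _ ≤ 2 / |u| * (B * (3 * 2 ^ |b - 1| * ∫ y in Ioo p q, y ^ (b - 1)) +
        B * ∫ y in Ioo p q, y ^ (b - 1)) := by
        rw [integral_const_mul]
        gcongr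
        exact rpow_add_rpow_le_integral b hp hpq
    _ = _ := by ring

end PowerIntegrals

section Slices

theorem eq_Ioo_csInf_csSup_of_isOpen_ordConnected {s : Set ℝ} (hs : IsOpen s)
    (hc : s.OrdConnected) (hne : s.Nonempty) (hb : BddBelow s) (ha : BddAbove s) :
    s = Ioo (sInf s) (sSup s) := by
  refine Subset.antisymm (fun x hx ↦ ⟨?_, ?_⟩)
    (IsConnected.Ioo_csInf_csSup_subset ⟨hne, hc.isPreconnected⟩ hb ha)
  · obtain ⟨y, hyx, hy⟩ := (mem_nhdsLT_iff_exists_mem_Ico_Ioo_subset (sub_one_lt x)).1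
      (mem_nhdsWithin_of_mem_nhds (hs.mem_nhds hx))
    obtain ⟨z, hz⟩ := exists_between hyx.2
    exact (csInf_le hb (hy hz)).trans_lt hz.2
  · obtain ⟨y, hyx, hy⟩ := (mem_nhdsGT_iff_exists_mem_Ioc_Ioo_subset (lt_add_one x)).1
      (mem_nhdsWithin_of_mem_nhds (hs.mem_nhds hx))
    obtain ⟨z, hz⟩ := exists_between hyx.1
    exact hz.1.trans_le (le_csSup ha (hy hz))

variable {A : Set (ℝ × ℝ)}

theorem enorm_setIntegral_le_lintegral_fst (hA : MeasurableSet A) {f : ℝ × ℝ → ℂ}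
    (hf : IntegrableOn f A) :
    ‖∫ q in A, f q‖ₑ ≤ ∫⁻ x, ‖∫ y in Prod.mk x ⁻¹' A, f (x, y)‖ₑ := by
  rw [← integral_indicator hA, Measure.volume_eq_prod, integral_prod _
    (by rw [← Measure.volume_eq_prod]; exact (integrable_indicator_iff hA).2 hf)]
  refine (enorm_integral_le_lintegral_enorm _).trans (lintegral_mono fun x ↦ ?_)
  rw [← integral_indicator (measurable_prodMk_left hA)]
  rfl

theorem enorm_setIntegral_le_lintegral_snd (hA : MeasurableSet A) {f : ℝ × ℝ → ℂ}
    (hf : IntegrableOn f A) :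
    ‖∫ q in A, f q‖ₑ ≤ ∫⁻ y, ‖∫ x in (fun x ↦ (x, y)) ⁻¹' A, f (x, y)‖ₑ := by
  rw [← integral_indicator hA, Measure.volume_eq_prod, integral_prod_symm _
    (by rw [← Measure.volume_eq_prod]; exact (integrable_indicator_iff hA).2 hf)]
  refine (enorm_integral_le_lintegral_enorm _).trans (lintegral_mono fun y ↦ ?_)
  rw [← integral_indicator (measurable_prodMk_right hA)]
  rfl

theorem setLIntegral_eq_lintegral_fst (hA : MeasurableSet A) {w : ℝ × ℝ → ℝ≥0∞}
    (hw : Measurable w) :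
    ∫⁻ q in A, w q = ∫⁻ x, ∫⁻ y in Prod.mk x ⁻¹' A, w (x, y) := by
  rw [← lintegral_indicator hA, Measure.volume_eq_prod,
    lintegral_prod _ (hw.indicator hA).aemeasurable]
  refine lintegral_congr fun x ↦ ?_
  rw [← lintegral_indicator (measurable_prodMk_left hA)]
  rfl

end Slices

section DyadicStrip

/-- The part of a sliver over the interval `(X, 2X)`. -/
def dyadicStrip (X : ℝ) (g G : ℝ → ℝ) : Set (ℝ × ℝ) :=
  {q | q.1 ∈ Ioo X (2 * X) ∧ q.2 ∈ Ioo (g q.1) (G q.1)}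

/-- The oscillatory integrand `ψ(x, y) exp (i (J(x) + u y))`. -/
noncomputable def phaseIntegrand (ψ : ℝ × ℝ → ℝ) (J : ℝ → ℝ) (u : ℝ) (q : ℝ × ℝ) : ℂ :=
  (ψ q : ℂ) * Complex.exp ((J q.1 + u * q.2 : ℝ) * Complex.I)

/-- The size `y ^ b` of an amplitude damped by the gain `(ρ + |u| y) ^ (-1/2)` from oscillation. -/
noncomputable def stripWeight (b ρ u : ℝ) (q : ℝ × ℝ) : ℝ≥0∞ :=
  ENNReal.ofReal ((√(ρ + |u| * q.2))⁻¹ * q.2 ^ b)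

/-- The curves `g` and `G` bound a dyadic strip: on `[X, 2X]` they are increasing, doubling with
constant `κ`, and `G` lies well above `g`. -/
structure IsDyadicSliver (κ X : ℝ) (g G : ℝ → ℝ) : Prop where
  pos : 0 < X
  lower_monotoneOn : MonotoneOn g (Icc X (2 * X))
  upper_monotoneOn : MonotoneOn G (Icc X (2 * X))
  lower_left_nonneg : 0 ≤ g X
  lower_doubling : g (2 * X) ≤ κ * g X
  upper_doubling : G (2 * X) ≤ κ * G X
  separated : 2 * κ * g (2 * X) < G X
  isOpen_dyadicStrip : IsOpen (dyadicStrip X g G)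

/-- The amplitude `ψ`, with partial derivatives `ψx` and `ψy`, behaves like `B y ^ b` on the set
`s`, in which `x` has size `X`. -/
structure HasAmplitudeBound (b X B : ℝ) (s : Set (ℝ × ℝ)) (ψ ψx ψy : ℝ × ℝ → ℝ) : Prop where
  nonneg : 0 ≤ B
  hasDerivAt_fst : ∀ q ∈ s, HasDerivAt (fun x ↦ ψ (x, q.2)) (ψx q) q.1
  hasDerivAt_snd : ∀ q ∈ s, HasDerivAt (fun y ↦ ψ (q.1, y)) (ψy q) q.2
  continuousOn_fst : ContinuousOn ψx s
  continuousOn_snd : ContinuousOn ψy s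
  abs_le : ∀ q ∈ s, |ψ q| ≤ B * q.2 ^ b
  abs_fst_le : ∀ q ∈ s, |ψx q| ≤ B * q.2 ^ b / X
  abs_snd_le : ∀ q ∈ s, |ψy q| ≤ B * q.2 ^ (b - 1)

/-- The oscillatory integrals with phase `J` over subintervals of `[X, 2X]` are at most `Θ`. -/
structure HasOscillationBound (X Θ : ℝ) (J : ℝ → ℝ) : Prop where
  continuousOn : ContinuousOn J (Icc X (2 * X))
  norm_integral_le : ∀ x₁ x₂, X ≤ x₁ → x₁ ≤ x₂ → x₂ ≤ 2 * X →
    ‖∫ x in x₁..x₂, Complex.exp (J x * Complex.I)‖ ≤ Θ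

theorem phaseIntegrand_eq (ψ : ℝ × ℝ → ℝ) (J : ℝ → ℝ) (u x y : ℝ) :
    phaseIntegrand ψ J u (x, y) = Complex.exp (J x * Complex.I) *
      ((ψ (x, y) : ℂ) * Complex.exp ((u * y : ℝ) * Complex.I)) := by
  simp only [phaseIntegrand]
  rw [mul_left_comm, ← Complex.exp_add]
  congr 2
  push_cast
  ring

theorem measurable_stripWeight (b ρ u : ℝ) : Measurable (stripWeight b ρ u) := by
  unfold stripWeight
  fun_prop

theorem inv_le_mul_inv_sqrt_add {c ρ t : ℝ} (hρ : 1 ≤ ρ) (ht : 0 < t) (h : ρ ≤ c * t) :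
    t⁻¹ ≤ (1 + c) * (√(ρ + t))⁻¹ := by
  have hsqrt : √(ρ + t) ≤ ρ + t := Real.sqrt_le_iff.2 ⟨by linarith, by nlinarith⟩
  rw [← div_eq_mul_inv, le_div_iff₀ (Real.sqrt_pos.2 (by linarith)), inv_mul_le_iff₀ ht]
  linarith

theorem inv_sqrt_le_mul_inv_sqrt_add {c ρ t : ℝ} (hρ : 0 < ρ) (ht : 0 ≤ t) (h : t ≤ c * ρ) :
    (√ρ)⁻¹ ≤ √(1 + c) * (√(ρ + t))⁻¹ := by
  have : 0 ≤ c := nonneg_of_mul_nonneg_left (ht.trans h) hρ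
  rw [← div_eq_mul_inv, le_div_iff₀ (Real.sqrt_pos.2 (by linarith)),
    inv_mul_le_iff₀ (Real.sqrt_pos.2 hρ), ← Real.sqrt_mul (by linarith)]
  exact Real.sqrt_le_sqrt (by linarith)

variable {b κ X ρ u B Θ : ℝ} {g G J : ℝ → ℝ} {ψ ψx ψy : ℝ × ℝ → ℝ}

namespace IsDyadicSliver

theorem left_mem (h : IsDyadicSliver κ X g G) : X ∈ Icc X (2 * X) :=
  ⟨le_rfl, by linarith [h.pos]⟩

theorem right_mem (h : IsDyadicSliver κ X g G) : 2 * X ∈ Icc X (2 * X) :=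
  ⟨by linarith [h.pos], le_rfl⟩

theorem lower_left_le (h : IsDyadicSliver κ X g G) {x : ℝ} (hx : x ∈ Icc X (2 * X)) :
    g X ≤ g x :=
  h.lower_monotoneOn h.left_mem hx hx.1

theorem lower_le_right (h : IsDyadicSliver κ X g G) {x : ℝ} (hx : x ∈ Icc X (2 * X)) :
    g x ≤ g (2 * X) :=
  h.lower_monotoneOn hx h.right_mem hx.2

theorem upper_left_le (h : IsDyadicSliver κ X g G) {x : ℝ} (hx : x ∈ Icc X (2 * X)) :
    G X ≤ G x :=
  h.upper_monotoneOn h.left_mem hx hx.1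

theorem upper_le_right (h : IsDyadicSliver κ X g G) {x : ℝ} (hx : x ∈ Icc X (2 * X)) :
    G x ≤ G (2 * X) :=
  h.upper_monotoneOn hx h.right_mem hx.2

theorem lower_nonneg (h : IsDyadicSliver κ X g G) {x : ℝ} (hx : x ∈ Icc X (2 * X)) : 0 ≤ g x :=
  h.lower_left_nonneg.trans (h.lower_left_le hx)

theorem snd_mem_Ioo (h : IsDyadicSliver κ X g G) {q : ℝ × ℝ} (hq : q ∈ dyadicStrip X g G) :
    q.2 ∈ Ioo (g X) (G (2 * X)) :=
  ⟨(h.lower_left_le (Ioo_subset_Icc_self hq.1)).trans_lt hq.2.1,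
    hq.2.2.trans_le (h.upper_le_right (Ioo_subset_Icc_self hq.1))⟩

theorem snd_pos (h : IsDyadicSliver κ X g G) {q : ℝ × ℝ} (hq : q ∈ dyadicStrip X g G) :
    0 < q.2 :=
  h.lower_left_nonneg.trans_lt (h.snd_mem_Ioo hq).1

theorem ordConnected_slice (h : IsDyadicSliver κ X g G) (y : ℝ) :
    ((fun x ↦ (x, y)) ⁻¹' dyadicStrip X g G).OrdConnected := by
  refine ⟨fun x₁ h₁ x₂ h₂ x hx ↦ ?_⟩
  have hxX : x ∈ Ioo X (2 * X) := ordConnected_Ioo.out h₁.1 h₂.1 hx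
  have mem_Icc {z : ℝ} (hz : z ∈ Ioo X (2 * X)) : z ∈ Icc X (2 * X) := Ioo_subset_Icc_self hz
  exact ⟨hxX, (h.lower_monotoneOn (mem_Icc hxX) (mem_Icc h₂.1) hx.2).trans_lt h₂.2.1,
    h₁.2.2.trans_le (h.upper_monotoneOn (mem_Icc h₁.1) (mem_Icc hxX) hx.1)⟩

theorem exists_slice_eq_Ioo (h : IsDyadicSliver κ X g G) {y : ℝ}
    (hne : ((fun x ↦ (x, y)) ⁻¹' dyadicStrip X g G).Nonempty) :
    ∃ p q, X ≤ p ∧ p ≤ q ∧ q ≤ 2 * X ∧ (fun x ↦ (x, y)) ⁻¹' dyadicStrip X g G = Ioo p q := by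
  have hb : BddBelow ((fun x ↦ (x, y)) ⁻¹' dyadicStrip X g G) := ⟨X, fun x hx ↦ hx.1.1.le⟩
  have ha : BddAbove ((fun x ↦ (x, y)) ⁻¹' dyadicStrip X g G) := ⟨2 * X, fun x hx ↦ hx.1.2.le⟩
  exact ⟨_, _, le_csInf hne fun x hx ↦ hx.1.1.le, csInf_le_csSup hne hb ha,
    csSup_le hne fun x hx ↦ hx.1.2.le, eq_Ioo_csInf_csSup_of_isOpen_ordConnected
      (h.isOpen_dyadicStrip.preimage (by fun_prop)) (h.ordConnected_slice y) hne hb ha⟩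

end IsDyadicSliver

theorem exists_enorm_setIntegral_snd_slice_le (b : ℝ) {c : ℝ} (hc : 0 ≤ c) :
    ∃ C > 0, ∀ (X ρ u B : ℝ) (s : Set (ℝ × ℝ)) (J : ℝ → ℝ) (ψ ψx ψy : ℝ × ℝ → ℝ),
      HasAmplitudeBound b X B s ψ ψx ψy → 1 ≤ ρ → ∀ x p q : ℝ, 0 < p → 2 * p ≤ q →
      ρ ≤ c * (|u| * p) → (∀ y ∈ Ioo p q, (x, y) ∈ s) →
      ‖∫ y in Ioo p q, phaseIntegrand ψ J u (x, y)‖ₑ ≤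
        ENNReal.ofReal (C * B) * ∫⁻ y in Ioo p q, stripWeight b ρ u (x, y) := by
  obtain ⟨C, hC, by_parts⟩ := exists_enorm_setIntegral_mul_exp_le b
  refine ⟨C * (1 + c), by positivity, ?_⟩
  intro X ρ u B s J ψ ψx ψy hψ hρ x p q hp hpq hpρ hmem
  have hB := hψ.nonneg
  have hu : u ≠ 0 := by
    rintro rfl
    simp only [abs_zero, zero_mul, mul_zero] at hpρ
    linarith
  simp_rw [phaseIntegrand_eq]
  rw [integral_const_mul, enorm_mul, ← ofReal_norm (Complex.exp _), Complex.norm_exp_ofReal_mul_I,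
    ENNReal.ofReal_one, one_mul]
  refine (by_parts u p q B (fun y ↦ ψ (x, y)) (fun y ↦ ψy (x, y)) hu hp hpq hB
    (fun y hy ↦ hψ.hasDerivAt_snd _ (hmem y hy)) (hψ.continuousOn_snd.comp (by fun_prop) hmem)
    (fun y hy ↦ hψ.abs_le _ (hmem y hy)) (fun y hy ↦ hψ.abs_snd_le _ (hmem y hy))).trans ?_
  rw [← lintegral_const_mul' _ _ ENNReal.ofReal_ne_top,
    ← lintegral_const_mul' _ _ ENNReal.ofReal_ne_top]
  refine setLIntegral_mono' measurableSet_Ioo fun y hy ↦ ?_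
  have hy₀ : 0 < y := hp.trans hy.1
  rw [stripWeight, ← ENNReal.ofReal_mul (by positivity), ← ENNReal.ofReal_mul (by positivity)]
  refine ENNReal.ofReal_le_ofReal ?_
  calc C * B / |u| * y ^ (b - 1) = C * B * ((|u| * y)⁻¹ * y ^ b) := by
        rw [Real.rpow_sub_one hy₀.ne', mul_inv]; ring
    _ ≤ C * B * ((1 + c) * (√(ρ + |u| * y))⁻¹ * y ^ b) := by
        gcongr
        refine inv_le_mul_inv_sqrt_add hρ (by positivity) (hpρ.trans ?_)
        gcongr
        exact hy.1.le
    _ = _ := by ring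

/- Above the height `p`, integrate by parts in `y`. -/
theorem exists_enorm_setIntegral_upper_le (b : ℝ) {c : ℝ} (hc : 0 ≤ c) :
    ∃ C > 0, ∀ (κ X ρ u B : ℝ) (g G J : ℝ → ℝ) (ψ ψx ψy : ℝ × ℝ → ℝ),
      IsDyadicSliver κ X g G → HasAmplitudeBound b X B (dyadicStrip X g G) ψ ψx ψy → 1 ≤ ρ →
      IntegrableOn (phaseIntegrand ψ J u) (dyadicStrip X g G) → ∀ p : ℝ,
      (∀ x ∈ Ioo X (2 * X), p < G x → 0 < max (g x) p ∧ 2 * max (g x) p ≤ G x ∧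
        ρ ≤ c * (|u| * max (g x) p)) →
      ‖∫ q in dyadicStrip X g G ∩ {q | p < q.2}, phaseIntegrand ψ J u q‖ₑ ≤
        ENNReal.ofReal (C * B) *
          ∫⁻ q in dyadicStrip X g G ∩ {q | p < q.2}, stripWeight b ρ u q := by
  obtain ⟨C, hC, slice_le⟩ := exists_enorm_setIntegral_snd_slice_le b hc
  refine ⟨C, hC, ?_⟩
  intro κ X ρ u B g G J ψ ψx ψy hs hψ hρ hint p hp
  have hA : MeasurableSet (dyadicStrip X g G ∩ {q | p < q.2}) :=
    hs.isOpen_dyadicStrip.measurableSet.inter (measurableSet_lt measurable_const measurable_snd)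
  refine (enorm_setIntegral_le_lintegral_fst hA (hint.mono_set inter_subset_left)).trans ?_
  rw [setLIntegral_eq_lintegral_fst hA (measurable_stripWeight b ρ u),
    ← lintegral_const_mul' _ _ ENNReal.ofReal_ne_top]
  refine lintegral_mono fun x ↦ ?_
  rcases (Prod.mk x ⁻¹' (dyadicStrip X g G ∩ {q | p < q.2})).eq_empty_or_nonempty with he | hne
  · simp [he]
  obtain ⟨y, ⟨hx, hy⟩, hpy⟩ := hne
  have slice_eq : Prod.mk x ⁻¹' (dyadicStrip X g G ∩ {q | p < q.2}) =
      Ioo (max (g x) p) (G x) := by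
    ext y
    simp only [mem_preimage, mem_inter_iff, dyadicStrip, mem_ofPred_eq, mem_Ioo, max_lt_iff] at hx ⊢
    tauto
  obtain ⟨hp₀, hpG, hpρ⟩ := hp x hx (lt_trans hpy hy.2)
  rw [slice_eq]
  exact slice_le X ρ u B _ J ψ ψx ψy hψ hρ x _ _ hp₀ hpG hpρ
    fun y hy ↦ ⟨hx, (le_max_left _ _).trans_lt hy.1, hy.2⟩

theorem norm_setIntegral_fst_slice_le {s : Set (ℝ × ℝ)} (hψ : HasAmplitudeBound b X B s ψ ψx ψy)
    (hJ : HasOscillationBound X Θ J) (hX : 0 < X) (hΘ : 0 ≤ Θ) {p q y : ℝ} (hy : 0 < y)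
    (hp : X ≤ p) (hpq : p ≤ q) (hq : q ≤ 2 * X) (hmem : ∀ x ∈ Ioo p q, (x, y) ∈ s) :
    ‖∫ x in Ioo p q, phaseIntegrand ψ J u (x, y)‖ ≤ 2 * Θ * B * y ^ b := by
  have hB := hψ.nonneg
  have factor (x : ℝ) : phaseIntegrand ψ J u (x, y) = Complex.exp ((u * y : ℝ) * Complex.I) *
      ((ψ (x, y) : ℂ) * Complex.exp (J x * Complex.I)) := by
    rw [phaseIntegrand_eq]; ring
  simp_rw [factor]
  rw [integral_const_mul, norm_mul, Complex.norm_exp_ofReal_mul_I, one_mul]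
  have hsub : Ioo p q ⊆ Icc X (2 * X) := Ioo_subset_Icc_self.trans (Icc_subset_Icc hp hq)
  have by_parts := norm_setIntegral_mul_le_of_primitive (Θ := Θ) (B := B * y ^ b)
    (ψ' := fun x ↦ ψx (x, y)) (β := fun _ ↦ B * y ^ b / X)
    (fun x hx ↦ hψ.hasDerivAt_fst _ (hmem x hx)) (hψ.continuousOn_fst.comp (by fun_prop) hmem)
    (((Complex.continuous_ofReal.comp_continuousOn (hJ.continuousOn.mono hsub)).mul
      continuousOn_const).cexp) hΘ (by positivity)
    (fun x₁ x₂ h₁ h₁₂ h₂ ↦ hJ.norm_integral_le x₁ x₂ (hp.trans h₁.le) h₁₂ (h₂.le.trans hq))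
    (fun x hx ↦ hψ.abs_le _ (hmem x hx)) (fun x hx ↦ hψ.abs_fst_le _ (hmem x hx))
    (integrableOn_const (by simp))
  rw [setIntegral_const, Real.volume_real_Ioo_of_le hpq, smul_eq_mul] at by_parts
  have hlen : (q - p) * (B * y ^ b / X) ≤ B * y ^ b := by
    rw [← mul_div_assoc, div_le_iff₀ hX, mul_comm]
    exact mul_le_mul_of_nonneg_left (by linarith) (by positivity)
  calc _ ≤ Θ * (B * y ^ b + (q - p) * (B * y ^ b / X)) := by_parts
    _ ≤ Θ * (B * y ^ b + B * y ^ b) := by gcongr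
    _ = _ := by ring

/- Below the height `P`, integrate by parts in `x`. -/
theorem enorm_setIntegral_lower_le_mul (hs : IsDyadicSliver κ X g G)
    (hψ : HasAmplitudeBound b X B (dyadicStrip X g G) ψ ψx ψy) (hJ : HasOscillationBound X Θ J)
    (hΘ : 0 ≤ Θ) (hint : IntegrableOn (phaseIntegrand ψ J u) (dyadicStrip X g G)) (P : ℝ) :
    ‖∫ q in dyadicStrip X g G ∩ {q | q.2 ≤ P}, phaseIntegrand ψ J u q‖ₑ ≤
      ENNReal.ofReal (2 * Θ * B) *
        ∫⁻ y in Ioo (g X) (min P (G (2 * X))), ENNReal.ofReal (y ^ b) := by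
  have hA : MeasurableSet (dyadicStrip X g G ∩ {q | q.2 ≤ P}) :=
    hs.isOpen_dyadicStrip.measurableSet.inter (measurableSet_le measurable_snd measurable_const)
  have hB := hψ.nonneg
  refine (enorm_setIntegral_le_lintegral_snd hA (hint.mono_set inter_subset_left)).trans ?_
  rw [setLIntegral_congr (Ioo_ae_eq_Ioc (μ := volume)),
    ← lintegral_const_mul' _ _ ENNReal.ofReal_ne_top, ← lintegral_indicator measurableSet_Ioc]
  refine lintegral_mono fun y ↦ ?_
  rcases ((fun x ↦ (x, y)) ⁻¹' (dyadicStrip X g G ∩ {q | q.2 ≤ P})).eq_empty_or_nonempty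
    with he | ⟨x₀, hx₀, hyP⟩
  · simp [he]
  have hy : y ∈ Ioo (g X) (G (2 * X)) := hs.snd_mem_Ioo hx₀
  rw [indicator_of_mem (show y ∈ Ioc (g X) (min P (G (2 * X))) from ⟨hy.1, le_min hyP hy.2.le⟩)]
  have slice_eq : (fun x ↦ (x, y)) ⁻¹' (dyadicStrip X g G ∩ {q | q.2 ≤ P}) =
      (fun x ↦ (x, y)) ⁻¹' dyadicStrip X g G := by
    ext x
    exact and_iff_left hyP
  obtain ⟨p, q, hp, hpq, hq, eq_Ioo⟩ := hs.exists_slice_eq_Ioo ⟨x₀, hx₀⟩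
  rw [slice_eq, eq_Ioo, ← ofReal_norm, ← ENNReal.ofReal_mul (by positivity)]
  exact ENNReal.ofReal_le_ofReal (norm_setIntegral_fst_slice_le hψ hJ hs.pos hΘ (hs.snd_pos hx₀)
    hp hpq hq fun x hx ↦ eq_Ioo.ge hx)

theorem setLIntegral_stripWeight_prod (X : ℝ) (s : Set ℝ) (hs : MeasurableSet s) :
    ∫⁻ q in Ioo X (2 * X) ×ˢ s, stripWeight b ρ u q =
      ENNReal.ofReal X * ∫⁻ y in s, ENNReal.ofReal ((√(ρ + |u| * y))⁻¹ * y ^ b) := by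
  have volume_eq : volume (Ioo X (2 * X)) = ENNReal.ofReal X := by
    rw [Real.volume_Ioo]; congr 1; ring
  rw [setLIntegral_eq_lintegral_fst (measurableSet_Ioo.prod hs) (measurable_stripWeight b ρ u),
    ← volume_eq, mul_comm (volume _), ← setLIntegral_const, ← lintegral_indicator measurableSet_Ioo]
  refine lintegral_congr fun x ↦ ?_
  by_cases hx : x ∈ Ioo X (2 * X)
  · rw [mk_preimage_prod_right hx, indicator_of_mem hx]
    rfl
  · rw [mk_preimage_prod_right_eq_empty hx, indicator_of_notMem hx]
    simp

theorem setLIntegral_rpow_le_stripWeight {c : ℝ} (hX : 0 ≤ X) (hρ : 0 < ρ) {p q : ℝ}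
    (hp : 0 ≤ p) (hq : |u| * q ≤ c * ρ) :
    ENNReal.ofReal (X / √ρ) * ∫⁻ y in Ioo p q, ENNReal.ofReal (y ^ b) ≤
      ENNReal.ofReal √(1 + c) * ∫⁻ z in Ioo X (2 * X) ×ˢ Ioo p q, stripWeight b ρ u z := by
  rw [setLIntegral_stripWeight_prod X _ measurableSet_Ioo, ← mul_assoc,
    ← ENNReal.ofReal_mul (by positivity), ← lintegral_const_mul' _ _ ENNReal.ofReal_ne_top,
    ← lintegral_const_mul' _ _ ENNReal.ofReal_ne_top]
  refine setLIntegral_mono' measurableSet_Ioo fun y hy ↦ ?_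
  have hy₀ : 0 < y := hp.trans_lt hy.1
  have hyq : |u| * y ≤ c * ρ := le_trans (by gcongr; exact hy.2.le) hq
  rw [← ENNReal.ofReal_mul (by positivity), ← ENNReal.ofReal_mul (by positivity)]
  refine ENNReal.ofReal_le_ofReal ?_
  calc X / √ρ * y ^ b = X * ((√ρ)⁻¹ * y ^ b) := by ring
    _ ≤ X * (√(1 + c) * (√(ρ + |u| * y))⁻¹ * y ^ b) := by
        gcongr
        exact inv_sqrt_le_mul_inv_sqrt_add hρ (by positivity) hyq
    _ = _ := by ring

theorem IsDyadicSliver.box_subset (hs : IsDyadicSliver κ X g G) (P : ℝ) :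
    Ioo X (2 * X) ×ˢ Ioo (g (2 * X)) (min P (G X)) ⊆ dyadicStrip X g G ∩ {q | q.2 ≤ P} := by
  rintro ⟨x, y⟩ ⟨hx, hy⟩
  have hx' := Ioo_subset_Icc_self hx
  exact ⟨⟨hx, (hs.lower_le_right hx').trans_lt hy.1,
    hy.2.trans_le ((min_le_right _ _).trans (hs.upper_left_le hx'))⟩,
    hy.2.le.trans (min_le_left _ _)⟩

theorem exists_setLIntegral_rpow_le_of_isDyadicSliver (b : ℝ) {κ : ℝ} (hκ : 1 ≤ κ) :
    ∃ K > 0, ∀ (X : ℝ) (g G : ℝ → ℝ), IsDyadicSliver κ X g G → ∀ P : ℝ, κ * g (2 * X) < P →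
      ∫⁻ y in Ioo (g X) (min P (G (2 * X))), ENNReal.ofReal (y ^ b) ≤
        ENNReal.ofReal K * ∫⁻ y in Ioo (g (2 * X)) (min P (G X)), ENNReal.ofReal (y ^ b) := by
  obtain ⟨K, hK, pow_le⟩ := exists_setLIntegral_rpow_Ioo_le b hκ
  refine ⟨K, hK, fun X g G hs P hP ↦ ?_⟩
  have hκ₀ : 0 < κ := by linarith
  have hg : 0 ≤ g (2 * X) := hs.lower_nonneg hs.right_mem
  refine pow_le (g X) _ (g (2 * X)) _ hg
    (lt_min hP (by nlinarith [hs.separated, mul_nonneg hκ₀.le hg])) ?_ ?_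
  · rw [div_le_iff₀ hκ₀]
    linarith [hs.lower_doubling]
  · rw [mul_min_of_nonneg _ _ hκ₀.le]
    exact min_le_min (le_mul_of_one_le_left ((mul_nonneg hκ₀.le hg).trans hP.le) hκ)
      hs.upper_doubling

theorem exists_enorm_setIntegral_lower_le (b : ℝ) {κ C₀ c : ℝ} (hκ : 1 ≤ κ) (hC₀ : 0 < C₀)
    (hc : 0 ≤ c) :
    ∃ C > 0, ∀ (X ρ u B : ℝ) (g G J : ℝ → ℝ) (ψ ψx ψy : ℝ × ℝ → ℝ), IsDyadicSliver κ X g G →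
      HasAmplitudeBound b X B (dyadicStrip X g G) ψ ψx ψy → 1 ≤ ρ →
      HasOscillationBound X (C₀ * X / √ρ) J →
      IntegrableOn (phaseIntegrand ψ J u) (dyadicStrip X g G) →
      ∀ P : ℝ, κ * g (2 * X) < P → |u| * min P (G (2 * X)) ≤ c * ρ →
      ‖∫ q in dyadicStrip X g G ∩ {q | q.2 ≤ P}, phaseIntegrand ψ J u q‖ₑ ≤
        ENNReal.ofReal (C * B) *
          ∫⁻ q in dyadicStrip X g G ∩ {q | q.2 ≤ P}, stripWeight b ρ u q := by
  obtain ⟨K, hK, pow_le⟩ := exists_setLIntegral_rpow_le_of_isDyadicSliver b hκ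
  refine ⟨2 * C₀ * K * √(1 + c), by positivity, ?_⟩
  intro X ρ u B g G J ψ ψx ψy hs hψ hρ hJ hint P hP huP
  have hB := hψ.nonneg
  have hX := hs.pos
  have huP' : |u| * min P (G X) ≤ c * ρ := by
    refine le_trans (mul_le_mul_of_nonneg_left ?_ (abs_nonneg u)) huP
    exact min_le_min_left _ (hs.upper_left_le hs.right_mem)
  calc _ ≤ ENNReal.ofReal (2 * (C₀ * X / √ρ) * B) *
        ∫⁻ y in Ioo (g X) (min P (G (2 * X))), ENNReal.ofReal (y ^ b) :=
        enorm_setIntegral_lower_le_mul hs hψ hJ (by positivity) hint P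
    _ ≤ ENNReal.ofReal (2 * (C₀ * X / √ρ) * B) * (ENNReal.ofReal K *
        ∫⁻ y in Ioo (g (2 * X)) (min P (G X)), ENNReal.ofReal (y ^ b)) := by
        gcongr
        exact pow_le X g G hs P hP
    _ = ENNReal.ofReal (2 * C₀ * K * B) * (ENNReal.ofReal (X / √ρ) *
        ∫⁻ y in Ioo (g (2 * X)) (min P (G X)), ENNReal.ofReal (y ^ b)) := by
        rw [← mul_assoc, ← mul_assoc, ← ENNReal.ofReal_mul (by positivity),
          ← ENNReal.ofReal_mul (by positivity)]
        congr 2; ring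
    _ ≤ ENNReal.ofReal (2 * C₀ * K * B) * (ENNReal.ofReal √(1 + c) *
        ∫⁻ q in dyadicStrip X g G ∩ {q | q.2 ≤ P}, stripWeight b ρ u q) := by
        refine mul_le_mul_right ?_ _
        exact (setLIntegral_rpow_le_stripWeight hX.le (by linarith) (hs.lower_nonneg hs.right_mem)
          huP').trans (mul_le_mul_right (lintegral_mono_set (hs.box_subset P)) _)
    _ = _ := by
        rw [← mul_assoc, ← ENNReal.ofReal_mul (by positivity)]
        congr 2; ring

theorem IsDyadicSliver.pos_and_le_of_le_lower (hs : IsDyadicSliver κ X g G) (hκ : 0 ≤ κ)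
    (hρ : 0 < ρ) (h : ρ ≤ κ * (|u| * g (2 * X))) {x : ℝ} (hx : x ∈ Icc X (2 * X)) :
    0 < g x ∧ ρ ≤ κ * κ * (|u| * g x) := by
  have hρx : ρ ≤ κ * κ * (|u| * g x) := by
    calc ρ ≤ κ * (|u| * (κ * g X)) := h.trans (by gcongr; exact hs.lower_doubling)
      _ ≤ κ * (|u| * (κ * g x)) := by gcongr; exact hs.lower_left_le hx
      _ = _ := by ring
  refine ⟨(hs.lower_nonneg hx).lt_of_ne fun h₀ ↦ ?_, hρx⟩
  rw [← h₀, mul_zero, mul_zero] at hρx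
  linarith

/- The balanced height is `ρ / |u|`, where the gains of the two integrations by parts match; the
cut is placed above or below the whole strip when the latter lies far below or far above it. -/
theorem IsDyadicSliver.exists_cut (hs : IsDyadicSliver κ X g G) (hκ : 1 ≤ κ) (hρ : 0 < ρ) (u : ℝ) :
    ∃ P, (P ≤ 0 ∨ κ * g (2 * X) < P ∧ |u| * min P (G (2 * X)) ≤ 2 * κ * ρ) ∧
      ∀ x ∈ Ioo X (2 * X), P < G x → 0 < max (g x) P ∧ 2 * max (g x) P ≤ G x ∧
        ρ ≤ κ * κ * (|u| * max (g x) P) := by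
  have hg₀ := hs.lower_nonneg hs.right_mem
  have hκg : g (2 * X) ≤ κ * g (2 * X) := le_mul_of_one_le_left hg₀ hκ
  have hG_mono := hs.upper_left_le hs.right_mem
  have hsep := hs.separated
  rcases le_or_gt (|u| * G X) (2 * ρ) with below | hcut
  · refine ⟨G (2 * X), Or.inr ⟨by linarith, ?_⟩, fun x hx hPx ↦
      absurd hPx (not_lt.2 (hs.upper_le_right (Ioo_subset_Icc_self hx)))⟩
    calc |u| * min (G (2 * X)) (G (2 * X)) ≤ |u| * (κ * G X) := by
          rw [min_self]; gcongr; exact hs.upper_doubling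
      _ = κ * (|u| * G X) := by ring
      _ ≤ κ * (2 * ρ) := by gcongr
      _ = 2 * κ * ρ := by ring
  rcases le_or_gt ρ (κ * (|u| * g (2 * X))) with above | hcut'
  · refine ⟨0, Or.inl le_rfl, fun x hx _ ↦ ?_⟩
    have hx' := Ioo_subset_Icc_self hx
    obtain ⟨hgx, hρx⟩ := hs.pos_and_le_of_le_lower (by linarith) hρ above hx'
    rw [max_eq_left hgx.le]
    exact ⟨hgx, by linarith [hs.lower_le_right hx', hs.upper_left_le hx'], hρx⟩
  have hu : 0 < |u| :=
    pos_of_mul_pos_left (hρ.trans (by linarith)) (by linarith : 0 ≤ G X)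
  have huP : |u| * (ρ / |u|) = ρ := mul_div_cancel₀ _ hu.ne'
  have hgP : κ * g (2 * X) < ρ / |u| := by rw [lt_div_iff₀ hu]; linarith
  have hPG : 2 * (ρ / |u|) < G X := by rw [← mul_div_assoc, div_lt_iff₀ hu]; linarith
  refine ⟨ρ / |u|, Or.inr ⟨hgP, ?_⟩, fun x hx _ ↦ ?_⟩
  · exact (mul_le_mul_of_nonneg_left (min_le_left _ _) hu.le).trans
      (huP.trans_le (le_mul_of_one_le_left hρ.le (by linarith)))
  · have hx' := Ioo_subset_Icc_self hx
    rw [max_eq_right (by linarith [hs.lower_le_right hx']), huP]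
    exact ⟨by positivity, by linarith [hs.upper_left_le hx'],
      le_mul_of_one_le_left hρ.le (by nlinarith)⟩

theorem exists_enorm_setIntegral_dyadicStrip_le (b : ℝ) {κ C₀ : ℝ} (hκ : 1 ≤ κ) (hC₀ : 0 < C₀) :
    ∃ C > 0, ∀ (X ρ u B : ℝ) (g G J : ℝ → ℝ) (ψ ψx ψy : ℝ × ℝ → ℝ), IsDyadicSliver κ X g G →
      HasAmplitudeBound b X B (dyadicStrip X g G) ψ ψx ψy → 1 ≤ ρ →
      HasOscillationBound X (C₀ * X / √ρ) J →
      IntegrableOn (phaseIntegrand ψ J u) (dyadicStrip X g G) →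
      ‖∫ q in dyadicStrip X g G, phaseIntegrand ψ J u q‖ₑ ≤
        ENNReal.ofReal (C * B) * ∫⁻ q in dyadicStrip X g G, stripWeight b ρ u q := by
  obtain ⟨C₁, hC₁, upper⟩ := exists_enorm_setIntegral_upper_le b (c := κ * κ) (by positivity)
  obtain ⟨C₂, hC₂, lower⟩ :=
    exists_enorm_setIntegral_lower_le b (c := 2 * κ) hκ hC₀ (by positivity)
  refine ⟨C₁ + C₂, by positivity, ?_⟩
  intro X ρ u B g G J ψ ψx ψy hs hψ hρ hJ hint
  have hB := hψ.nonneg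
  obtain ⟨P, hP_lower, hP_upper⟩ := hs.exists_cut hκ (by linarith : 0 < ρ) u
  have hmeas : MeasurableSet {q : ℝ × ℝ | q.2 ≤ P} :=
    measurableSet_le measurable_snd measurable_const
  have hcompl : {q : ℝ × ℝ | P < q.2} = {q : ℝ × ℝ | q.2 ≤ P}ᶜ := by
    ext q; simp
  have hi := upper κ X ρ u B g G J ψ ψx ψy hs hψ hρ hint P hP_upper
  rw [hcompl, ← sdiff_eq] at hi
  have lo : ‖∫ q in dyadicStrip X g G ∩ {q | q.2 ≤ P}, phaseIntegrand ψ J u q‖ₑ ≤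
      ENNReal.ofReal (C₂ * B) *
        ∫⁻ q in dyadicStrip X g G ∩ {q | q.2 ≤ P}, stripWeight b ρ u q := by
    rcases hP_lower with hP | ⟨hgP, huP⟩
    · have : dyadicStrip X g G ∩ {q | q.2 ≤ P} = ∅ :=
        eq_empty_of_forall_notMem fun q hq ↦ (hq.2.trans hP).not_gt (hs.snd_pos hq.1)
      simp [this]
    · exact lower X ρ u B g G J ψ ψx ψy hs hψ hρ hJ hint P hgP huP
  rw [← integral_inter_add_sdiff hmeas hint,
    ← lintegral_inter_add_sdiff (stripWeight b ρ u) (dyadicStrip X g G) hmeas, mul_add]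
  refine (enorm_add_le _ _).trans (add_le_add (lo.trans ?_) (hi.trans ?_)) <;> gcongr <;> linarith

end DyadicStrip

section LeadingTerm

variable {k k' : ℝ → ℝ} {e e' s p : ℝ}

theorem eventually_forall_mem_Ioc {P : ℝ → Prop} (h : ∀ᶠ x in 𝓝[>] (0 : ℝ), P x) :
    ∀ᶠ r in 𝓝[>] (0 : ℝ), ∀ x ∈ Ioc 0 r, P x := by
  obtain ⟨r₀, hr₀, hP⟩ := mem_nhdsGT_iff_exists_Ioo_subset.1 h
  filter_upwards [Ioo_mem_nhdsGT hr₀] with r hr x hx using hP ⟨hx.1, hx.2.trans_lt hr.2⟩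

theorem tendsto_rpow_nhdsGT_zero (hs : 0 < s) :
    Tendsto (fun x : ℝ ↦ x ^ s) (𝓝[>] 0) (𝓝 0) := by
  have h := (Real.continuousAt_rpow_const 0 s (Or.inr hs.le)).tendsto
  rw [Real.zero_rpow hs.ne'] at h
  exact h.mono_left nhdsWithin_le_nhds

theorem tendsto_two_mul_nhdsGT_zero : Tendsto (fun x : ℝ ↦ 2 * x) (𝓝[>] 0) (𝓝[>] 0) := by
  refine tendsto_nhdsWithin_iff.2 ⟨?_, ?_⟩
  · simpa using ((tendsto_id (α := ℝ) (x := 𝓝 0)).const_mul 2).mono_left nhdsWithin_le_nhds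
  · filter_upwards [self_mem_nhdsWithin] with x (hx : 0 < x) using mul_pos two_pos hx

theorem leadingTerm_rpow (s : ℝ) : LeadingTerm (fun x ↦ x ^ s) 1 s := by
  refine tendsto_const_nhds.congr' ?_
  filter_upwards [self_mem_nhdsWithin] with x hx
  rw [div_self (Real.rpow_pos_of_pos hx s).ne']

theorem leadingTerm_zero_of_eventuallyEq (hk : k =ᶠ[𝓝[>] 0] 0) (s : ℝ) : LeadingTerm k 0 s :=
  tendsto_const_nhds.congr' (hk.mono fun x hx ↦ by simp only [hx, Pi.zero_apply, zero_div])

theorem LeadingTerm.congr' (hk : LeadingTerm k e s) (h : k' =ᶠ[𝓝[>] 0] k) : LeadingTerm k' e s :=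
  Tendsto.congr' (h.mono fun x hx ↦ by simp only [hx]) hk

theorem LeadingTerm.const_mul (hk : LeadingTerm k e s) (c : ℝ) :
    LeadingTerm (fun x ↦ c * k x) (c * e) s := by
  simpa only [LeadingTerm, mul_div_assoc] using Tendsto.const_mul c hk

theorem LeadingTerm.neg (hk : LeadingTerm k e s) : LeadingTerm (fun x ↦ -k x) (-e) s := by
  simpa using hk.const_mul (-1)

theorem LeadingTerm.abs (hk : LeadingTerm k e s) : LeadingTerm (fun x ↦ |k x|) |e| s := by
  refine (Tendsto.abs hk).congr' ?_
  filter_upwards [self_mem_nhdsWithin] with x hx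
  rw [abs_div, abs_of_pos (Real.rpow_pos_of_pos hx s)]

theorem LeadingTerm.id_mul (hk : LeadingTerm k e (s - 1)) :
    LeadingTerm (fun x ↦ x * k x) e s := by
  refine Tendsto.congr' ?_ hk
  filter_upwards [self_mem_nhdsWithin] with x hx
  rw [Real.rpow_sub_one (ne_of_gt hx)]
  field_simp

theorem LeadingTerm.comp_two_mul (hk : LeadingTerm k e s) :
    LeadingTerm (fun x ↦ k (2 * x)) (2 ^ s * e) s := by
  refine ((Tendsto.comp hk tendsto_two_mul_nhdsGT_zero).const_mul (2 ^ s)).congr' ?_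
  filter_upwards [self_mem_nhdsWithin] with x hx
  have hx₀ : 0 < x ^ s := Real.rpow_pos_of_pos hx s
  rw [Function.comp_apply, Real.mul_rpow zero_le_two (le_of_lt hx)]
  field_simp

theorem LeadingTerm.of_exponent_lt (hk : LeadingTerm k e s) (hps : p < s) :
    LeadingTerm k 0 p := by
  have h := Tendsto.mul hk (tendsto_rpow_nhdsGT_zero (sub_pos.2 hps))
  rw [mul_zero] at h
  refine h.congr' ?_
  filter_upwards [self_mem_nhdsWithin] with x hx
  have hx₀ : 0 < x ^ s := Real.rpow_pos_of_pos hx s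
  rw [Real.rpow_sub hx]
  field_simp

theorem LeadingTerm.exponent_lt (hk₀ : LeadingTerm k 0 p) (hk : LeadingTerm k e s) (he : e ≠ 0) :
    p < s := by
  by_contra! hsp
  rcases hsp.eq_or_lt with rfl | hsp
  · exact he (tendsto_nhds_unique hk hk₀)
  · exact he (tendsto_nhds_unique hk (hk₀.of_exponent_lt hsp))

theorem LeadingTerm.unique (hk : LeadingTerm k e s) (hk' : LeadingTerm k e' p) (he : e ≠ 0)
    (he' : e' ≠ 0) : e = e' ∧ s = p := by
  have hsp : s = p := by
    by_contra hne
    rcases lt_or_gt_of_ne hne with h | h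
    · exact (hk'.of_exponent_lt h).exponent_lt hk he |>.false
    · exact (hk.of_exponent_lt h).exponent_lt hk' he' |>.false
  subst hsp
  exact ⟨tendsto_nhds_unique hk hk', rfl⟩

theorem LeadingTerm.eventually_lt (hk : LeadingTerm k e s) (hk' : LeadingTerm k' e' s)
    (h : e < e') : ∀ᶠ x in 𝓝[>] (0 : ℝ), k x < k' x := by
  filter_upwards [Tendsto.eventually_lt hk hk' h, self_mem_nhdsWithin] with x hx hx₀
  exact (div_lt_div_iff_of_pos_right (Real.rpow_pos_of_pos hx₀ s)).1 hx

theorem LeadingTerm.eventually_lt_rpow (hk : LeadingTerm k e s) {c : ℝ} (hc : e < c) :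
    ∀ᶠ x in 𝓝[>] (0 : ℝ), k x < c * x ^ s :=
  hk.eventually_lt ((leadingTerm_rpow s).const_mul c) (by rwa [mul_one])

theorem LeadingTerm.eventually_rpow_lt (hk : LeadingTerm k e s) {c : ℝ} (hc : c < e) :
    ∀ᶠ x in 𝓝[>] (0 : ℝ), c * x ^ s < k x :=
  ((leadingTerm_rpow s).const_mul c).eventually_lt hk (by rwa [mul_one])

theorem LeadingTerm.eventually_pos (hk : LeadingTerm k e s) (he : 0 < e) :
    ∀ᶠ x in 𝓝[>] (0 : ℝ), 0 < k x := by
  simpa using hk.eventually_rpow_lt he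

theorem LeadingTerm.eventually_rpow_lt_or_neg (hk : LeadingTerm k e s) (he : e ≠ 0) :
    (∀ᶠ x in 𝓝[>] (0 : ℝ), |e| / 2 * x ^ s < k x) ∨
      ∀ᶠ x in 𝓝[>] (0 : ℝ), |e| / 2 * x ^ s < -k x := by
  rcases lt_or_gt_of_ne he with he | he
  · exact Or.inr (hk.neg.eventually_rpow_lt (by rw [abs_of_neg he]; linarith))
  · exact Or.inl (hk.eventually_rpow_lt (by rw [abs_of_pos he]; linarith))

end LeadingTerm

section Puiseux

variable {N : ℕ} {a e s x : ℝ} {k k₁ k₂ w : ℝ → ℝ}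

/-- The expansion `k = e x ^ s + …` as `x → 0⁺` may be differentiated twice, the derivatives of `k`
being `k₁` and `k₂`. -/
structure HasPowerExpansion (k k₁ k₂ : ℝ → ℝ) (e s : ℝ) : Prop where
  eventually_hasDerivAt : ∀ᶠ x in 𝓝[>] (0 : ℝ), HasDerivAt k (k₁ x) x
  eventually_hasDerivAt_deriv : ∀ᶠ x in 𝓝[>] (0 : ℝ), HasDerivAt k₁ (k₂ x) x
  eventually_continuousAt : ∀ᶠ x in 𝓝[>] (0 : ℝ), ContinuousAt k₂ x
  leadingTerm : LeadingTerm k e s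
  leadingTerm_deriv : LeadingTerm k₁ (s * e) (s - 1)
  leadingTerm_deriv_deriv : LeadingTerm k₂ ((s - 1) * (s * e)) (s - 1 - 1)

/-- The function `x ^ s w(x ^ (1/N))`. -/
noncomputable def puiseuxTerm (N : ℕ) (s : ℝ) (w : ℝ → ℝ) (x : ℝ) : ℝ :=
  x ^ s * w (x ^ ((N : ℝ)⁻¹))

/-- The coefficient function of the derivative of `x ^ s w(x ^ (1/N))`, which is again of this form,
with exponent `s - 1`. -/
noncomputable def puiseuxDeriv (N : ℕ) (s : ℝ) (w : ℝ → ℝ) (z : ℝ) : ℝ :=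
  s * w z + z * deriv w z * (N : ℝ)⁻¹

theorem puiseuxDeriv_zero (N : ℕ) (s : ℝ) (w : ℝ → ℝ) : puiseuxDeriv N s w 0 = s * w 0 := by
  simp [puiseuxDeriv]

theorem analyticAt_puiseuxDeriv {z : ℝ} (hw : AnalyticAt ℝ w z) (N : ℕ) (s : ℝ) :
    AnalyticAt ℝ (puiseuxDeriv N s w) z :=
  (analyticAt_const.mul hw).add ((analyticAt_id.mul hw.deriv).mul analyticAt_const)

theorem tendsto_rpow_inv_natCast_nhdsGT_zero (hN : 0 < N) :
    Tendsto (fun x : ℝ ↦ x ^ ((N : ℝ)⁻¹)) (𝓝[>] 0) (𝓝 0) :=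
  tendsto_rpow_nhdsGT_zero (by positivity)

theorem leadingTerm_puiseuxTerm (hN : 0 < N) (s : ℝ) (hw : ContinuousAt w 0) :
    LeadingTerm (puiseuxTerm N s w) (w 0) s := by
  refine (hw.tendsto.comp (tendsto_rpow_inv_natCast_nhdsGT_zero hN)).congr' ?_
  filter_upwards [self_mem_nhdsWithin] with x hx
  rw [puiseuxTerm, mul_div_cancel_left₀ _ (Real.rpow_pos_of_pos hx s).ne', Function.comp_apply]

theorem hasDerivAt_puiseuxTerm (s : ℝ) (hx : 0 < x) (hw : AnalyticAt ℝ w (x ^ ((N : ℝ)⁻¹))) :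
    HasDerivAt (puiseuxTerm N s w) (puiseuxTerm N (s - 1) (puiseuxDeriv N s w) x) x := by
  have pow_deriv (p : ℝ) : HasDerivAt (fun x : ℝ ↦ x ^ p) (p * x ^ (p - 1)) x :=
    Real.hasDerivAt_rpow_const (Or.inl hx.ne')
  refine ((pow_deriv s).mul
    (hw.differentiableAt.hasDerivAt.comp x (pow_deriv (N : ℝ)⁻¹))).congr_deriv ?_
  simp only [Function.comp_apply, puiseuxTerm, puiseuxDeriv]
  rw [Real.rpow_sub_one hx.ne', Real.rpow_sub_one hx.ne']
  field_simp

theorem eventually_analyticAt_comp_rpow_inv (hN : 0 < N) (hw : AnalyticAt ℝ w 0) :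
    ∀ᶠ x in 𝓝[>] (0 : ℝ), AnalyticAt ℝ w (x ^ ((N : ℝ)⁻¹)) :=
  (tendsto_rpow_inv_natCast_nhdsGT_zero hN).eventually hw.eventually_analyticAt

theorem eventually_hasDerivAt_puiseuxTerm (hN : 0 < N) (s : ℝ) (hw : AnalyticAt ℝ w 0) :
    ∀ᶠ x in 𝓝[>] (0 : ℝ),
      HasDerivAt (puiseuxTerm N s w) (puiseuxTerm N (s - 1) (puiseuxDeriv N s w) x) x := by
  filter_upwards [eventually_analyticAt_comp_rpow_inv hN hw, self_mem_nhdsWithin] with x hwx hx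
  exact hasDerivAt_puiseuxTerm s hx hwx

theorem hasPowerExpansion_puiseuxTerm (hN : 0 < N) (s : ℝ) (hw : AnalyticAt ℝ w 0) :
    HasPowerExpansion (puiseuxTerm N s w) (puiseuxTerm N (s - 1) (puiseuxDeriv N s w))
      (puiseuxTerm N (s - 1 - 1) (puiseuxDeriv N (s - 1) (puiseuxDeriv N s w))) (w 0) s := by
  have hw₁ := analyticAt_puiseuxDeriv hw N s
  have hw₂ := analyticAt_puiseuxDeriv hw₁ N (s - 1)
  refine ⟨eventually_hasDerivAt_puiseuxTerm hN s hw, eventually_hasDerivAt_puiseuxTerm hN _ hw₁,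
    (eventually_hasDerivAt_puiseuxTerm hN _ hw₂).mono fun _ h ↦ h.continuousAt,
    leadingTerm_puiseuxTerm hN s hw.continuousAt, ?_, ?_⟩
  · rw [← puiseuxDeriv_zero N]
    exact leadingTerm_puiseuxTerm hN _ hw₁.continuousAt
  · rw [← puiseuxDeriv_zero N s, ← puiseuxDeriv_zero N (s - 1)]
    exact leadingTerm_puiseuxTerm hN _ hw₂.continuousAt

theorem eventually_eventuallyEq_nhds_of_nhdsGT {k' : ℝ → ℝ} (h : k' =ᶠ[𝓝[>] (0 : ℝ)] k) :
    ∀ᶠ x in 𝓝[>] (0 : ℝ), k' =ᶠ[𝓝 x] k := by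
  filter_upwards [eventually_eventually_nhdsWithin.2 h, self_mem_nhdsWithin] with x hx hx₀
  rwa [isOpen_Ioi.nhdsWithin_eq hx₀] at hx

theorem HasPowerExpansion.congr' {k' : ℝ → ℝ} (hk : HasPowerExpansion k k₁ k₂ e s)
    (h : k' =ᶠ[𝓝[>] 0] k) : HasPowerExpansion k' k₁ k₂ e s where
  __ := hk
  eventually_hasDerivAt := by
    filter_upwards [hk.eventually_hasDerivAt, eventually_eventuallyEq_nhds_of_nhdsGT h]
      with x hx hx'
    exact hx.congr_of_eventuallyEq hx'
  leadingTerm := hk.leadingTerm.congr' h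

theorem PuiseuxOn.eventuallyEq_zero_or_puiseuxTerm (hN : 0 < N) (ha : 0 < a)
    (hk : PuiseuxOn N a k) :
    k =ᶠ[𝓝[>] 0] 0 ∨ ∃ s w, AnalyticAt ℝ w 0 ∧ w 0 ≠ 0 ∧ k =ᶠ[𝓝[>] 0] puiseuxTerm N s w := by
  obtain ⟨k', I, -, hI, analytic, k_eq⟩ := hk
  have hk' : AnalyticAt ℝ k' 0 := analytic 0 (hI ⟨le_rfl, by positivity⟩)
  have root_tendsto := tendsto_rpow_inv_natCast_nhdsGT_zero hN
  by_cases hz : ∀ᶠ z in 𝓝 (0 : ℝ), k' z = 0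
  · left
    filter_upwards [root_tendsto.eventually hz, Ioo_mem_nhdsGT ha] with x hx hxa
    rw [k_eq x (Ioo_subset_Icc_self hxa), hx, Pi.zero_apply]
  · obtain ⟨n, w, hw, hw₀, k'_eq⟩ := hk'.exists_eventuallyEq_pow_smul_nonzero_iff.2 hz
    refine Or.inr ⟨n * (N : ℝ)⁻¹, w, hw, hw₀, ?_⟩
    filter_upwards [root_tendsto.eventually k'_eq, Ioo_mem_nhdsGT ha] with x hx hxa
    rw [k_eq x (Ioo_subset_Icc_self hxa), hx, sub_zero, smul_eq_mul, puiseuxTerm,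
      ← Real.rpow_natCast, ← Real.rpow_mul hxa.1.le, mul_comm (n : ℝ)]

theorem PuiseuxOn.eventuallyEq_zero_or_hasPowerExpansion (hN : 0 < N) (ha : 0 < a)
    (hk : PuiseuxOn N a k) :
    k =ᶠ[𝓝[>] 0] 0 ∨ ∃ k₁ k₂ e s, e ≠ 0 ∧ HasPowerExpansion k k₁ k₂ e s := by
  rcases hk.eventuallyEq_zero_or_puiseuxTerm hN ha with hz | ⟨s, w, hw, hw₀, k_eq⟩
  · exact Or.inl hz
  · exact Or.inr ⟨_, _, _, s, hw₀, (hasPowerExpansion_puiseuxTerm hN s hw).congr' k_eq⟩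

theorem PuiseuxOn.exists_hasPowerExpansion (hN : 0 < N) (ha : 0 < a) (hk : PuiseuxOn N a k)
    (he : e ≠ 0) (hlead : LeadingTerm k e s) : ∃ k₁ k₂, HasPowerExpansion k k₁ k₂ e s := by
  rcases hk.eventuallyEq_zero_or_hasPowerExpansion hN ha with hz | ⟨k₁, k₂, e', s', he', hexp⟩
  · exact absurd (tendsto_nhds_unique hlead (leadingTerm_zero_of_eventuallyEq hz s)) he
  · obtain ⟨rfl, rfl⟩ := hlead.unique hexp.leadingTerm he he'
    exact ⟨k₁, k₂, hexp⟩

end Puiseux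

section DyadicScale

variable {N : ℕ} {a e s : ℝ} {l l₁ l₂ : ℝ → ℝ}

/-- The function `l` on `(0, r]`, with derivatives `l₁` and `l₂`, has magnitude `lam X` on the
dyadic interval `[X, 2X]`: `l` and `x l'` are bounded by a multiple of `lam X`, while `x² l''`
has constant sign and is bounded below by a multiple of it. -/
structure HasDyadicScale (C c r : ℝ) (l l₁ l₂ lam : ℝ → ℝ) : Prop where
  hasDerivAt : ∀ x ∈ Ioc 0 r, HasDerivAt l (l₁ x) x
  hasDerivAt_deriv : ∀ x ∈ Ioc 0 r, HasDerivAt l₁ (l₂ x) x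
  continuousOn_deriv_deriv : ContinuousOn l₂ (Ioc 0 r)
  abs_le_self : ∀ x ∈ Ioc 0 r, |l x| ≤ x
  abs_deriv_le_one : ∀ x ∈ Ioc 0 r, |l₁ x| ≤ 1
  scale_nonneg : ∀ X, 0 < X → 0 ≤ lam X
  abs_le : ∀ X x, 0 < X → x ∈ Icc X (2 * X) → x ≤ r → |l x| ≤ C * lam X
  abs_deriv_le : ∀ X x, 0 < X → x ∈ Icc X (2 * X) → x ≤ r → |l₁ x| * X ≤ C * lam X
  le_deriv_deriv_or_neg :
    (∀ X x, 0 < X → x ∈ Icc X (2 * X) → x ≤ r → c * lam X ≤ l₂ x * X ^ 2) ∨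
      ∀ X x, 0 < X → x ∈ Icc X (2 * X) → x ≤ r → c * lam X ≤ -l₂ x * X ^ 2

theorem eventually_hasDyadicScale_of_eventuallyEq_zero (hl : l =ᶠ[𝓝[>] 0] 0) :
    ∀ᶠ r in 𝓝[>] (0 : ℝ), HasDyadicScale 1 1 r l 0 0 0 := by
  filter_upwards [eventually_forall_mem_Ioc hl,
    eventually_forall_mem_Ioc (eventually_eventuallyEq_nhds_of_nhdsGT hl)] with r l_eq l_eq_nhds
  have l_zero {X x : ℝ} (hX : 0 < X) (hx : x ∈ Icc X (2 * X)) (hxr : x ≤ r) : l x = 0 :=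
    l_eq x ⟨hX.trans_le hx.1, hxr⟩
  exact
    { hasDerivAt := fun x hx ↦ (hasDerivAt_const x 0).congr_of_eventuallyEq (l_eq_nhds x hx)
      hasDerivAt_deriv := fun x _ ↦ hasDerivAt_const x 0
      continuousOn_deriv_deriv := continuousOn_const
      abs_le_self := fun x hx ↦ by simpa [l_eq x hx] using hx.1.le
      abs_deriv_le_one := by simp
      scale_nonneg := by simp
      abs_le := fun X x hX hx hxr ↦ by simp [l_zero hX hx hxr]
      abs_deriv_le := by simp
      le_deriv_deriv_or_neg := by simp }

theorem HasPowerExpansion.eventually_abs_le_mul_rpow (hexp : HasPowerExpansion l l₁ l₂ e s)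
    (he : e ≠ 0) (hs : 1 < s) :
    ∀ᶠ x in 𝓝[>] (0 : ℝ), |l x| ≤ 2 * s * |e| * x ^ s ∧ |l₁ x| * x ≤ 2 * s * |e| * x ^ s := by
  have he₀ : 0 < |e| := abs_pos.2 he
  filter_upwards [hexp.leadingTerm.abs.eventually_lt_rpow (c := 2 * s * |e|) (by nlinarith),
    hexp.leadingTerm_deriv.id_mul.abs.eventually_lt_rpow (c := 2 * s * |e|)
      (by rw [abs_mul, abs_of_pos (by linarith)]; nlinarith), self_mem_nhdsWithin]
    with x hx hx₁ (hx₀ : 0 < x)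
  rw [abs_mul, abs_of_pos hx₀, mul_comm x] at hx₁
  exact ⟨hx.le, hx₁.le⟩

theorem HasPowerExpansion.eventually_rpow_le_deriv_deriv_or_neg
    (hexp : HasPowerExpansion l l₁ l₂ e s) (he : e ≠ 0) (hs : 1 < s) :
    ∀ᶠ r in 𝓝[>] (0 : ℝ),
      (∀ x ∈ Ioc 0 r, (s - 1) * s * |e| / 2 * x ^ s ≤ l₂ x * x ^ 2) ∨
        ∀ x ∈ Ioc 0 r, (s - 1) * s * |e| / 2 * x ^ s ≤ -l₂ x * x ^ 2 := by
  have hs₀ : 0 < s := one_pos.trans hs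
  have hs₁ : 0 < s - 1 := sub_pos.2 hs
  have abs_coeff : |(s - 1) * (s * e)| = (s - 1) * s * |e| := by
    rw [abs_mul, abs_mul, abs_of_pos hs₁, abs_of_pos hs₀, mul_assoc]
  have hlead := hexp.leadingTerm_deriv_deriv.id_mul.id_mul
  rw [← abs_coeff]
  rcases hlead.eventually_rpow_lt_or_neg (by positivity) with h | h
  · filter_upwards [eventually_forall_mem_Ioc h] with r hr
    exact Or.inl fun x hx ↦ by linear_combination hr x hx
  · filter_upwards [eventually_forall_mem_Ioc h] with r hr
    exact Or.inr fun x hx ↦ by linear_combination hr x hx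

theorem mul_rpow_le_mul_sq_of_dyadic {K X x w : ℝ} (hK : 0 ≤ K) (hs : 0 ≤ s) (hX : 0 < X)
    (hx : x ∈ Icc X (2 * X)) (h : K * x ^ s ≤ w * x ^ 2) : K / 4 * X ^ s ≤ w * X ^ 2 := by
  have hx₀ : 0 < x := hX.trans_le hx.1
  have hw : 0 ≤ w := nonneg_of_mul_nonneg_left ((by positivity : 0 ≤ K * x ^ s).trans h)
    (by positivity)
  have : K * X ^ s ≤ 4 * (w * X ^ 2) := calc
    K * X ^ s ≤ K * x ^ s := by
      gcongr
      exact hx.1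
    _ ≤ w * x ^ 2 := h
    _ ≤ w * (2 * X) ^ 2 := by
      gcongr
      exact hx.2
    _ = 4 * (w * X ^ 2) := by ring
  linarith

theorem HasPowerExpansion.eventually_hasDyadicScale (hexp : HasPowerExpansion l l₁ l₂ e s)
    (he : e ≠ 0) (hs : 1 < s) : ∀ᶠ r in 𝓝[>] (0 : ℝ),
      HasDyadicScale (2 * s * 2 ^ |s|) ((s - 1) * s / 8) r l l₁ l₂ fun X ↦ |e| * X ^ s := by
  have hs₀ : 0 < s := one_pos.trans hs
  have hs₁ : 0 < s - 1 := sub_pos.2 hs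
  filter_upwards [eventually_forall_mem_Ioc hexp.eventually_hasDerivAt,
    eventually_forall_mem_Ioc hexp.eventually_hasDerivAt_deriv,
    eventually_forall_mem_Ioc hexp.eventually_continuousAt,
    eventually_forall_mem_Ioc
      ((hexp.leadingTerm.of_exponent_lt hs).abs.eventually_lt_rpow (c := 1) (by simp)),
    eventually_forall_mem_Ioc
      ((hexp.leadingTerm_deriv.of_exponent_lt hs₁).abs.eventually_lt_rpow (c := 1) (by simp)),
    eventually_forall_mem_Ioc (hexp.eventually_abs_le_mul_rpow he hs),
    hexp.eventually_rpow_le_deriv_deriv_or_neg he hs]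
    with r deriv deriv₁ cont le_self deriv_le le_rpow convex
  have upper {X x : ℝ} (hX : 0 < X) (hx : x ∈ Icc X (2 * X)) :
      2 * s * |e| * x ^ s ≤ 2 * s * 2 ^ |s| * (|e| * X ^ s) := by
    have := rpow_le_rpow_abs_mul s one_le_two hX (by linarith [hx.1]) hx.2
    calc 2 * s * |e| * x ^ s ≤ 2 * s * |e| * (2 ^ |s| * X ^ s) := by gcongr
      _ = _ := by ring
  have lower {X x w : ℝ} (hX : 0 < X) (hx : x ∈ Icc X (2 * X))
      (h : (s - 1) * s * |e| / 2 * x ^ s ≤ w * x ^ 2) :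
      (s - 1) * s / 8 * (|e| * X ^ s) ≤ w * X ^ 2 := by
    linear_combination mul_rpow_le_mul_sq_of_dyadic (by positivity) hs₀.le hX hx h
  exact
    { hasDerivAt := deriv
      hasDerivAt_deriv := deriv₁
      continuousOn_deriv_deriv := fun x hx ↦ (cont x hx).continuousWithinAt
      abs_le_self := fun x hx ↦ by simpa using (le_self x hx).le
      abs_deriv_le_one := fun x hx ↦ by simpa using (deriv_le x hx).le
      scale_nonneg := fun X hX ↦ by positivity
      abs_le := fun X x hX hx hxr ↦ (le_rpow x ⟨hX.trans_le hx.1, hxr⟩).1.trans (upper hX hx)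
      abs_deriv_le := fun X x hX hx hxr ↦
        (mul_le_mul_of_nonneg_left hx.1 (abs_nonneg _)).trans
          ((le_rpow x ⟨hX.trans_le hx.1, hxr⟩).2.trans (upper hX hx))
      le_deriv_deriv_or_neg := convex.imp
        (fun h X x hX hx hxr ↦ lower hX hx (h x ⟨hX.trans_le hx.1, hxr⟩))
        fun h X x hX hx hxr ↦ lower hX hx (h x ⟨hX.trans_le hx.1, hxr⟩) }

theorem PuiseuxOn.exists_hasDyadicScale (hN : 0 < N) (ha : 0 < a) (hl : PuiseuxOn N a l)
    (hl₀ : LeadingTerm l 0 1) : ∃ l₁ l₂ lam C c, 0 < C ∧ 0 < c ∧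
      ∀ᶠ r in 𝓝[>] (0 : ℝ), HasDyadicScale C c r l l₁ l₂ lam := by
  rcases hl.eventuallyEq_zero_or_hasPowerExpansion hN ha with hz | ⟨l₁, l₂, e, s, he, hexp⟩
  · exact ⟨0, 0, 0, 1, 1, one_pos, one_pos, eventually_hasDyadicScale_of_eventuallyEq_zero hz⟩
  · have hs : 1 < s := hl₀.exponent_lt hexp.leadingTerm he
    have : 0 < s - 1 := sub_pos.2 hs
    exact ⟨l₁, l₂, _, _, _, by positivity, by positivity, hexp.eventually_hasDyadicScale he hs⟩

end DyadicScale

section SliverGeometry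

variable {N : ℕ} {a κ H M : ℝ} {g g₁ G : ℝ → ℝ}

/-- A nonnegative, increasing curve on `(0, r]` which is doubling with constant `κ`. -/
structure IsDoublingCurve (κ r : ℝ) (g : ℝ → ℝ) : Prop where
  continuousOn : ContinuousOn g (Ioc 0 r)
  monotoneOn : MonotoneOn g (Ioc 0 r)
  nonneg : ∀ x ∈ Ioc 0 r, 0 ≤ g x
  doubling : ∀ x ∈ Ioc 0 r, g (2 * x) ≤ κ * g x

/-- The curves `g` and `G` bound a sliver over `(0, r]` below the line of slope `K`, all of whose
dyadic strips are thick. -/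
structure IsRegularSliver (κ K r : ℝ) (g G : ℝ → ℝ) : Prop where
  lower : IsDoublingCurve κ r g
  upper : IsDoublingCurve κ r G
  upper_le : ∀ x ∈ Ioc 0 r, G x ≤ K * x
  separated : ∀ x ∈ Ioc 0 r, 2 * κ * g (2 * x) < G x

theorem eventually_isDoublingCurve (hderiv : ∀ᶠ x in 𝓝[>] (0 : ℝ), HasDerivAt g (g₁ x) x)
    (hg₁ : ∀ᶠ x in 𝓝[>] (0 : ℝ), 0 ≤ g₁ x) (hg : ∀ᶠ x in 𝓝[>] (0 : ℝ), 0 ≤ g x)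
    (hκ : ∀ᶠ x in 𝓝[>] (0 : ℝ), g (2 * x) ≤ κ * g x) :
    ∀ᶠ r in 𝓝[>] (0 : ℝ), IsDoublingCurve κ r g := by
  filter_upwards [eventually_forall_mem_Ioc hderiv, eventually_forall_mem_Ioc hg₁,
    eventually_forall_mem_Ioc hg, eventually_forall_mem_Ioc hκ] with r hderiv hg₁ hg hκ
  have cont : ContinuousOn g (Ioc 0 r) := fun x hx ↦ (hderiv x hx).continuousAt.continuousWithinAt
  refine ⟨cont, monotoneOn_of_deriv_nonneg (convex_Ioc 0 r) cont
    (fun x hx ↦ (hderiv x (interior_subset hx)).differentiableAt.differentiableWithinAt)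
    fun x hx ↦ ?_, hg, hκ⟩
  rw [(hderiv x (interior_subset hx)).deriv]
  exact hg₁ x (interior_subset hx)

theorem PuiseuxOn.eventually_isDoublingCurve (hN : 0 < N) (ha : 0 < a) (hg : PuiseuxOn N a g)
    {h m : ℝ} (hh : 0 < h) (hm : 0 < m) (hlead : LeadingTerm g h m) (hκ : 2 ^ m < κ) :
    ∀ᶠ r in 𝓝[>] (0 : ℝ), IsDoublingCurve κ r g := by
  obtain ⟨g₁, g₂, hexp⟩ := hg.exists_hasPowerExpansion hN ha hh.ne' hlead
  exact _root_.eventually_isDoublingCurve hexp.eventually_hasDerivAt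
    ((hexp.leadingTerm_deriv.eventually_pos (mul_pos hm hh)).mono fun _ ↦ le_of_lt)
    ((hlead.eventually_pos hh).mono fun _ ↦ le_of_lt)
    ((hlead.comp_two_mul.eventually_lt (hlead.const_mul κ)
      (mul_lt_mul_of_pos_right hκ hh)).mono fun _ ↦ le_of_lt)

theorem eventually_isDoublingCurve_of_eventuallyEq_zero (hg : g =ᶠ[𝓝[>] 0] 0) (κ : ℝ) :
    ∀ᶠ r in 𝓝[>] (0 : ℝ), IsDoublingCurve κ r g := by
  refine eventually_isDoublingCurve (g₁ := 0) ?_ (Eventually.of_forall fun _ ↦ le_rfl)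
    (hg.mono fun x hx ↦ hx.ge) ?_
  · filter_upwards [eventually_eventuallyEq_nhds_of_nhdsGT hg] with x hx
    exact (hasDerivAt_const x 0).congr_of_eventuallyEq hx
  · filter_upwards [hg, tendsto_two_mul_nhdsGT_zero.eventually hg] with x hx hx'
    rw [hx, hx']
    simp

theorem LeadingTerm.eventually_le_mul_self {e s : ℝ} (hG : LeadingTerm G e s) (he : 0 ≤ e)
    (hs : 1 ≤ s) : ∀ᶠ x in 𝓝[>] (0 : ℝ), G x ≤ (e + 1) * x := by
  filter_upwards [hG.eventually_lt_rpow (lt_add_one e), Ioo_mem_nhdsGT one_pos] with x hx hx₁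
  refine hx.le.trans ?_
  gcongr
  simpa using Real.rpow_le_rpow_of_exponent_ge hx₁.1 hx₁.2.le hs

theorem eventually_isRegularSliver_of_isDoublingCurve (hH : 0 < H) (hM : 1 ≤ M)
    (hGlead : LeadingTerm G H M) (hglead : LeadingTerm g 0 M)
    (hg : ∀ᶠ r in 𝓝[>] (0 : ℝ), IsDoublingCurve κ r g)
    (hG : ∀ᶠ r in 𝓝[>] (0 : ℝ), IsDoublingCurve κ r G) :
    ∀ᶠ r in 𝓝[>] (0 : ℝ), IsRegularSliver κ (H + 1) r g G := by
  have separated : ∀ᶠ x in 𝓝[>] (0 : ℝ), 2 * κ * g (2 * x) < G x :=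
    (hglead.comp_two_mul.const_mul (2 * κ)).eventually_lt hGlead (by simpa using hH)
  filter_upwards [hg, hG, eventually_forall_mem_Ioc (hGlead.eventually_le_mul_self hH.le hM),
    eventually_forall_mem_Ioc separated] with r hg hG upper_le separated
  exact ⟨hg, hG, upper_le, separated⟩

theorem exists_eventually_isRegularSliver (hN : 0 < N) (ha : 0 < a) (hg : PuiseuxOn N a g)
    (hG : PuiseuxOn N a G) (hH : 0 < H) (hM : 1 ≤ M) (hGlead : LeadingTerm G H M)
    (hglead : g =ᶠ[𝓝[>] 0] 0 ∨ ∃ h m : ℝ, 0 < h ∧ M < m ∧ LeadingTerm g h m) :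
    ∃ κ, 1 ≤ κ ∧ ∀ᶠ r in 𝓝[>] (0 : ℝ), IsRegularSliver κ (H + 1) r g G := by
  have hM₀ : 0 < M := one_pos.trans_le hM
  have one_le (s : ℝ) : (1 : ℝ) ≤ 2 ^ |s| + 1 := by
    linarith [Real.one_le_rpow one_le_two (abs_nonneg s)]
  rcases hglead with hg₀ | ⟨h, m, hh, hMm, hlead⟩
  · refine ⟨2 ^ |M| + 1, one_le M, eventually_isRegularSliver_of_isDoublingCurve hH hM hGlead
      (leadingTerm_zero_of_eventuallyEq hg₀ M)
      (eventually_isDoublingCurve_of_eventuallyEq_zero hg₀ _)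
      (hG.eventually_isDoublingCurve hN ha hH hM₀ hGlead ?_)⟩
    rw [abs_of_pos hM₀]
    exact lt_add_one _
  · have hm : 0 < m := hM₀.trans hMm
    refine ⟨2 ^ |m| + 1, one_le m, eventually_isRegularSliver_of_isDoublingCurve hH hM hGlead
      (hlead.of_exponent_lt hMm) (hg.eventually_isDoublingCurve hN ha hh hm hlead ?_)
      (hG.eventually_isDoublingCurve hN ha hH hM₀ hGlead ?_)⟩
    · rw [abs_of_pos hm]
      exact lt_add_one _
    · rw [abs_of_pos hm]
      exact (Real.rpow_le_rpow_of_exponent_le one_le_two hMm.le).trans_lt (lt_add_one _)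

end SliverGeometry

section MonomialAmplitude

variable {C C' a a' b b' ε d α : ℝ} {β : ℕ} {D : Set (ℝ × ℝ)} {F Φ Ψ : ℝ × ℝ → ℝ} {q : ℝ × ℝ}

theorem hasDerivAt_fst_slice (hF : DifferentiableAt ℝ F q) :
    HasDerivAt (fun x ↦ F (x, q.2)) (fderiv ℝ F q (1, 0)) q.1 :=
  hF.hasFDerivAt.comp_hasDerivAt q.1 ((hasDerivAt_id q.1).prodMk (hasDerivAt_const q.1 q.2))

theorem hasDerivAt_snd_slice (hF : DifferentiableAt ℝ F q) :
    HasDerivAt (fun y ↦ F (q.1, y)) (fderiv ℝ F q (0, 1)) q.2 :=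
  hF.hasFDerivAt.comp_hasDerivAt q.2 ((hasDerivAt_const q.2 q.1).prodMk (hasDerivAt_id q.2))

/-- On `D`, the positive function `Φ` is comparable to `x ^ a y ^ b`, and its logarithmic
derivatives are of size `1/x` and `1/y`. -/
structure IsMonomialAmplitude (C a b : ℝ) (D : Set (ℝ × ℝ)) (Φ : ℝ × ℝ → ℝ) : Prop where
  one_le : 1 ≤ C
  contDiffOn : ContDiffOn ℝ 1 Φ D
  pos : ∀ q ∈ D, 0 < Φ q
  le_mul : ∀ q ∈ D, Φ q ≤ C * (q.1 ^ a * q.2 ^ b)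
  mul_le : ∀ q ∈ D, q.1 ^ a * q.2 ^ b ≤ C * Φ q
  abs_fst_le : ∀ q ∈ D, |fderiv ℝ Φ q (1, 0)| ≤ C * Φ q / q.1
  abs_snd_le : ∀ q ∈ D, |fderiv ℝ Φ q (0, 1)| ≤ C * Φ q / q.2

namespace IsMonomialAmplitude

theorem differentiableAt (hΦ : IsMonomialAmplitude C a b D Φ) (hD : IsOpen D) (hq : q ∈ D) :
    DifferentiableAt ℝ Φ q :=
  (hΦ.contDiffOn.contDiffAt (hD.mem_nhds hq)).differentiableAt one_ne_zero

theorem one (hpos : ∀ q ∈ D, 0 < q.1 ∧ 0 < q.2) : IsMonomialAmplitude 1 0 0 D 1 where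
  one_le := le_rfl
  contDiffOn := contDiffOn_const
  pos _ _ := one_pos
  le_mul _ _ := by simp
  mul_le _ _ := by simp
  abs_fst_le q hq := by simpa using (hpos q hq).1.le
  abs_snd_le q hq := by simpa using (hpos q hq).2.le

theorem abs_fderiv_mul_le (hD : IsOpen D) (hΦ : IsMonomialAmplitude C a b D Φ)
    (hΨ : IsMonomialAmplitude C' a' b' D Ψ) (hq : q ∈ D) {v : ℝ × ℝ} {z : ℝ} (hz : 0 < z)
    (hΦv : |fderiv ℝ Φ q v| ≤ C * Φ q / z) (hΨv : |fderiv ℝ Ψ q v| ≤ C' * Ψ q / z) :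
    |fderiv ℝ (Φ * Ψ) q v| ≤ 2 * C * C' * (Φ * Ψ) q / z := by
  have hΦq := hΦ.pos q hq
  have hΨq := hΨ.pos q hq
  rw [fderiv_mul (hΦ.differentiableAt hD hq) (hΨ.differentiableAt hD hq)]
  calc |Φ q * fderiv ℝ Ψ q v + Ψ q * fderiv ℝ Φ q v|
      ≤ Φ q * |fderiv ℝ Ψ q v| + Ψ q * |fderiv ℝ Φ q v| := by
        refine (abs_add_le _ _).trans_eq ?_
        rw [abs_mul, abs_mul, abs_of_pos hΦq, abs_of_pos hΨq]
    _ ≤ Φ q * (C' * Ψ q / z) + Ψ q * (C * Φ q / z) := by gcongr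
    _ = (C + C') * (Φ q * Ψ q) / z := by ring
    _ ≤ 2 * C * C' * (Φ q * Ψ q) / z := by
        gcongr
        nlinarith [hΦ.one_le, hΨ.one_le]

theorem mul (hD : IsOpen D) (hpos : ∀ q ∈ D, 0 < q.1 ∧ 0 < q.2)
    (hΦ : IsMonomialAmplitude C a b D Φ) (hΨ : IsMonomialAmplitude C' a' b' D Ψ) :
    IsMonomialAmplitude (2 * C * C') (a + a') (b + b') D (Φ * Ψ) := by
  have hC := hΦ.one_le
  have hC' := hΨ.one_le
  have hCC' : C * C' ≤ 2 * C * C' := by nlinarith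
  have rpow_add {q : ℝ × ℝ} (hq : q ∈ D) : q.1 ^ (a + a') * q.2 ^ (b + b') =
      (q.1 ^ a * q.2 ^ b) * (q.1 ^ a' * q.2 ^ b') := by
    rw [Real.rpow_add (hpos q hq).1, Real.rpow_add (hpos q hq).2, mul_mul_mul_comm]
  refine ⟨by nlinarith, hΦ.contDiffOn.mul hΨ.contDiffOn,
    fun q hq ↦ mul_pos (hΦ.pos q hq) (hΨ.pos q hq), fun q hq ↦ ?_, fun q hq ↦ ?_,
    fun q hq ↦ hΦ.abs_fderiv_mul_le hD hΨ hq (hpos q hq).1 (hΦ.abs_fst_le q hq)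
      (hΨ.abs_fst_le q hq),
    fun q hq ↦ hΦ.abs_fderiv_mul_le hD hΨ hq (hpos q hq).2 (hΦ.abs_snd_le q hq)
      (hΨ.abs_snd_le q hq)⟩
  all_goals
    obtain ⟨hx, hy⟩ := hpos q hq
    have hΦq := hΦ.pos q hq
    have hΨq := hΨ.pos q hq
    rw [rpow_add hq, Pi.mul_apply]
    refine le_trans ?_ (mul_le_mul_of_nonneg_right hCC' (by positivity))
    rw [mul_mul_mul_comm C C']
  · exact mul_le_mul (hΦ.le_mul q hq) (hΨ.le_mul q hq) hΨq.le (by positivity)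
  · exact mul_le_mul (hΦ.mul_le q hq) (hΨ.mul_le q hq) (by positivity) (by positivity)

theorem abs_fderiv_rpow_le (hD : IsOpen D) (hΦ : IsMonomialAmplitude C a b D Φ) (γ : ℝ)
    (hq : q ∈ D) {v : ℝ × ℝ} {z : ℝ} (hΦv : |fderiv ℝ Φ q v| ≤ C * Φ q / z) :
    |fderiv ℝ (fun q ↦ Φ q ^ γ) q v| ≤ |γ| * C * Φ q ^ γ / z := by
  have hΦq := hΦ.pos q hq
  have hΦq' : 0 < Φ q ^ γ / Φ q := by positivity
  rw [((hΦ.differentiableAt hD hq).hasFDerivAt.rpow_const (Or.inl hΦq.ne')).fderiv]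
  calc |γ * Φ q ^ (γ - 1) * fderiv ℝ Φ q v|
      = |γ| * (Φ q ^ γ / Φ q) * |fderiv ℝ Φ q v| := by
        rw [Real.rpow_sub_one hΦq.ne', abs_mul, abs_mul, abs_of_pos hΦq']
    _ ≤ |γ| * (Φ q ^ γ / Φ q) * (C * Φ q / z) := by gcongr
    _ = |γ| * C * Φ q ^ γ / z := by field_simp

theorem rpow (hD : IsOpen D) (hpos : ∀ q ∈ D, 0 < q.1 ∧ 0 < q.2)
    (hΦ : IsMonomialAmplitude C a b D Φ) (γ : ℝ) :
    IsMonomialAmplitude ((1 + |γ|) * C * C ^ |γ|) (a * γ) (b * γ) D (fun q ↦ Φ q ^ γ) := by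
  have hC := hΦ.one_le
  have hC₀ : 0 < C := one_pos.trans_le hC
  have hCγ : 1 ≤ C ^ |γ| := Real.one_le_rpow hC (abs_nonneg γ)
  have hγ : 1 ≤ (1 + |γ|) * C := by nlinarith [abs_nonneg γ]
  have hγ' : |γ| * C ≤ (1 + |γ|) * C * C ^ |γ| := by nlinarith [abs_nonneg γ]
  have enlarge {w z : ℝ} (hw : 0 ≤ w) (hz : 0 ≤ z) :
      |γ| * C * w / z ≤ (1 + |γ|) * C * C ^ |γ| * w / z := by gcongr
  have rpow_mul {q : ℝ × ℝ} (hq : q ∈ D) :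
      q.1 ^ (a * γ) * q.2 ^ (b * γ) = (q.1 ^ a * q.2 ^ b) ^ γ := by
    obtain ⟨hx, hy⟩ := hpos q hq
    rw [Real.rpow_mul hx.le, Real.rpow_mul hy.le, Real.mul_rpow (by positivity) (by positivity)]
  have pos (q : ℝ × ℝ) (hq : q ∈ D) : 0 < Φ q ^ γ := Real.rpow_pos_of_pos (hΦ.pos q hq) γ
  refine ⟨by nlinarith, hΦ.contDiffOn.rpow_const_of_ne fun q hq ↦ (hΦ.pos q hq).ne', pos,
    fun q hq ↦ ?_, fun q hq ↦ ?_,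
    fun q hq ↦ (hΦ.abs_fderiv_rpow_le hD γ hq (hΦ.abs_fst_le q hq)).trans
      (enlarge (pos q hq).le (hpos q hq).1.le),
    fun q hq ↦ (hΦ.abs_fderiv_rpow_le hD γ hq (hΦ.abs_snd_le q hq)).trans
      (enlarge (pos q hq).le (hpos q hq).2.le)⟩
  all_goals
    obtain ⟨hx, hy⟩ := hpos q hq
    have hΦq := hΦ.pos q hq
    have lower := hΦ.mul_le q hq
    have upper := hΦ.le_mul q hq
    rw [rpow_mul hq]
    refine (rpow_le_rpow_abs_mul γ hC (by positivity) ?_ ?_).trans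
      (mul_le_mul_of_nonneg_right (le_mul_of_one_le_left (by positivity) hγ) (by positivity))
  · rwa [div_le_iff₀' hC₀]
  · exact upper
  · rwa [div_le_iff₀' hC₀]
  · exact lower

theorem exists_prod (hD : IsOpen D) (hpos : ∀ q ∈ D, 0 < q.1 ∧ 0 < q.2) {ι : Type*}
    {Φ : ι → ℝ × ℝ → ℝ} {s : Finset ι}
    (hΦ : ∀ i ∈ s, ∃ C a b, IsMonomialAmplitude C a b D (Φ i)) :
    ∃ C a b, IsMonomialAmplitude C a b D (∏ i ∈ s, Φ i) :=
  Finset.prod_induction Φ (fun Ψ ↦ ∃ C a b, IsMonomialAmplitude C a b D Ψ)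
    (fun _ _ ⟨_, _, _, h⟩ ⟨_, _, _, h'⟩ ↦ ⟨_, _, _, h.mul hD hpos h'⟩) ⟨_, _, _, one hpos⟩ hΦ

end IsMonomialAmplitude

theorem MonomialLike.abs_sub_le (hF : MonomialLike F D ε d α β) (hq : q ∈ D) (hx : 0 < q.1)
    (hy : 0 < q.2) (hdiff : DifferentiableAt ℝ F q) {z : ℝ}
    (hz : z = d * q.1 ^ α * q.2 ^ (β : ℝ)) :
    |F q - z| ≤ ε * |z| ∧ |fderiv ℝ F q (1, 0) - α * (z / q.1)| ≤ ε * |z / q.1| ∧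
      |fderiv ℝ F q (0, 1) - β * (z / q.2)| ≤ ε * |z / q.2| := by
  obtain ⟨h₀, h₁, h₂⟩ := hF q hq
  rw [(hasDerivAt_fst_slice hdiff).deriv, Real.rpow_sub_one hx.ne'] at h₁
  rw [(hasDerivAt_snd_slice hdiff).deriv, Real.rpow_sub_one hy.ne'] at h₂
  have abs_z : |z| = |d| * q.1 ^ α * q.2 ^ (β : ℝ) := by
    rw [hz, abs_mul, abs_mul, abs_of_pos (by positivity : 0 < q.1 ^ α),
      abs_of_pos (by positivity : 0 < q.2 ^ (β : ℝ))]
  rw [abs_div, abs_div, abs_of_pos hx, abs_of_pos hy, abs_z, hz]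
  refine ⟨?_, ?_, ?_⟩
  · convert h₀ using 1
    ring
  · convert h₁ using 1 <;> ring_nf
  · convert h₂ using 1 <;> ring_nf

theorem abs_le_add_one_mul_of_abs_sub_le {w z p : ℝ} (hε : ε < 1) (h : |w - p * z| ≤ ε * |z|) :
    |w| ≤ (|p| + 1) * |z| := by
  have := abs_sub_abs_le_abs_sub w (p * z)
  rw [abs_mul] at this
  nlinarith [abs_nonneg z]

theorem MonomialLike.abs_bounds (hε : ε < 1) (hF : MonomialLike F D ε d α β) (hq : q ∈ D)
    (hx : 0 < q.1) (hy : 0 < q.2) (hdiff : DifferentiableAt ℝ F q) :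
    (1 - ε) * (|d| * (q.1 ^ α * q.2 ^ (β : ℝ))) ≤ |F q| ∧
      |F q| ≤ 2 * |d| * (q.1 ^ α * q.2 ^ (β : ℝ)) ∧
      |fderiv ℝ F q (1, 0)| ≤ (|α| + 1) / (1 - ε) * |F q| / q.1 ∧
      |fderiv ℝ F q (0, 1)| ≤ (β + 1) / (1 - ε) * |F q| / q.2 := by
  have hε₁ : 0 < 1 - ε := sub_pos.2 hε
  obtain ⟨z, hz⟩ : ∃ z, z = d * q.1 ^ α * q.2 ^ (β : ℝ) := ⟨_, rfl⟩
  obtain ⟨h₀, h₁, h₂⟩ := hF.abs_sub_le hq hx hy hdiff hz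
  have abs_z : |z| = |d| * (q.1 ^ α * q.2 ^ (β : ℝ)) := by
    rw [hz, mul_assoc, abs_mul, abs_of_pos (by positivity : 0 < q.1 ^ α * q.2 ^ (β : ℝ))]
  have lower : (1 - ε) * |z| ≤ |F q| := by
    have := abs_sub_abs_le_abs_sub z (F q)
    rw [abs_sub_comm] at this
    linarith
  have upper : |F q| ≤ 2 * |z| := by
    have := abs_le_add_one_mul_of_abs_sub_le hε (p := 1) (by rwa [one_mul])
    rwa [abs_one, one_add_one_eq_two] at this
  have div_le {w p t : ℝ} (ht : 0 < t) (h : |w - p * (z / t)| ≤ ε * |z / t|) :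
      |w| ≤ (|p| + 1) / (1 - ε) * |F q| / t := calc
    |w| ≤ (|p| + 1) * |z / t| := abs_le_add_one_mul_of_abs_sub_le hε h
    _ = (|p| + 1) / (1 - ε) * ((1 - ε) * |z|) / t := by
      rw [abs_div, abs_of_pos ht]
      field_simp
    _ ≤ _ := by gcongr
  rw [← abs_z, mul_assoc, ← abs_z]
  exact ⟨lower, upper, div_le hx h₁, by simpa only [Nat.abs_cast] using div_le hy h₂⟩

theorem abs_fderiv_abs_apply (hdiff : DifferentiableAt ℝ F q) (hF : F q ≠ 0) (v : ℝ × ℝ) :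
    |fderiv ℝ (fun q ↦ |F q|) q v| = |fderiv ℝ F q v| := by
  rw [(hdiff.hasFDerivAt.abs hF).fderiv]
  rcases lt_or_gt_of_ne hF with h | h <;> simp [h]

theorem MonomialLike.exists_isMonomialAmplitude_abs (hD : IsOpen D)
    (hpos : ∀ q ∈ D, 0 < q.1 ∧ 0 < q.2) (hε : ε < 1) (hd : d ≠ 0) (hFC : ContDiffOn ℝ 1 F D)
    (hF : MonomialLike F D ε d α β) : ∃ C, IsMonomialAmplitude C α β D (fun q ↦ |F q|) := by
  have : 0 < 1 - ε := sub_pos.2 hε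
  have : 0 < |d| := abs_pos.2 hd
  have diff {q : ℝ × ℝ} (hq : q ∈ D) : DifferentiableAt ℝ F q :=
    (hFC.contDiffAt (hD.mem_nhds hq)).differentiableAt one_ne_zero
  have bounds {q : ℝ × ℝ} (hq : q ∈ D) :=
    hF.abs_bounds hε hq (hpos q hq).1 (hpos q hq).2 (diff hq)
  have F_pos {q : ℝ × ℝ} (hq : q ∈ D) : 0 < |F q| := by
    obtain ⟨hx, hy⟩ := hpos q hq
    exact (by positivity : 0 < (1 - ε) * (|d| * (q.1 ^ α * q.2 ^ (β : ℝ)))).trans_le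
      (bounds hq).1
  have F_ne {q : ℝ × ℝ} (hq : q ∈ D) : F q ≠ 0 := abs_pos.1 (F_pos hq)
  obtain ⟨C, hC⟩ := Finset.exists_le (α := ℝ)
    {1, 2 * |d|, ((1 - ε) * |d|)⁻¹, (|α| + 1) / (1 - ε), (β + 1) / (1 - ε)}
  simp only [Finset.mem_insert, Finset.mem_singleton, forall_eq_or_imp, forall_eq] at hC
  obtain ⟨one_le, upper_le, lower_le, fst_le, snd_le⟩ := hC
  refine ⟨C, one_le, fun q hq ↦ (hFC q hq).abs (F_ne hq), fun q hq ↦ F_pos hq, ?_, ?_, ?_, ?_⟩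
  all_goals
    intro q hq
    obtain ⟨hx, hy⟩ := hpos q hq
    obtain ⟨lower, upper, fst, snd⟩ := bounds hq
  · exact upper.trans (by gcongr)
  · refine le_trans ?_ (mul_le_mul_of_nonneg_right lower_le (F_pos hq).le)
    rwa [← mul_assoc, ← le_inv_mul_iff₀ (by positivity)] at lower
  · exact (abs_fderiv_abs_apply (diff hq) (F_ne hq) _).trans_le (fst.trans (by gcongr))
  · exact (abs_fderiv_abs_apply (diff hq) (F_ne hq) _).trans_le (snd.trans (by gcongr))

theorem exists_isMonomialAmplitude_prod_abs_rpow {ι : Type*} [Fintype ι] (γ : ι → ℝ)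
    {F : ι → ℝ × ℝ → ℝ} (hD : IsOpen D) (hpos : ∀ q ∈ D, 0 < q.1 ∧ 0 < q.2)
    (hFC : ∀ i, ContDiffOn ℝ 1 (F i) D) (hε : ε < 1)
    (hF : ∀ i, ∃ (d α : ℝ) (β : ℕ), d ≠ 0 ∧ MonomialLike (F i) D ε d α β) :
    ∃ C a b, IsMonomialAmplitude C a b D (fun q ↦ ∏ i, |F i q| ^ γ i) := by
  have := IsMonomialAmplitude.exists_prod hD hpos (s := Finset.univ)
    (Φ := fun i q ↦ |F i q| ^ γ i) fun i _ ↦ by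
      obtain ⟨d, α, β, hd, hi⟩ := hF i
      obtain ⟨C, hC⟩ := hi.exists_isMonomialAmplitude_abs hD hpos hε hd (hFC i)
      exact ⟨_, _, _, hC.rpow hD hpos (γ i)⟩
  simpa only [Finset.prod_fn] using this

end MonomialAmplitude

section StripDecomposition

variable {r X : ℝ} {g G : ℝ → ℝ}

theorem dyadicStrip_eq_sliverSet_inter (hX : 0 ≤ X) (hXr : 2 * X ≤ r) (g G : ℝ → ℝ) :
    dyadicStrip X g G = sliverSet r g G ∩ Prod.fst ⁻¹' Ioo X (2 * X) :=
  Subset.antisymm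
    (fun _ hq ↦ ⟨⟨hX.trans_lt hq.1.1, hq.1.2.trans_le hXr, hq.2⟩, hq.1⟩)
    fun _ hq ↦ ⟨hq.2, hq.1.2.2⟩

theorem dyadicStrip_subset_sliverSet (hX : 0 ≤ X) (hXr : 2 * X ≤ r) (g G : ℝ → ℝ) :
    dyadicStrip X g G ⊆ sliverSet r g G :=
  dyadicStrip_eq_sliverSet_inter hX hXr g G ▸ inter_subset_left

theorem sliverSet_mono {r r' : ℝ} (h : r ≤ r') (g G : ℝ → ℝ) :
    sliverSet r g G ⊆ sliverSet r' g G :=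
  fun _ hq ↦ ⟨hq.1, hq.2.1.trans_le h, hq.2.2⟩

theorem isOpen_sliverSet (hg : ContinuousOn g (Ioo 0 r)) (hG : ContinuousOn G (Ioo 0 r)) :
    IsOpen (sliverSet r g G) := by
  have slab : IsOpen (Prod.fst ⁻¹' Ioo 0 r : Set (ℝ × ℝ)) := isOpen_Ioo.preimage continuous_fst
  have hmaps : MapsTo Prod.fst (Prod.fst ⁻¹' Ioo 0 r : Set (ℝ × ℝ)) (Ioo 0 r) := fun _ hq ↦ hq
  have above := (continuousOn_snd.sub (hg.comp continuousOn_fst hmaps)).isOpen_inter_preimage slab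
    (isOpen_Ioi (a := (0 : ℝ)))
  have below := ((hG.comp continuousOn_fst hmaps).sub continuousOn_snd).isOpen_inter_preimage slab
    (isOpen_Ioi (a := (0 : ℝ)))
  convert above.inter below using 1
  ext q
  simp only [sliverSet, mem_ofPred_eq, mem_inter_iff, mem_preimage, mem_Ioo, mem_Ioi,
    Function.comp_apply, Pi.sub_apply, sub_pos]
  tauto

theorem two_mul_mul_half_pow_succ (r : ℝ) (j : ℕ) :
    2 * (r * (1 / 2) ^ (j + 1)) = r * (1 / 2) ^ j := by
  rw [pow_succ]
  ring

theorem mul_half_pow_le (hr : 0 ≤ r) (j : ℕ) : r * (1 / 2) ^ j ≤ r :=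
  mul_le_of_le_one_right hr (pow_le_one₀ (by norm_num) (by norm_num))

theorem pairwise_disjoint_dyadicStrip (hr : 0 ≤ r) (g G : ℝ → ℝ) :
    Pairwise (Function.onFun Disjoint fun j : ℕ ↦ dyadicStrip (r * (1 / 2) ^ (j + 1)) g G) := by
  refine (pairwise_disjoint_on _).2 fun i j hij ↦ Set.disjoint_left.2 fun q hqi hqj ↦ ?_
  have hpow : r * (1 / 2) ^ j ≤ r * (1 / 2) ^ (i + 1) :=
    mul_le_mul_of_nonneg_left (pow_le_pow_of_le_one (by norm_num) (by norm_num) hij) hr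
  have hq := hqj.1.2
  rw [two_mul_mul_half_pow_succ] at hq
  exact (hq.trans_le hpow).not_gt hqi.1.1

theorem iUnion_dyadicStrip_subset_sliverSet (hr : 0 < r) (g G : ℝ → ℝ) :
    ⋃ j : ℕ, dyadicStrip (r * (1 / 2) ^ (j + 1)) g G ⊆ sliverSet r g G :=
  iUnion_subset fun j ↦ dyadicStrip_subset_sliverSet (by positivity)
    ((two_mul_mul_half_pow_succ r j).trans_le (mul_half_pow_le hr.le j)) g G

theorem iUnion_dyadicStrip_ae_eq_sliverSet (hr : 0 < r) (g G : ℝ → ℝ) :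
    (⋃ j : ℕ, dyadicStrip (r * (1 / 2) ^ (j + 1)) g G : Set (ℝ × ℝ)) =ᵐ[volume]
      sliverSet r g G := by
  have vertical_lines :
      volume (Prod.fst ⁻¹' range fun j : ℕ ↦ r * (1 / 2 : ℝ) ^ j : Set (ℝ × ℝ)) = 0 :=
    Measure.quasiMeasurePreserving_fst.preimage_null
      ((countable_range _).measure_zero volume)
  refine (iUnion_dyadicStrip_subset_sliverSet hr g G).eventuallyLE.antisymm ?_
  filter_upwards [compl_mem_ae_iff.2 vertical_lines] with q hq (hqD : q ∈ sliverSet r g G)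
  obtain ⟨j, lower, upper⟩ := exists_nat_pow_near_of_lt_one (x := q.1 / r) (y := (1 / 2 : ℝ))
    (div_pos hqD.1 hr) ((div_le_one hr).2 hqD.2.1.le) (by norm_num) (by norm_num)
  rw [lt_div_iff₀ hr, mul_comm] at lower
  rw [div_le_iff₀ hr, mul_comm] at upper
  refine mem_iUnion.2 ⟨j, ⟨lower, ?_⟩, hqD.2.2⟩
  rw [two_mul_mul_half_pow_succ]
  exact upper.lt_of_ne fun h ↦ hq ⟨j, h.symm⟩

theorem enorm_setIntegral_sliverSet_le_of_dyadicStrip (hr : 0 < r)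
    (hD : MeasurableSet (sliverSet r g G)) {f : ℝ × ℝ → ℂ} {w : ℝ × ℝ → ℝ≥0∞} {K : ℝ≥0∞}
    (hf : IntegrableOn f (sliverSet r g G))
    (h : ∀ X, 0 < X → 2 * X ≤ r →
      ‖∫ q in dyadicStrip X g G, f q‖ₑ ≤ K * ∫⁻ q in dyadicStrip X g G, w q) :
    ‖∫ q in sliverSet r g G, f q‖ₑ ≤ K * ∫⁻ q in sliverSet r g G, w q := by
  have le (j : ℕ) : 2 * (r * (1 / 2) ^ (j + 1)) ≤ r :=
    (two_mul_mul_half_pow_succ r j).trans_le (mul_half_pow_le hr.le j)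
  have hmeas (j : ℕ) : MeasurableSet (dyadicStrip (r * (1 / 2) ^ (j + 1)) g G) := by
    rw [dyadicStrip_eq_sliverSet_inter (by positivity) (le j)]
    exact hD.inter (measurable_fst measurableSet_Ioo)
  have hdisj := pairwise_disjoint_dyadicStrip hr.le g G
  have hae := iUnion_dyadicStrip_ae_eq_sliverSet hr g G
  have hsub := iUnion_dyadicStrip_subset_sliverSet hr g G
  rw [← setIntegral_congr_set hae, ← setLIntegral_congr hae,
    ← (hasSum_integral_iUnion hmeas hdisj (hf.mono_set hsub)).tsum_eq,
    lintegral_iUnion hmeas hdisj, ← ENNReal.tsum_mul_left]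
  exact enorm_tsum_le_tsum_enorm.trans
    (ENNReal.tsum_le_tsum fun j ↦ h _ (by positivity) (le j))

end StripDecomposition

section Shear

variable {A k₁ : ℝ} {k : ℝ → ℝ} {α : ℝ × ℝ → ℝ} {p q : ℝ × ℝ}

theorem measurePreserving_shear (hk : Measurable k) :
    MeasurePreserving (shear k) volume volume := by
  rw [Measure.volume_eq_prod]
  exact (MeasurePreserving.id volume).skew_product (g := fun x y ↦ y + k x)
    (measurable_snd.add (hk.comp measurable_fst))
    (Eventually.of_forall fun x ↦ (measurePreserving_add_right volume (k x)).map_eq)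

theorem shear_injective (k : ℝ → ℝ) : Function.Injective (shear k) := by
  rintro ⟨x, y⟩ ⟨x', y'⟩ h
  obtain ⟨rfl, h⟩ : x = x' ∧ y + k x = y' + k x' := Prod.ext_iff.1 h
  rw [add_right_cancel h]

theorem measurableEmbedding_shear (hk : Measurable k) : MeasurableEmbedding (shear k) :=
  (measurePreserving_shear hk).measurable.measurableEmbedding (shear_injective k)

theorem contDiffOn_shear {s : Set ℝ} {D : Set (ℝ × ℝ)} (hk : ContDiffOn ℝ 1 k s)
    (hD : ∀ q ∈ D, q.1 ∈ s) : ContDiffOn ℝ 1 (shear k) D :=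
  contDiffOn_fst.prodMk (contDiffOn_snd.add (hk.comp contDiffOn_fst hD))

theorem hasFDerivAt_shear (hk : HasDerivAt k k₁ q.1) :
    HasFDerivAt (shear k) ((ContinuousLinearMap.fst ℝ ℝ ℝ).prod
      (ContinuousLinearMap.snd ℝ ℝ ℝ + k₁ • ContinuousLinearMap.fst ℝ ℝ ℝ)) q :=
  hasFDerivAt_fst.prodMk (hasFDerivAt_snd.add (hk.comp_hasFDerivAt q hasFDerivAt_fst))

theorem fderiv_comp_shear (hα : DifferentiableAt ℝ α (shear k q)) (hk : HasDerivAt k k₁ q.1)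
    (v : ℝ × ℝ) :
    fderiv ℝ (α ∘ shear k) q v = fderiv ℝ α (shear k q) (v.1, v.2 + k₁ * v.1) := by
  rw [(hα.hasFDerivAt.comp q (hasFDerivAt_shear hk)).fderiv]
  rfl

theorem abs_fst_le_nrm2 (p : ℝ × ℝ) : |p.1| ≤ nrm2 p :=
  Real.abs_le_sqrt (by linarith [sq_nonneg p.2])

theorem abs_snd_le_nrm2 (p : ℝ × ℝ) : |p.2| ≤ nrm2 p :=
  Real.abs_le_sqrt (by linarith [sq_nonneg p.1])

theorem nrm2_le_abs_add_abs (p : ℝ × ℝ) : nrm2 p ≤ |p.1| + |p.2| :=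
  Real.sqrt_le_iff.2 ⟨by positivity, by
    nlinarith [sq_abs p.1, sq_abs p.2, mul_nonneg (abs_nonneg p.1) (abs_nonneg p.2)]⟩

theorem AlphaBound.nonneg (hα : AlphaBound α A) : 0 ≤ A :=
  (abs_nonneg (α 0)).trans (hα.2.1 0)

theorem AlphaBound.differentiableAt (hα : AlphaBound α A) (hp : p ≠ 0) :
    DifferentiableAt ℝ α p :=
  (hα.1.contDiffAt (isOpen_compl_singleton.mem_nhds hp)).differentiableAt one_ne_zero

theorem AlphaBound.abs_fderiv_apply_le (hα : AlphaBound α A) (hp : 0 < p.1) (v : ℝ × ℝ) :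
    |fderiv ℝ α p v| ≤ A * (|v.1| + |v.2|) / p.1 := by
  have hA := hα.nonneg
  have gradient : nrm2 (fderiv ℝ α p (1, 0), fderiv ℝ α p (0, 1)) ≤ A / p.1 := by
    refine (hα.2.2 p fun h ↦ hp.ne' (Prod.ext_iff.1 h).1).trans ?_
    rw [div_eq_mul_inv]
    gcongr
    exact (le_abs_self p.1).trans (abs_fst_le_nrm2 p)
  calc |fderiv ℝ α p v| = |v.1 * fderiv ℝ α p (1, 0) + v.2 * fderiv ℝ α p (0, 1)| := by
        rw [← smul_eq_mul, ← map_smul, ← smul_eq_mul, ← map_smul, ← map_add]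
        simp
    _ ≤ |v.1| * |fderiv ℝ α p (1, 0)| + |v.2| * |fderiv ℝ α p (0, 1)| := by
        simpa only [abs_mul] using
          abs_add_le (v.1 * fderiv ℝ α p (1, 0)) (v.2 * fderiv ℝ α p (0, 1))
    _ ≤ |v.1| * (A / p.1) + |v.2| * (A / p.1) := by
        gcongr
        · exact (abs_fst_le_nrm2 _).trans gradient
        · exact (abs_snd_le_nrm2 _).trans gradient
    _ = A * (|v.1| + |v.2|) / p.1 := by ring

end Shear

section DecayWeight

variable {c t u : ℝ} {p : ℝ × ℝ}

theorem unitDir_eq (c : ℝ) : unitDir c = ((√(1 + c ^ 2))⁻¹, (√(1 + c ^ 2))⁻¹ * c) := by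
  simp [unitDir]

theorem abs_inv_sqrt_one_add_sq_mul_le (c z : ℝ) : |(√(1 + c ^ 2))⁻¹ * z| ≤ |z| := by
  have : 1 ≤ √(1 + c ^ 2) := Real.one_le_sqrt.2 (by linarith [sq_nonneg c])
  rw [abs_mul, abs_of_nonneg (by positivity)]
  exact mul_le_of_le_one_left (abs_nonneg z) (inv_le_one_of_one_le₀ this)

theorem abs_dot2_unitDir_le (c t u : ℝ) : |dot2 (t, u) (unitDir c)| ≤ |t + c * u| := by
  convert abs_inv_sqrt_one_add_sq_mul_le c (t + c * u) using 2
  simp only [dot2, unitDir_eq]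
  ring

theorem abs_dot2_perp2_unitDir_le (c : ℝ) (p : ℝ × ℝ) :
    |dot2 p (perp2 (unitDir c))| ≤ |p.2 - c * p.1| := by
  rw [← abs_neg]
  convert abs_inv_sqrt_one_add_sq_mul_le c (p.2 - c * p.1) using 2
  simp only [dot2, perp2, unitDir_eq]
  ring

theorem decayWeight_eq_inv_sqrt (v : ℝ × ℝ) (t u : ℝ) (p : ℝ × ℝ) :
    decayWeight v t u p =
      (√(1 + |dot2 (t, u) v| * nrm2 p + |u| * |dot2 p (perp2 v)|))⁻¹ := by
  have : 0 ≤ nrm2 p := Real.sqrt_nonneg _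
  rw [decayWeight, Real.rpow_neg (by positivity), ← Real.sqrt_eq_rpow]

theorem decayWeight_nonneg (v : ℝ × ℝ) (t u : ℝ) (p : ℝ × ℝ) : 0 ≤ decayWeight v t u p := by
  rw [decayWeight_eq_inv_sqrt]
  positivity

theorem inv_sqrt_le_mul_decayWeight {K C X lam y : ℝ} (hK : 0 ≤ K) (hC : 0 ≤ C) (hX : 0 ≤ X)
    (hlam : 0 ≤ lam) (hy : 0 ≤ y) (hp : nrm2 p ≤ K * X) (hp' : |p.2 - c * p.1| ≤ y + C * lam) :
    (√(1 + |t + c * u| * X + |u| * lam + |u| * y))⁻¹ ≤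
      √(1 + K + C) * decayWeight (unitDir c) t u p := by
  have hp₀ : 0 ≤ nrm2 p := Real.sqrt_nonneg _
  have along : |dot2 (t, u) (unitDir c)| * nrm2 p ≤ K * (|t + c * u| * X) := by
    calc _ ≤ |t + c * u| * (K * X) :=
          mul_le_mul (abs_dot2_unitDir_le c t u) hp hp₀ (abs_nonneg _)
      _ = _ := by ring
  have across : |u| * |dot2 p (perp2 (unitDir c))| ≤ |u| * y + C * (|u| * lam) := by
    calc _ ≤ |u| * (y + C * lam) :=
          mul_le_mul_of_nonneg_left ((abs_dot2_perp2_unitDir_le c p).trans hp') (abs_nonneg u)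
      _ = _ := by ring
  have hT : 0 ≤ |t + c * u| * X := by positivity
  have hΛ : 0 ≤ |u| * lam := by positivity
  have hu : 0 ≤ |u| * y := by positivity
  rw [decayWeight_eq_inv_sqrt, ← div_eq_mul_inv, le_div_iff₀ (by positivity),
    inv_mul_le_iff₀ (by positivity), mul_comm, ← Real.sqrt_mul (by positivity)]
  refine Real.sqrt_le_sqrt ?_
  nlinarith [mul_nonneg hK hΛ, mul_nonneg hK hu, mul_nonneg hC hT, mul_nonneg hC hu]

end DecayWeight

section SliverEstimate

variable {A B C C₁ K L X a b c c₂ r t u κ : ℝ} {g G J k l₁ l₂ lam : ℝ → ℝ}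
  {D s : Set (ℝ × ℝ)} {Φ α φ : ℝ × ℝ → ℝ} {q : ℝ × ℝ}

/-- On `D`, the function `φ` is a symbol of order zero: it and its derivatives scaled by `x` and `y`
are at most `B`. -/
structure HasSymbolBound (B : ℝ) (D : Set (ℝ × ℝ)) (φ : ℝ × ℝ → ℝ) : Prop where
  nonneg : 0 ≤ B
  contDiffOn : ContDiffOn ℝ 1 φ D
  abs_le : ∀ q ∈ D, |φ q| ≤ B
  abs_fst_le : ∀ q ∈ D, |fderiv ℝ φ q (1, 0)| ≤ B / q.1
  abs_snd_le : ∀ q ∈ D, |fderiv ℝ φ q (0, 1)| ≤ B / q.2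

theorem AlphaBound.hasSymbolBound_comp_shear (hα : AlphaBound α A) (hK : 0 ≤ K) (hL : 0 ≤ L)
    {k₁ : ℝ → ℝ} (hk : ContDiffOn ℝ 1 k (Ioo 0 r))
    (hderiv : ∀ x ∈ Ioo 0 r, HasDerivAt k (k₁ x) x ∧ |k₁ x| ≤ L)
    (hD : ∀ q ∈ D, q.1 ∈ Ioo 0 r ∧ 0 < q.2 ∧ q.2 ≤ K * q.1) :
    HasSymbolBound (A * (1 + L + K)) D (α ∘ shear k) := by
  have hA := hα.nonneg
  have ne_zero (q) (hq : q ∈ D) : shear k q ≠ 0 := fun h ↦ (hD q hq).1.1.ne' (Prod.ext_iff.1 h).1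
  have abs_fderiv_le (q) (hq : q ∈ D) (v) : |fderiv ℝ (α ∘ shear k) q v| ≤
      A * (|v.1| + |v.2 + k₁ q.1 * v.1|) / q.1 := by
    rw [fderiv_comp_shear (hα.differentiableAt (ne_zero q hq)) (hderiv _ (hD q hq).1).1]
    exact hα.abs_fderiv_apply_le (p := shear k q) (hD q hq).1.1 _
  refine ⟨by positivity, hα.1.comp (contDiffOn_shear hk fun q hq ↦ (hD q hq).1) ne_zero,
    fun q _ ↦ (hα.2.1 _).trans (le_mul_of_one_le_right hA (by linarith)), fun q hq ↦ ?_,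
    fun q hq ↦ ?_⟩
  · have hx := (hD q hq).1.1
    refine (abs_fderiv_le q hq (1, 0)).trans ?_
    simp only [abs_one, mul_one, zero_add]
    refine div_le_div_of_nonneg_right (mul_le_mul_of_nonneg_left ?_ hA) hx.le
    linarith [(hderiv _ (hD q hq).1).2]
  · obtain ⟨⟨hx, -⟩, hy, hyx⟩ := hD q hq
    refine (abs_fderiv_le q hq (0, 1)).trans ?_
    simp only [abs_zero, abs_one, mul_zero, add_zero, zero_add, mul_one]
    rw [div_le_div_iff₀ hx hy, mul_assoc]
    gcongr
    nlinarith

namespace HasSymbolBound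

variable (hD : IsOpen D) (hφ : HasSymbolBound B D φ) (hΦ : IsMonomialAmplitude C a b D Φ)
include hφ hΦ

theorem abs_mul_le (hq : q ∈ D) : |(φ * Φ) q| ≤ B * Φ q := by
  rw [Pi.mul_apply, abs_mul, abs_of_pos (hΦ.pos q hq)]
  exact mul_le_mul_of_nonneg_right (hφ.abs_le q hq) (hΦ.pos q hq).le

include hD in
theorem abs_fderiv_mul_le (hq : q ∈ D) {v : ℝ × ℝ} {z : ℝ} (hφv : |fderiv ℝ φ q v| ≤ B / z)
    (hΦv : |fderiv ℝ Φ q v| ≤ C * Φ q / z) :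
    |fderiv ℝ (φ * Φ) q v| ≤ B * (1 + C) * Φ q / z := by
  have hΦq := hΦ.pos q hq
  have hB := hφ.nonneg
  rw [fderiv_mul ((hφ.contDiffOn.contDiffAt (hD.mem_nhds hq)).differentiableAt one_ne_zero)
    (hΦ.differentiableAt hD hq)]
  calc |φ q * fderiv ℝ Φ q v + Φ q * fderiv ℝ φ q v|
      ≤ |φ q| * |fderiv ℝ Φ q v| + Φ q * |fderiv ℝ φ q v| := by
        refine (abs_add_le _ _).trans_eq ?_
        rw [abs_mul, abs_mul, abs_of_pos hΦq]
    _ ≤ B * (C * Φ q / z) + Φ q * (B / z) := by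
        gcongr
        exact hφ.abs_le q hq
    _ = B * (1 + C) * Φ q / z := by ring

include hD in
theorem integrableOn_phaseIntegrand_mul (hΦi : IntegrableOn Φ D)
    (hJ : ContinuousOn J (Prod.fst '' D))
    (u : ℝ) : IntegrableOn (phaseIntegrand (φ * Φ) J u) D := by
  refine Integrable.mono' (hΦi.const_mul B) ?_ ?_
  · refine ContinuousOn.aestronglyMeasurable ?_ hD.measurableSet
    have phase : ContinuousOn (fun q : ℝ × ℝ ↦ J q.1 + u * q.2) D :=
      (hJ.comp continuousOn_fst (mapsTo_image _ _)).add (continuousOn_const.mul continuousOn_snd)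
    exact (Complex.continuous_ofReal.comp_continuousOn
      (hφ.contDiffOn.mul hΦ.contDiffOn).continuousOn).mul
        ((Complex.continuous_ofReal.comp_continuousOn phase).mul continuousOn_const).cexp
  · refine ae_restrict_of_forall_mem hD.measurableSet fun q hq ↦ ?_
    rw [phaseIntegrand, norm_mul, Complex.norm_exp_ofReal_mul_I, mul_one, Complex.norm_real]
    exact hφ.abs_mul_le hΦ hq

include hD in
theorem hasAmplitudeBound_mul (hX : 0 < X) (hs : s ⊆ D)
    (hsX : ∀ q ∈ s, q.1 ∈ Ioo X (2 * X) ∧ 0 < q.2) :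
    HasAmplitudeBound b X (B * (1 + C) * C * 2 ^ |a| * X ^ a) s (φ * Φ)
      (fun q ↦ fderiv ℝ (φ * Φ) q (1, 0)) (fun q ↦ fderiv ℝ (φ * Φ) q (0, 1)) := by
  have hB := hφ.nonneg
  have hC := hΦ.one_le
  have contDiffOn := hφ.contDiffOn.mul hΦ.contDiffOn
  have diff (q) (hq : q ∈ s) : DifferentiableAt ℝ (φ * Φ) q :=
    (contDiffOn.contDiffAt (hD.mem_nhds (hs hq))).differentiableAt one_ne_zero
  have cont := (contDiffOn.continuousOn_fderiv_of_isOpen hD le_rfl).mono hs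
  have size (q) (hq : q ∈ s) :
      B * (1 + C) * Φ q ≤ B * (1 + C) * C * 2 ^ |a| * X ^ a * q.2 ^ b := by
    obtain ⟨hx, hy⟩ := hsX q hq
    calc B * (1 + C) * Φ q ≤ B * (1 + C) * (C * (q.1 ^ a * q.2 ^ b)) := by
          gcongr; exact hΦ.le_mul q (hs hq)
      _ ≤ B * (1 + C) * (C * (2 ^ |a| * X ^ a * q.2 ^ b)) := by
          gcongr; exact rpow_le_rpow_abs_mul a one_le_two hX (by linarith [hx.1]) hx.2.le
      _ = _ := by ring
  refine ⟨by positivity, fun q hq ↦ hasDerivAt_fst_slice (diff q hq),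
    fun q hq ↦ hasDerivAt_snd_slice (diff q hq), cont.clm_apply continuousOn_const,
    cont.clm_apply continuousOn_const, fun q hq ↦ ?_, fun q hq ↦ ?_, fun q hq ↦ ?_⟩
  · refine (hφ.abs_mul_le hΦ (hs hq)).trans ((size q hq).trans' ?_)
    have := hΦ.pos q (hs hq)
    gcongr
    exact le_mul_of_one_le_right hB (by linarith)
  · obtain ⟨hx, hy⟩ := hsX q hq
    exact (hφ.abs_fderiv_mul_le hD hΦ (hs hq) (hφ.abs_fst_le q (hs hq))
      (hΦ.abs_fst_le q (hs hq))).trans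
        (div_le_div₀ (by positivity) (size q hq) hX hx.1.le)
  · obtain ⟨-, hy⟩ := hsX q hq
    rw [Real.rpow_sub_one hy.ne', ← mul_div_assoc]
    exact (hφ.abs_fderiv_mul_le hD hΦ (hs hq) (hφ.abs_snd_le q (hs hq))
      (hΦ.abs_snd_le q (hs hq))).trans (div_le_div_of_nonneg_right (size q hq) hy.le)

end HasSymbolBound

namespace IsRegularSliver

variable (hreg : IsRegularSliver κ K r g G)
include hreg

theorem isOpen_sliverSet : IsOpen (sliverSet r g G) :=
  _root_.isOpen_sliverSet (hreg.lower.continuousOn.mono Ioo_subset_Ioc_self)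
    (hreg.upper.continuousOn.mono Ioo_subset_Ioc_self)

theorem mem_bounds (hq : q ∈ sliverSet r g G) :
    q.1 ∈ Ioo 0 r ∧ 0 < q.2 ∧ q.2 ≤ K * q.1 :=
  have hx : q.1 ∈ Ioc 0 r := ⟨hq.1, hq.2.1.le⟩
  ⟨⟨hq.1, hq.2.1⟩, (hreg.lower.nonneg _ hx).trans_lt hq.2.2.1,
    hq.2.2.2.le.trans (hreg.upper_le _ hx)⟩

theorem isDyadicSliver (hX : 0 < X) (hXr : 2 * X ≤ r) : IsDyadicSliver κ X g G := by
  have hmem : X ∈ Ioc 0 r := ⟨hX, by linarith⟩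
  have hsub : Icc X (2 * X) ⊆ Ioc 0 r := Icc_subset_Ioc_iff (by linarith) |>.2 ⟨hX, hXr⟩
  refine ⟨hX, hreg.lower.monotoneOn.mono hsub, hreg.upper.monotoneOn.mono hsub,
    hreg.lower.nonneg X hmem, hreg.lower.doubling X hmem, hreg.upper.doubling X hmem,
    hreg.separated X hmem, ?_⟩
  rw [dyadicStrip_eq_sliverSet_inter hX.le hXr]
  exact hreg.isOpen_sliverSet.inter (isOpen_Ioo.preimage continuous_fst)

end IsRegularSliver

/-- The size on `[X, 2X]` of the phase `t x + u k(x)`, where `k(x) = c x + l(x)` and `lam` is the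
dyadic scale of `l`. -/
noncomputable def stripFrequency (c t u : ℝ) (lam : ℝ → ℝ) (X : ℝ) : ℝ :=
  1 + |t + c * u| * X + |u| * lam X

namespace HasDyadicScale

variable (hl : HasDyadicScale C₁ c₂ r (fun x ↦ k x - c * x) l₁ l₂ lam)
include hl

theorem hasDerivAt_of_sub {x : ℝ} (hx : x ∈ Ioc 0 r) : HasDerivAt k (l₁ x + c) x := by
  simpa [Pi.add_def] using (hl.hasDerivAt x hx).add ((hasDerivAt_id x).const_mul c)

theorem contDiffOn_of_sub : ContDiffOn ℝ 1 k (Ioo 0 r) := by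
  have hderiv (x) (hx : x ∈ Ioo 0 r) := hl.hasDerivAt_of_sub (Ioo_subset_Ioc_self hx)
  rw [show (1 : WithTop ℕ∞) = 0 + 1 by simp, contDiffOn_succ_iff_deriv_of_isOpen isOpen_Ioo]
  refine ⟨fun x hx ↦ (hderiv x hx).differentiableAt.differentiableWithinAt, by simp,
    contDiffOn_zero.2 ?_⟩
  refine ContinuousOn.congr (fun x hx ↦ ?_) fun x hx ↦ (hderiv x hx).deriv
  exact ((hl.hasDerivAt_deriv x (Ioo_subset_Ioc_self hx)).continuousAt.add
    continuousAt_const).continuousWithinAt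

theorem one_le_stripFrequency (hX : 0 < X) : 1 ≤ stripFrequency c t u lam X := by
  have := hl.scale_nonneg X hX
  have : 0 ≤ |t + c * u| * X := by positivity
  have : 0 ≤ |u| * lam X := by positivity
  rw [stripFrequency]
  linarith

end HasDyadicScale

end SliverEstimate

section SymbolEstimate

variable {B C C₁ K X a b c c₂ r t u κ : ℝ} {g G k l₁ l₂ lam : ℝ → ℝ} {Φ φ : ℝ × ℝ → ℝ} {q : ℝ × ℝ}

namespace HasDyadicScale

theorem le_mul_deriv_deriv_or_neg {l : ℝ → ℝ} (hl : HasDyadicScale C₁ c₂ r l l₁ l₂ lam) (u : ℝ)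
    (hX : 0 < X) :
    (∀ x ∈ Icc X (2 * X), x ≤ r → c₂ * (|u| * lam X) ≤ u * l₂ x * X ^ 2) ∨
      ∀ x ∈ Icc X (2 * X), x ≤ r → c₂ * (|u| * lam X) ≤ -(u * l₂ x) * X ^ 2 := by
  have scaled {z : ℝ} (h : c₂ * lam X ≤ z) : c₂ * (|u| * lam X) ≤ |u| * z := by
    linarith [mul_le_mul_of_nonneg_left h (abs_nonneg u)]
  rcases le_total 0 u with hu | hu <;> rcases hl.le_deriv_deriv_or_neg with h | h <;>
    simp only [abs_of_nonneg, abs_of_nonpos, hu] at scaled ⊢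
  · exact .inl fun x hx hxr ↦ (scaled (h X x hX hx hxr)).trans_eq (by ring)
  · exact .inr fun x hx hxr ↦ (scaled (h X x hX hx hxr)).trans_eq (by ring)
  · exact .inr fun x hx hxr ↦ (scaled (h X x hX hx hxr)).trans_eq (by ring)
  · exact .inl fun x hx hxr ↦ (scaled (h X x hX hx hxr)).trans_eq (by ring)

theorem exists_hasOscillationBound (hC₁ : 0 < C₁) (hc₂ : 0 < c₂)
    (hl : HasDyadicScale C₁ c₂ r (fun x ↦ k x - c * x) l₁ l₂ lam) :
    ∃ C₀ > 0, ∀ t u X, 0 < X → 2 * X ≤ r →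
      HasOscillationBound X (C₀ * X / √(stripFrequency c t u lam X)) fun x ↦ t * x + u * k x := by
  obtain ⟨C₀, hC₀, bound⟩ := exists_norm_integral_exp_linear_add_le hC₁ hc₂
  refine ⟨C₀, hC₀, fun t u X hX hXr ↦ ?_⟩
  have hmem {x} (hx : x ∈ Icc X (2 * X)) : x ∈ Ioc 0 r := ⟨hX.trans_le hx.1, hx.2.trans hXr⟩
  refine ⟨fun x hx ↦ ?_, fun x₁ x₂ hx₁ hx₁₂ hx₂ ↦ ?_⟩
  · exact ((continuousAt_const.mul continuousAt_id).add (continuousAt_const.mul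
      (hl.hasDerivAt_of_sub (hmem hx)).continuousAt)).continuousWithinAt
  have hsub : Icc x₁ x₂ ⊆ Icc X (2 * X) := Icc_subset_Icc hx₁ hx₂
  have hscale := hl.scale_nonneg X hX
  convert bound x₁ x₂ X (|u| * lam X) (t + c * u) (fun x ↦ u * (k x - c * x)) (fun x ↦ u * l₁ x)
    (fun x ↦ u * l₂ x) hx₁₂ (by linarith) hX (by positivity)
    (fun x hx ↦ (hl.hasDerivAt x (hmem (hsub hx))).const_mul u)
    (fun x hx ↦ (hl.hasDerivAt_deriv x (hmem (hsub hx))).const_mul u)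
    (continuousOn_const.mul (hl.continuousOn_deriv_deriv.mono fun x hx ↦ hmem (hsub hx)))
    (fun x hx ↦ ?_) ((hl.le_mul_deriv_deriv_or_neg u hX).imp
      (fun h x hx ↦ h x (hsub hx) (hmem (hsub hx)).2)
      fun h x hx ↦ h x (hsub hx) (hmem (hsub hx)).2) using 5
  · push_cast
    ring
  · rfl
  · rw [abs_mul]
    linarith [mul_le_mul_of_nonneg_left
      (hl.abs_deriv_le X x hX (hsub hx) (hmem (hsub hx)).2) (abs_nonneg u)]

theorem abs_shear_snd_le (hl : HasDyadicScale C₁ c₂ r (fun x ↦ k x - c * x) l₁ l₂ lam)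
    (hreg : IsRegularSliver κ K r g G) (hq : q ∈ sliverSet r g G) :
    |(shear k q).2| ≤ (1 + K + |c|) * q.1 := by
  obtain ⟨hx, hy, hyx⟩ := hreg.mem_bounds hq
  have hcx : |c * q.1| = |c| * q.1 := by rw [abs_mul, abs_of_pos hx.1]
  have hlx := hl.abs_le_self q.1 (Ioo_subset_Ioc_self hx)
  calc |q.2 + k q.1| = |q.2 + (k q.1 - c * q.1) + c * q.1| := by ring_nf
    _ ≤ |q.2| + |k q.1 - c * q.1| + |c * q.1| := abs_add_three _ _ _
    _ ≤ _ := by rw [hcx, abs_of_pos hy]; linarith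

theorem nrm2_shear_le (hl : HasDyadicScale C₁ c₂ r (fun x ↦ k x - c * x) l₁ l₂ lam)
    (hreg : IsRegularSliver κ K r g G) (hq : q ∈ sliverSet r g G) :
    nrm2 (shear k q) ≤ (2 + K + |c|) * q.1 := by
  have hx : |(shear k q).1| = q.1 := abs_of_pos hq.1
  linarith [nrm2_le_abs_add_abs (shear k q), hl.abs_shear_snd_le hreg hq]

theorem inv_sqrt_stripFrequency_le (hl : HasDyadicScale C₁ c₂ r (fun x ↦ k x - c * x) l₁ l₂ lam)
    (hK : 0 ≤ K) (hC₁ : 0 ≤ C₁) (hreg : IsRegularSliver κ K r g G) (hX : 0 < X) (hXr : 2 * X ≤ r)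
    (hq : q ∈ dyadicStrip X g G) :
    (√(stripFrequency c t u lam X + |u| * q.2))⁻¹ ≤
      √(1 + (2 + K + |c|) * 2 + C₁) * decayWeight (unitDir c) t u (shear k q) := by
  have hqD := dyadicStrip_subset_sliverSet hX.le hXr g G hq
  obtain ⟨hx, hy, -⟩ := hreg.mem_bounds hqD
  refine inv_sqrt_le_mul_decayWeight (by positivity) hC₁ hX.le (hl.scale_nonneg X hX) hy.le ?_ ?_
  · rw [mul_assoc]
    exact (hl.nrm2_shear_le hreg hqD).trans
      (mul_le_mul_of_nonneg_left hq.1.2.le (by positivity))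
  · calc |q.2 + k q.1 - c * q.1| = |q.2 + (k q.1 - c * q.1)| := by ring_nf
      _ ≤ |q.2| + |k q.1 - c * q.1| := abs_add_le _ _
      _ ≤ q.2 + C₁ * lam X := by
        rw [abs_of_pos hy]
        exact add_le_add_right (hl.abs_le X q.1 hX (Ioo_subset_Icc_self hq.1) hx.2.le) _

end HasDyadicScale

theorem IsMonomialAmplitude.rpow_mul_rpow_le {D : Set (ℝ × ℝ)} (hΦ : IsMonomialAmplitude C a b D Φ)
    (hq : q ∈ D) (hX : 0 < X) (hx : q.1 ∈ Ioo X (2 * X)) (hy : 0 ≤ q.2) :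
    X ^ a * q.2 ^ b ≤ 2 ^ |a| * C * Φ q := by
  have hx₀ : 0 < q.1 := hX.trans hx.1
  calc X ^ a * q.2 ^ b ≤ 2 ^ |a| * q.1 ^ a * q.2 ^ b := by
        gcongr
        exact rpow_le_rpow_abs_mul a one_le_two hx₀ (by linarith [hx.2]) (by linarith [hx.1])
    _ ≤ 2 ^ |a| * C * Φ q := by
        rw [mul_assoc, mul_assoc]
        exact mul_le_mul_of_nonneg_left (hΦ.mul_le q hq) (by positivity)

theorem exists_forall_rpow_mul_stripWeight_le (hK : 0 ≤ K) (hC₁ : 0 ≤ C₁)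
    (hreg : IsRegularSliver κ K r g G)
    (hl : HasDyadicScale C₁ c₂ r (fun x ↦ k x - c * x) l₁ l₂ lam)
    (hΦ : IsMonomialAmplitude C a b (sliverSet r g G) Φ) :
    ∃ C' > 0, ∀ t u X, 0 < X → 2 * X ≤ r → ∀ q ∈ dyadicStrip X g G,
      ENNReal.ofReal (X ^ a) * stripWeight b (stripFrequency c t u lam X) u q ≤
        ENNReal.ofReal C' * ENNReal.ofReal (decayWeight (unitDir c) t u (shear k q) * Φ q) := by
  have hC := hΦ.one_le
  refine ⟨√(1 + (2 + K + |c|) * 2 + C₁) * (2 ^ |a| * C), by positivity,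
    fun t u X hX hXr q hq ↦ ?_⟩
  have hqD := dyadicStrip_subset_sliverSet hX.le hXr g G hq
  have hy := (hreg.mem_bounds hqD).2.1.le
  have hdecay := decayWeight_nonneg (unitDir c) t u (shear k q)
  rw [stripWeight, ← ENNReal.ofReal_mul (by positivity), ← ENNReal.ofReal_mul (by positivity)]
  refine ENNReal.ofReal_le_ofReal ?_
  calc X ^ a * ((√(stripFrequency c t u lam X + |u| * q.2))⁻¹ * q.2 ^ b)
      = (√(stripFrequency c t u lam X + |u| * q.2))⁻¹ * (X ^ a * q.2 ^ b) := by ring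
    _ ≤ √(1 + (2 + K + |c|) * 2 + C₁) * decayWeight (unitDir c) t u (shear k q) *
        (2 ^ |a| * C * Φ q) := by
        exact mul_le_mul (hl.inv_sqrt_stripFrequency_le hK hC₁ hreg hX hXr hq)
          (hΦ.rpow_mul_rpow_le hqD hX hq.1 hy) (by positivity) (by positivity)
    _ = _ := by ring

theorem HasSymbolBound.integrableOn_phaseIntegrand_sliverSet
    (hφ : HasSymbolBound B (sliverSet r g G) φ) (hreg : IsRegularSliver κ K r g G)
    (hl : HasDyadicScale C₁ c₂ r (fun x ↦ k x - c * x) l₁ l₂ lam)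
    (hΦ : IsMonomialAmplitude C a b (sliverSet r g G) Φ) (hΦi : IntegrableOn Φ (sliverSet r g G))
    (t u : ℝ) :
    IntegrableOn (phaseIntegrand (φ * Φ) (fun x ↦ t * x + u * k x) u) (sliverSet r g G) := by
  refine hφ.integrableOn_phaseIntegrand_mul hreg.isOpen_sliverSet hΦ hΦi ?_ u
  refine (continuousOn_const.mul continuousOn_id).add
    (continuousOn_const.mul (hl.contDiffOn_of_sub.continuousOn.mono ?_))
  rintro _ ⟨q, hq, rfl⟩
  exact (hreg.mem_bounds hq).1

theorem exists_enorm_setIntegral_dyadicStrip_le_decayWeight (hκ : 1 ≤ κ) (hK : 0 ≤ K)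
    (hC₁ : 0 < C₁) (hc₂ : 0 < c₂) (hreg : IsRegularSliver κ K r g G)
    (hl : HasDyadicScale C₁ c₂ r (fun x ↦ k x - c * x) l₁ l₂ lam)
    (hΦ : IsMonomialAmplitude C a b (sliverSet r g G) Φ) (hΦi : IntegrableOn Φ (sliverSet r g G)) :
    ∃ C' > 0, ∀ B φ t u, HasSymbolBound B (sliverSet r g G) φ → ∀ X, 0 < X → 2 * X ≤ r →
      ‖∫ q in dyadicStrip X g G, phaseIntegrand (φ * Φ) (fun x ↦ t * x + u * k x) u q‖ₑ ≤
        ENNReal.ofReal (C' * B) * ∫⁻ q in dyadicStrip X g G,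
          ENNReal.ofReal (decayWeight (unitDir c) t u (shear k q) * Φ q) := by
  obtain ⟨C₀, hC₀, oscillation⟩ := hl.exists_hasOscillationBound hC₁ hc₂
  obtain ⟨Cs, hCs, strip⟩ := exists_enorm_setIntegral_dyadicStrip_le b hκ hC₀
  obtain ⟨Cw, hCw, weight⟩ := exists_forall_rpow_mul_stripWeight_le hK hC₁.le hreg hl hΦ
  have hC := hΦ.one_le
  refine ⟨Cs * ((1 + C) * C * 2 ^ |a|) * Cw, by positivity, fun B φ t u hφ X hX hXr ↦ ?_⟩
  have hB := hφ.nonneg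
  have hsub := dyadicStrip_subset_sliverSet hX.le hXr g G
  have hsliver := hreg.isDyadicSliver hX hXr
  calc _ ≤ ENNReal.ofReal (Cs * (B * (1 + C) * C * 2 ^ |a| * X ^ a)) *
        ∫⁻ q in dyadicStrip X g G, stripWeight b (stripFrequency c t u lam X) u q :=
        strip X _ u _ g G _ _ _ _ hsliver
          (hφ.hasAmplitudeBound_mul hreg.isOpen_sliverSet hΦ hX hsub fun q hq ↦
            ⟨hq.1, (hreg.mem_bounds (hsub hq)).2.1⟩)
          (hl.one_le_stripFrequency hX) (oscillation t u X hX hXr)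
          ((hφ.integrableOn_phaseIntegrand_sliverSet hreg hl hΦ hΦi t u).mono_set hsub)
    _ = ENNReal.ofReal (Cs * ((1 + C) * C * 2 ^ |a|) * B) * ∫⁻ q in dyadicStrip X g G,
        ENNReal.ofReal (X ^ a) * stripWeight b (stripFrequency c t u lam X) u q := by
        rw [lintegral_const_mul' _ _ ENNReal.ofReal_ne_top, ← mul_assoc (ENNReal.ofReal _),
          ← ENNReal.ofReal_mul (by positivity)]
        congr 2
        ring
    _ ≤ ENNReal.ofReal (Cs * ((1 + C) * C * 2 ^ |a|) * B) * ∫⁻ q in dyadicStrip X g G,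
        ENNReal.ofReal Cw * ENNReal.ofReal (decayWeight (unitDir c) t u (shear k q) * Φ q) :=
        mul_le_mul_right (setLIntegral_mono' hsliver.isOpen_dyadicStrip.measurableSet
          (weight t u X hX hXr)) _
    _ = _ := by
        rw [lintegral_const_mul' _ _ ENNReal.ofReal_ne_top, ← mul_assoc (ENNReal.ofReal _),
          ← ENNReal.ofReal_mul (by positivity)]
        congr 2
        ring

theorem exists_enorm_setIntegral_sliverSet_le (hκ : 1 ≤ κ) (hK : 0 ≤ K) (hC₁ : 0 < C₁)
    (hc₂ : 0 < c₂) (hr : 0 < r) (hreg : IsRegularSliver κ K r g G)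
    (hl : HasDyadicScale C₁ c₂ r (fun x ↦ k x - c * x) l₁ l₂ lam)
    (hΦ : IsMonomialAmplitude C a b (sliverSet r g G) Φ) (hΦi : IntegrableOn Φ (sliverSet r g G)) :
    ∃ C' > 0, ∀ B φ t u, HasSymbolBound B (sliverSet r g G) φ →
      IntegrableOn (phaseIntegrand (φ * Φ) (fun x ↦ t * x + u * k x) u) (sliverSet r g G) ∧
      ‖∫ q in sliverSet r g G, phaseIntegrand (φ * Φ) (fun x ↦ t * x + u * k x) u q‖ₑ ≤
        ENNReal.ofReal (C' * B) * ∫⁻ q in sliverSet r g G,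
          ENNReal.ofReal (decayWeight (unitDir c) t u (shear k q) * Φ q) := by
  obtain ⟨C', hC', strip⟩ :=
    exists_enorm_setIntegral_dyadicStrip_le_decayWeight hκ hK hC₁ hc₂ hreg hl hΦ hΦi
  refine ⟨C', hC', fun B φ t u hφ ↦ ?_⟩
  have integrable := hφ.integrableOn_phaseIntegrand_sliverSet hreg hl hΦ hΦi t u
  exact ⟨integrable, enorm_setIntegral_sliverSet_le_of_dyadicStrip hr
    hreg.isOpen_sliverSet.measurableSet integrable (strip B φ t u hφ)⟩

end SymbolEstimate

section ShearedSliver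

variable {A C C₁ K a c c₂ e₁ e₂ r κ : ℝ} {g G k l₁ l₂ lam : ℝ → ℝ} {D U : Set (ℝ × ℝ)}
  {Φ h α : ℝ × ℝ → ℝ}

theorem PuiseuxOn.sub_const_mul {N : ℕ} (hN : 0 < N) (hk : PuiseuxOn N a k) (c : ℝ) :
    PuiseuxOn N a fun x ↦ k x - c * x := by
  obtain ⟨k', I, hI, hsub, analytic, eq⟩ := hk
  refine ⟨fun z ↦ k' z - c * z ^ N, I, hI, hsub, fun z hz ↦ (analytic z hz).sub
    (analyticAt_const.mul (analyticAt_id.pow N)), fun x hx ↦ ?_⟩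
  dsimp only
  rw [eq x hx, Real.rpow_inv_natCast_pow hx.1 hN.ne']

theorem oscIntegrand_shear (h : ℝ × ℝ → ℝ) (k : ℝ → ℝ) (t u : ℝ) (q : ℝ × ℝ) :
    oscIntegrand h t u (shear k q) =
      phaseIntegrand (h ∘ shear k) (fun x ↦ t * x + u * k x) u q := by
  simp only [oscIntegrand, phaseIntegrand, shear, Function.comp_apply]
  congr 2
  push_cast
  ring

theorem support_oscIntegrand_mul_subset (hr : 0 ≤ r) (hα : tsupport α ⊆ disk2 r) (h : ℝ × ℝ → ℝ)
    (t u : ℝ) :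
    Function.support (oscIntegrand (fun p ↦ α p * h p) t u) ⊆ {p | p.1 < r} := by
  refine fun p hp ↦ lt_of_pow_lt_pow_left₀ 2 hr ?_
  have hαp : α p ≠ 0 := fun h₀ ↦ hp (by simp [oscIntegrand, h₀])
  have : p.1 ^ 2 + p.2 ^ 2 < r ^ 2 := hα (subset_tsupport α hαp)
  linarith [sq_nonneg p.2]

theorem eventually_forall_shear_mem (hU : U ∈ 𝓝 (0 : ℝ × ℝ))
    (hreg : ∀ᶠ r in 𝓝[>] (0 : ℝ), IsRegularSliver κ K r g G)
    (hl : ∀ᶠ r in 𝓝[>] (0 : ℝ),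
      HasDyadicScale C₁ c₂ r (fun x ↦ k x - c * x) l₁ l₂ lam) :
    ∀ᶠ r in 𝓝[>] (0 : ℝ), ∀ q ∈ sliverSet r g G, shear k q ∈ U := by
  obtain ⟨δ, hδ, ball_subset⟩ := Metric.mem_nhds_iff.1 hU
  have small (M : ℝ) : ∀ᶠ r in 𝓝[>] (0 : ℝ), M * r < δ :=
    (((continuous_const_mul M).tendsto' 0 0 (mul_zero M)).mono_left
      nhdsWithin_le_nhds).eventually_lt_const hδ
  filter_upwards [hreg, hl, small 1, small |1 + K + (|c|)|] with r hreg hl small₁ small₂ q hq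
  refine ball_subset (mem_ball_zero_iff.2 (max_lt ?_ ?_))
  · have : ‖(shear k q).1‖ = q.1 := abs_of_pos hq.1
    linarith [hq.2.1]
  · have slope : (1 + K + |c|) * q.1 ≤ |1 + K + (|c|)| * r :=
      mul_le_mul (le_abs_self _) hq.2.1.le hq.1.le (abs_nonneg _)
    exact (hl.abs_shear_snd_le hreg hq).trans_lt (slope.trans_lt small₂)

section ChangeOfVariables

variable {s : Set ℝ} (hs : MeasurableSet s) (hk : ContinuousOn k s) (hDs : ∀ q ∈ D, q.1 ∈ s)
include hs hk hDs

theorem exists_measurable_eqOn_shear : ∃ k', Measurable k' ∧ EqOn (shear k') (shear k) D := by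
  classical
  refine ⟨s.piecewise k 0, hk.measurable_piecewise continuousOn_const hs, fun q hq ↦ ?_⟩
  rw [shear, shear, piecewise_eq_of_mem _ _ _ (hDs q hq)]

variable (hD : MeasurableSet D)
include hD

theorem integrableOn_image_shear_iff {E : Type*} [NormedAddCommGroup E] {e : ℝ × ℝ → E} :
    IntegrableOn e (shear k '' D) ↔ IntegrableOn (e ∘ shear k) D := by
  obtain ⟨k', hk', eqOn⟩ := exists_measurable_eqOn_shear hs hk hDs
  rw [← image_congr eqOn, (measurePreserving_shear hk').integrableOn_image
    (measurableEmbedding_shear hk')]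
  exact integrableOn_congr_fun (fun q hq ↦ congrArg e (eqOn hq)) hD

theorem setIntegral_image_shear {E : Type*} [NormedAddCommGroup E] [NormedSpace ℝ E]
    (e : ℝ × ℝ → E) : ∫ p in shear k '' D, e p = ∫ q in D, (e ∘ shear k) q := by
  obtain ⟨k', hk', eqOn⟩ := exists_measurable_eqOn_shear hs hk hDs
  rw [← image_congr eqOn, (measurePreserving_shear hk').setIntegral_image_emb
    (measurableEmbedding_shear hk')]
  exact setIntegral_congr_fun hD fun q hq ↦ congrArg e (eqOn hq)

theorem setLIntegral_image_shear (w : ℝ × ℝ → ℝ≥0∞) :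
    ∫⁻ p in shear k '' D, w p = ∫⁻ q in D, w (shear k q) := by
  obtain ⟨k', hk', eqOn⟩ := exists_measurable_eqOn_shear hs hk hDs
  rw [← image_congr eqOn, ← (measurePreserving_shear hk').setLIntegral_comp_emb
    (measurableEmbedding_shear hk')]
  exact setLIntegral_congr_fun hD fun q hq ↦ congrArg w (eqOn hq)

end ChangeOfVariables

theorem image_shear_sliverSet_inter (hra : r ≤ a) (g G k : ℝ → ℝ) :
    shear k '' sliverSet a g G ∩ {p | p.1 < r} = shear k '' sliverSet r g G := by
  ext p
  constructor
  · rintro ⟨⟨q, hq, rfl⟩, hqr⟩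
    exact ⟨q, ⟨hq.1, hqr, hq.2.2⟩, rfl⟩
  · rintro ⟨q, hq, rfl⟩
    exact ⟨⟨q, sliverSet_mono hra g G hq, rfl⟩, hq.2.1⟩

section Localization

variable (hra : r ≤ a) (hk : ContinuousOn k (Ioo 0 r)) (hD : MeasurableSet (sliverSet r g G))
include hra hk hD

theorem integrableOn_image_shear_sliverSet_iff {e : ℝ × ℝ → ℂ}
    (he : Function.support e ⊆ {p | p.1 < r}) :
    IntegrableOn e (shear k '' sliverSet a g G) ↔
      IntegrableOn (e ∘ shear k) (sliverSet r g G) := by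
  rw [← integrableOn_image_shear_iff measurableSet_Ioo hk (fun q hq ↦ ⟨hq.1, hq.2.1⟩) hD,
    ← image_shear_sliverSet_inter hra, inter_comm,
    ← integrableOn_indicator_iff (measurableSet_lt measurable_fst measurable_const),
    indicator_eq_self.2 he]

theorem setIntegral_image_shear_sliverSet {e : ℝ × ℝ → ℂ}
    (he : Function.support e ⊆ {p | p.1 < r}) :
    ∫ p in shear k '' sliverSet a g G, e p = ∫ q in sliverSet r g G, (e ∘ shear k) q := by
  rw [← setIntegral_image_shear measurableSet_Ioo hk (fun q hq ↦ ⟨hq.1, hq.2.1⟩) hD,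
    ← image_shear_sliverSet_inter hra,
    ← setIntegral_indicator (measurableSet_lt measurable_fst measurable_const),
    indicator_eq_self.2 he]

theorem setLIntegral_comp_shear_sliverSet_le (w : ℝ × ℝ → ℝ≥0∞) :
    ∫⁻ q in sliverSet r g G, w (shear k q) ≤ ∫⁻ p in shear k '' sliverSet a g G, w p := by
  rw [← setLIntegral_image_shear measurableSet_Ioo hk (fun q hq ↦ ⟨hq.1, hq.2.1⟩) hD]
  exact lintegral_mono_set (image_mono (sliverSet_mono hra g G))

end Localization

theorem AlphaBound.hasSymbolBound_sliverSet (hα : AlphaBound α A) (hK : 0 ≤ K)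
    (hreg : IsRegularSliver κ K r g G)
    (hl : HasDyadicScale C₁ c₂ r (fun x ↦ k x - c * x) l₁ l₂ lam) :
    HasSymbolBound (A * (1 + (1 + |c|) + K)) (sliverSet r g G) (α ∘ shear k) :=
  hα.hasSymbolBound_comp_shear hK (by positivity) hl.contDiffOn_of_sub
    (fun x hx ↦ ⟨hl.hasDerivAt_of_sub (Ioo_subset_Ioc_self hx), (abs_add_le _ c).trans
      (add_le_add_left (hl.abs_deriv_le_one x (Ioo_subset_Ioc_self hx)) _)⟩)
    fun _ hq ↦ hreg.mem_bounds hq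

theorem IsRegularSliver.exists_isMonomialAmplitude_prod_abs_comp_shear {ι : Type*} [Fintype ι]
    {f : ι → ℝ × ℝ → ℝ} {ε : ℝ} (γ : ι → ℝ) (hreg : IsRegularSliver κ K r g G)
    (hk : ContDiffOn ℝ 1 k (Ioo 0 r)) (hU : ∀ q ∈ sliverSet r g G, shear k q ∈ U)
    (hf : ∀ i, ContDiffOn ℝ 1 (f i) U) (hε : ε < 1)
    (hF : ∀ i, ∃ (d α : ℝ) (β : ℕ), d ≠ 0 ∧
      MonomialLike (f i ∘ shear k) (sliverSet r g G) ε d α β) :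
    ∃ C e₁ e₂, IsMonomialAmplitude C e₁ e₂ (sliverSet r g G)
      fun q ↦ ∏ i, |(f i ∘ shear k) q| ^ γ i :=
  exists_isMonomialAmplitude_prod_abs_rpow γ hreg.isOpen_sliverSet
    (fun _ hq ↦ ⟨hq.1, (hreg.mem_bounds hq).2.1⟩)
    (fun i ↦ (hf i).comp (contDiffOn_shear hk fun _ hq ↦ ⟨hq.1, hq.2.1⟩) hU) hε hF

theorem eqOn_oscIntegrand_mul_comp_shear (hΦh : EqOn (h ∘ shear k) Φ D) (α : ℝ × ℝ → ℝ) (t u : ℝ) :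
    EqOn (oscIntegrand (fun p ↦ α p * h p) t u ∘ shear k)
      (phaseIntegrand (α ∘ shear k * Φ) (fun x ↦ t * x + u * k x) u) D := fun q hq ↦ by
  rw [Function.comp_apply, oscIntegrand_shear, phaseIntegrand, phaseIntegrand, Pi.mul_apply,
    ← hΦh hq]
  rfl

theorem exists_fourier_estimate_of_isMonomialAmplitude (hκ : 1 ≤ κ) (hK : 0 ≤ K) (hC₁ : 0 < C₁)
    (hc₂ : 0 < c₂) (hr : 0 < r) (hra : r ≤ a) (hreg : IsRegularSliver κ K r g G)
    (hl : HasDyadicScale C₁ c₂ r (fun x ↦ k x - c * x) l₁ l₂ lam)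
    (hΦ : IsMonomialAmplitude C e₁ e₂ (sliverSet r g G) Φ)
    (hΦh : EqOn (h ∘ shear k) Φ (sliverSet r g G))
    (hi : IntegrableOn h (shear k '' sliverSet r g G)) (A : ℝ) :
    ∃ C' > 0, ∀ α, AlphaBound α A → tsupport α ⊆ disk2 r → ∀ t u,
      IntegrableOn (oscIntegrand (fun p ↦ α p * h p) t u) (shear k '' sliverSet a g G) ∧
      ENNReal.ofReal ‖∫ p in shear k '' sliverSet a g G, oscIntegrand (fun p ↦ α p * h p) t u p‖ ≤
        ENNReal.ofReal C' * ∫⁻ p in shear k '' sliverSet a g G,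
          ENNReal.ofReal (decayWeight (unitDir c) t u p * h p) := by
  have hD := hreg.isOpen_sliverSet.measurableSet
  have hk := hl.contDiffOn_of_sub
  have hΦi : IntegrableOn Φ (sliverSet r g G) := (integrableOn_congr_fun hΦh hD).1
    ((integrableOn_image_shear_iff measurableSet_Ioo hk.continuousOn
      (fun q hq ↦ ⟨hq.1, hq.2.1⟩) hD).1 hi)
  obtain ⟨C₀, hC₀, estimate⟩ :=
    exists_enorm_setIntegral_sliverSet_le hκ hK hC₁ hc₂ hr hreg hl hΦ hΦi
  refine ⟨C₀ * (|A| * (1 + (1 + |c|) + K)) + 1, by positivity, fun α hα hαr t u ↦ ?_⟩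
  have phase := eqOn_oscIntegrand_mul_comp_shear hΦh α t u
  have support := support_oscIntegrand_mul_subset hr.le hαr h t u
  obtain ⟨integrable, bound⟩ := estimate _ _ t u (hα.hasSymbolBound_sliverSet hK hreg hl)
  refine ⟨(integrableOn_image_shear_sliverSet_iff hra hk.continuousOn hD support).2
    ((integrableOn_congr_fun phase hD).2 integrable), ?_⟩
  rw [ofReal_norm, setIntegral_image_shear_sliverSet hra hk.continuousOn hD support,
    setIntegral_congr_fun hD phase]
  refine bound.trans (mul_le_mul' (ENNReal.ofReal_le_ofReal ?_) ?_)
  · rw [abs_of_nonneg hα.nonneg]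
    linarith
  · refine le_of_eq_of_le (setLIntegral_congr_fun hD fun q hq ↦ ?_)
      (setLIntegral_comp_shear_sliverSet_le hra hk.continuousOn hD _)
    rw [← hΦh hq]
    rfl

theorem integrableOn_and_setIntegral_oscIntegrand_eq_zero (hr : 0 ≤ r) (hra : r ≤ a)
    (hk : ContinuousOn k (Ioo 0 r)) (hD : MeasurableSet (sliverSet r g G))
    (hh : ∀ q ∈ sliverSet r g G, h (shear k q) = 0) (hα : tsupport α ⊆ disk2 r) (t u : ℝ) :
    IntegrableOn (oscIntegrand (fun p ↦ α p * h p) t u) (shear k '' sliverSet a g G) ∧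
      ∫ p in shear k '' sliverSet a g G, oscIntegrand (fun p ↦ α p * h p) t u p = 0 := by
  have support := support_oscIntegrand_mul_subset hr hα h t u
  have vanish : EqOn (oscIntegrand (fun p ↦ α p * h p) t u ∘ shear k) 0 (sliverSet r g G) :=
    fun q hq ↦ by simp [oscIntegrand, hh q hq]
  rw [integrableOn_image_shear_sliverSet_iff hra hk hD support,
    setIntegral_image_shear_sliverSet hra hk hD support]
  exact ⟨(integrableOn_congr_fun vanish hD).2 integrableOn_zero,
    setIntegral_eq_zero_of_forall_eq_zero vanish⟩

end ShearedSliver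

theorem sliver_fourier_estimate_general {n : ℕ} (f : Fin n → ℝ × ℝ → ℝ) (γ : Fin n → ℝ)
    (E : Set (ℝ × ℝ))
    (hf : ∃ U ∈ 𝓝 (0 : ℝ × ℝ), ∀ i, ContDiffOn ℝ 1 (f i) U)
    (hinteg : ∃ U ∈ 𝓝 (0 : ℝ × ℝ), IntegrableOn (stdFun n f γ E) U)
    (N : ℕ) (hN : 0 < N) (a : ℝ) (ha : 0 < a) (g₀ G₀ : ℝ → ℝ)
    (hg₀ : PuiseuxOn N a g₀) (hG₀ : PuiseuxOn N a G₀)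
    (H M : ℝ) (hH : 0 < H) (hM : 1 ≤ M) (hG₀lead : LeadingTerm G₀ H M)
    (hg₀lead : (∀ x ∈ Ioo (0 : ℝ) a, g₀ x = 0) ∨
      ∃ h m : ℝ, 0 < h ∧ M < m ∧ LeadingTerm g₀ h m)
    (k : ℝ → ℝ) (hk : PuiseuxOn N a k) (c : ℝ)
    (hl : Tendsto (fun x ↦ (k x - c * x) / x) (𝓝[>] (0 : ℝ)) (𝓝 0))
    (ε : ℝ) (hε : ε < 1)
    (hmono : ∀ i, ∃ (d α : ℝ) (β : ℕ), d ≠ 0 ∧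
      MonomialLike (f i ∘ shear k) (sliverSet a g₀ G₀) ε d α β)
    (hconst : (∀ q ∈ sliverSet a g₀ G₀, shear k q ∈ E) ∨
      (∀ q ∈ sliverSet a g₀ G₀, shear k q ∉ E)) :
    ∃ r₁ > (0 : ℝ), ∀ A : ℝ, ∃ C > (0 : ℝ), ∀ α : ℝ × ℝ → ℝ,
      AlphaBound α A → tsupport α ⊆ disk2 r₁ → ∀ t u : ℝ,
        IntegrableOn (oscIntegrand (fun p ↦ α p * stdFun n f γ E p) t u)
          (shear k '' sliverSet a g₀ G₀) ∧
        ENNReal.ofReal ‖∫ p in shear k '' sliverSet a g₀ G₀,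
            oscIntegrand (fun p ↦ α p * stdFun n f γ E p) t u p‖ ≤
          ENNReal.ofReal C * ∫⁻ p in shear k '' sliverSet a g₀ G₀,
            ENNReal.ofReal (decayWeight (unitDir c) t u p * stdFun n f γ E p) := by
  obtain ⟨U, hU, hf⟩ := hf
  obtain ⟨V, hV, hinteg⟩ := hinteg
  obtain ⟨κ, hκ, regular⟩ := exists_eventually_isRegularSliver hN ha hg₀ hG₀ hH hM hG₀lead
    (hg₀lead.imp_left fun h ↦ by filter_upwards [Ioo_mem_nhdsGT ha] using h)
  obtain ⟨l₁, l₂, lam, C₁, c₂, hC₁, hc₂, dyadic⟩ :=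
    (hk.sub_const_mul hN c).exists_hasDyadicScale hN ha (by simpa [LeadingTerm] using hl)
  have maps_into := eventually_forall_shear_mem (inter_mem hU hV) regular dyadic
  obtain ⟨r, hreg, hscale, hUV, hr, hra⟩ :=
    (regular.and (dyadic.and (maps_into.and (Ioo_mem_nhdsGT ha)))).exists
  have sub := sliverSet_mono hra.le g₀ G₀
  refine ⟨r, hr, fun A ↦ ?_⟩
  rcases hconst with included | excluded
  · obtain ⟨C, e₁, e₂, amplitude⟩ := hreg.exists_isMonomialAmplitude_prod_abs_comp_shear γ
      hscale.contDiffOn_of_sub (fun q hq ↦ (hUV q hq).1) hf hε fun i ↦ (hmono i).imp fun _ ↦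
        Exists.imp fun _ ↦ Exists.imp fun _ ↦ And.imp_right fun h q hq ↦ h q (sub hq)
    exact exists_fourier_estimate_of_isMonomialAmplitude hκ (by positivity) hC₁ hc₂ hr hra.le hreg
      hscale amplitude (h := stdFun n f γ E)
      (fun q hq ↦ indicator_of_mem (included q (sub hq)) fun p ↦ ∏ i, |f i p| ^ γ i)
      (hinteg.mono_set (image_subset_iff.2 fun q hq ↦ (hUV q hq).2)) A
  · refine ⟨1, one_pos, fun α _ hα t u ↦ ?_⟩
    obtain ⟨integrable, zero⟩ := integrableOn_and_setIntegral_oscIntegrand_eq_zero hr.le hra.le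
      hscale.contDiffOn_of_sub.continuousOn hreg.isOpen_sliverSet.measurableSet
      (h := stdFun n f γ E) (fun q hq ↦ indicator_of_notMem (excluded q (sub hq)) _) hα t u
    exact ⟨integrable, by simp [zero]⟩

/-- Fourier estimate on a sliver `S = η(D)`. The integral on the right has a nonnegative
integrand and is taken in `[0,∞]`: integrability of `χ_E ∏ |fᵢ|^γᵢ` is assumed near the origin
only, so for a sliver reaching far from the origin that integral may be `∞`. -/
theorem sliver_fourier_estimate {n : ℕ} (f : Fin n → ℝ × ℝ → ℝ) (γ : Fin n → ℝ)
    (E : Set (ℝ × ℝ))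
    (hfa : ∃ U ∈ 𝓝 (0 : ℝ × ℝ), ∀ i, AnalyticOnNhd ℝ (f i) U)
    (hfnz : ∀ i, ¬ (∀ᶠ p in 𝓝 (0 : ℝ × ℝ), f i p = 0))
    (hinteg : ∃ U ∈ 𝓝 (0 : ℝ × ℝ), IntegrableOn (stdFun n f γ E) U)
    (hEbdry : ∃ (F : ℝ × ℝ → ℝ) (U : Set (ℝ × ℝ)), U ∈ 𝓝 (0 : ℝ × ℝ) ∧
      AnalyticOnNhd ℝ F U ∧ ¬ (∀ᶠ p in 𝓝 (0 : ℝ × ℝ), F p = 0) ∧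
      ∀ p ∈ U ∩ frontier E, F p = 0)
    (N : ℕ) (hN : 0 < N) (a : ℝ) (ha : 0 < a) (g₀ G₀ : ℝ → ℝ)
    (hg₀ : PuiseuxOn N a g₀) (hG₀ : PuiseuxOn N a G₀)
    (H M : ℝ) (hH : 0 < H) (hM : 1 ≤ M) (hG₀lead : LeadingTerm G₀ H M)
    (hg₀lead : (∀ x ∈ Ioo (0 : ℝ) a, g₀ x = 0) ∨
      ∃ h m : ℝ, 0 < h ∧ M < m ∧ LeadingTerm g₀ h m)
    (k : ℝ → ℝ) (hk : PuiseuxOn N a k) (c : ℝ)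
    (hl : Tendsto (fun x => (k x - c * x) / x) (𝓝[>] (0 : ℝ)) (𝓝 0))
    (b : ℝ) (hb : 0 < b)
    (hS : shear k '' sliverSet a g₀ G₀ ⊆ {p : ℝ × ℝ | |p.2| < b * |p.1|})
    (η' : ℝ) (hη' : η' < 1)
    (hmono : ∀ i : Fin n, ∃ (d α : ℝ) (β : ℕ), d ≠ 0 ∧ 0 ≤ α ∧
      MonomialLike (f i ∘ shear k) (sliverSet a g₀ G₀) η' d α β)
    (hconst : (∀ q ∈ sliverSet a g₀ G₀, shear k q ∈ E) ∨
      (∀ q ∈ sliverSet a g₀ G₀, shear k q ∉ E)) :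
    ∃ r₁ > (0 : ℝ), ∀ A : ℝ, ∃ C > (0 : ℝ), ∀ α : ℝ × ℝ → ℝ,
      AlphaBound α A → tsupport α ⊆ disk2 r₁ → ∀ t u : ℝ,
        IntegrableOn (oscIntegrand (fun p => α p * stdFun n f γ E p) t u)
          (shear k '' sliverSet a g₀ G₀) ∧
        ENNReal.ofReal ‖∫ p in shear k '' sliverSet a g₀ G₀,
            oscIntegrand (fun p => α p * stdFun n f γ E p) t u p‖ ≤
          ENNReal.ofReal C * ∫⁻ p in shear k '' sliverSet a g₀ G₀,
            ENNReal.ofReal (decayWeight (unitDir c) t u p * stdFun n f γ E p) := by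
  obtain ⟨U, hU, hfa⟩ := hfa
  exact sliver_fourier_estimate_general f γ E ⟨U, hU, fun i ↦ (hfa i).contDiffOn_of_completeSpace⟩
    hinteg N hN a ha g₀ G₀ hg₀ hG₀ H M hH hM hG₀lead hg₀lead k hk c hl η' hη'
    (fun i ↦ by obtain ⟨d, α, β, hd, -, h⟩ := hmono i; exact ⟨d, α, β, hd, h⟩) hconst
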